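/- Theorem 1.2 (algebraic case, with the pointwise bounds of Remark 4.1). Let α ∈ (0,1), d₁, d₂ > 0 and c₁, c₂ ∈ ℝ with c₁ ≠ c₂. Assume f₁, f₂, g₁, g₂ : ℝ² → ℝ are C^{2,α} and there exist constants C₀ > 1 and r₀ > 0 such that for all |u|, |v| ≤ r₀: |f₁(u,v)| ≤ C₀(|u|⁴ + |u||v|), |g₁(u,v)| ≤ C₀(|u|² + |u||v|), |f₂(u,v)| ≤ C₀(|v|⁴ + |u||v|), |g₂(u,v)| ≤ C₀(|v|² + |u||v|). Then there exists M₀ ≥ 1 such that for every M ≥ M₀, every r ≥ 3 and every ε > 0 there exists δ > 0 with the following property: for every pair (u₀, v₀) of bounded, α-Hölder continuous functions ℝ → ℝ satisfying |u₀(x)| (1+|x|)^r < δ and |v₀(x)| (1+|x|)^r < δ for all x ∈ ℝ, there exists a global classical solution (u,v) of system (GRD) with initial data (u₀, v₀) such that for all x ∈ ℝ and t ≥ 0: |u(x,t)| ≤ ε[(1+|x+c₁t|+√t)^{-r} + e^{-(x+c₁t)²/(M(1+t))}/√(1+t)], |v(x,t)| ≤ ε[(1+|x+c₂t|+√t)^{-r}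 + e^{-(x+c₂t)²/(M(1+t))}/√(1+t)], sup_{x∈ℝ}(|u(x,t)| + |v(x,t)|) ≤ ε/√(1+t), and ∫_ℝ (|u(x,t)| + |v(x,t)|) dx ≤ ε. -/

import Mathlib

open MeasureTheory Set

noncomputable section

/-- `f` is `α`-Hölder continuous. -/
def HolderCont (α : ℝ) (f : ℝ → ℝ) : Prop :=
  ∃ C : ℝ, ∀ x y : ℝ, |f x - f y| ≤ C * |x - y| ^ α

/-- `h : ℝ² → ℝ` is `C^{2,α}`: twice continuously differentiable with `α`-Hölder
continuous second-order derivatives. -/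
def IsC2Holder (α : ℝ) (h : ℝ × ℝ → ℝ) : Prop :=
  ContDiff ℝ 2 h ∧
    ∃ C : ℝ, ∀ x y : ℝ × ℝ,
      ‖iteratedFDeriv ℝ 2 h x - iteratedFDeriv ℝ 2 h y‖ ≤ C * ‖x - y‖ ^ α

/-- A classical solution of the reaction-diffusion-advection system (GRD)
`u_t = d₁ u_xx + c₁ u_x + f₁(u,v) + ∂_x(g₁(u,v))`,
`v_t = d₂ v_xx + c₂ v_x + f₂(u,v) + ∂_x(g₂(u,v))`
on `ℝ × [0,T)` with initial data `(u₀, v₀)`: jointly continuous, bounded in `x` on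
each compact time interval, once continuously differentiable in `t` and twice
continuously differentiable in `x` on `ℝ × (0,T)`, satisfying both equations
pointwise there, and attaining the initial data at `t = 0`. -/
def IsClassicalSolution (d₁ d₂ c₁ c₂ : ℝ) (f₁ f₂ g₁ g₂ : ℝ × ℝ → ℝ)
    (T : ENNReal) (u₀ v₀ : ℝ → ℝ) (u v : ℝ → ℝ → ℝ) : Prop :=
  (∀ x : ℝ, u x 0 = u₀ x) ∧ (∀ x : ℝ, v x 0 = v₀ x) ∧
  ContinuousOn (fun p : ℝ × ℝ => (u p.1 p.2, v p.1 p.2))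
    {p : ℝ × ℝ | 0 ≤ p.2 ∧ ENNReal.ofReal p.2 < T} ∧
  (∀ t₁ : ℝ, 0 ≤ t₁ → ENNReal.ofReal t₁ < T →
    ∃ K : ℝ, ∀ x t : ℝ, 0 ≤ t → t ≤ t₁ → |u x t| + |v x t| ≤ K) ∧
  ∃ ut vt ux vx uxx vxx gx hx : ℝ → ℝ → ℝ,
    (∀ x t : ℝ, 0 < t → ENNReal.ofReal t < T →
      HasDerivAt (fun τ => u x τ) (ut x t) t ∧
      HasDerivAt (fun ξ => u ξ t) (ux x t) x ∧
      HasDerivAt (fun ξ => ux ξ t) (uxx x t) x ∧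
      HasDerivAt (fun ξ => g₁ (u ξ t, v ξ t)) (gx x t) x ∧
      HasDerivAt (fun τ => v x τ) (vt x t) t ∧
      HasDerivAt (fun ξ => v ξ t) (vx x t) x ∧
      HasDerivAt (fun ξ => vx ξ t) (vxx x t) x ∧
      HasDerivAt (fun ξ => g₂ (u ξ t, v ξ t)) (hx x t) x ∧
      ut x t = d₁ * uxx x t + c₁ * ux x t + f₁ (u x t, v x t) + gx x t ∧
      vt x t = d₂ * vxx x t + c₂ * vx x t + f₂ (u x t, v x t) + hx x t) ∧
    ContinuousOn (fun p : ℝ × ℝ =>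
        (ut p.1 p.2, ux p.1 p.2, uxx p.1 p.2, vt p.1 p.2, vx p.1 p.2, vxx p.1 p.2))
      {p : ℝ × ℝ | 0 < p.2 ∧ ENNReal.ofReal p.2 < T}

/-!
Solve Duhamel's formula by Picard iteration in Bielecki's norm, in the set of all pairs `(u, v)`
with `|u x t| ≤ η * weight M r (x + c₁ * t) t` and `|v x t| ≤ η * weight M r (x + c₂ * t) t`;
parabolic smoothing makes the fixed point a classical solution. The point is that this set is
invariant: from data of size `δ`, Duhamel's formula produces bounds with amplitude `C * (δ + η ^ 2)`
in place of `η`.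

A self-interaction (`u⁴`, or the `x`-derivative of `u²`) decays fast enough for that. A mixed term
`u v` on its own would not, but since `c₁ ≠ c₂` the two profiles travel apart: relative to either
of them their product is the other profile, which sweeps past any given point of the moving frame
in a time of order `√(1 + t)`, up to terms with integrable decay.
-/

namespace GRD

open Filter Topology Polynomial ProbabilityTheory

/-! ### Hermite–Gaussian averages -/

/-- The unnormalised Gaussian `e^{-z²/4}`, of larger variance than the standard normal density; it
dominates every product of that density with a polynomial. -/
def wideGaussian (z : ℝ) : ℝ := Real.exp (-z ^ 2 / 4)

/-- The kernel `He_k(z) φ(z) = (-1)^k φ^{(k)}(z)`, where `φ` is the standard normal density and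
`He_k` the `k`-th (probabilists') Hermite polynomial. -/
def hermiteGaussian (k : ℕ) (z : ℝ) : ℝ := aeval z (hermite k) * gaussianPDFReal 0 1 z

lemma wideGaussian_pos (z : ℝ) : 0 < wideGaussian z := Real.exp_pos _

@[fun_prop]
lemma continuous_wideGaussian : Continuous wideGaussian := by unfold wideGaussian; fun_prop

lemma integrable_wideGaussian : Integrable wideGaussian := by
  convert integrable_exp_neg_mul_sq (b := 1 / 4) (by norm_num) using 2 with z
  rw [wideGaussian]; ring_nf

lemma gaussianPDFReal_zero_one (z : ℝ) :
    gaussianPDFReal 0 1 z = (√(2 * Real.pi))⁻¹ * Real.exp (-z ^ 2 / 2) := by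
  simp [gaussianPDFReal]

lemma hasDerivAt_gaussianPDFReal_zero_one (z : ℝ) :
    HasDerivAt (gaussianPDFReal 0 1) (-(z * gaussianPDFReal 0 1 z)) z := by
  have h : HasDerivAt (fun z : ℝ => -z ^ 2 / 2) (-z) z :=
    ((hasDerivAt_pow 2 z).fun_neg.div_const 2).congr_deriv (by simp; ring)
  rw [funext gaussianPDFReal_zero_one]
  exact (h.exp.const_mul _).congr_deriv (by ring)

lemma hasDerivAt_hermiteGaussian (k : ℕ) (z : ℝ) :
    HasDerivAt (hermiteGaussian k) (-hermiteGaussian (k + 1) z) z := by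
  refine (((hermite k).hasDerivAt_aeval z).mul
    (hasDerivAt_gaussianPDFReal_zero_one z)).congr_deriv ?_
  simp only [hermiteGaussian, hermite_succ, map_sub, map_mul, aeval_X]
  ring

@[fun_prop]
lemma continuous_hermiteGaussian (k : ℕ) : Continuous (hermiteGaussian k) :=
  continuous_iff_continuousAt.2 fun z => (hasDerivAt_hermiteGaussian k z).continuousAt

lemma exists_abs_aeval_le_exp_sq {R : Type*} [CommSemiring R] [Algebra R ℝ] (p : R[X]) :
    ∃ C, 0 ≤ C ∧ ∀ z : ℝ, |aeval z p| ≤ C * Real.exp (z ^ 2 / 4) := by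
  induction p using Polynomial.induction_on' with
  | add p q hp hq =>
    obtain ⟨C, hC, hp⟩ := hp
    obtain ⟨C', hC', hq⟩ := hq
    refine ⟨C + C', by positivity, fun z => ?_⟩
    rw [map_add, add_mul]
    exact (abs_add_le _ _).trans (add_le_add (hp z) (hq z))
  | monomial n a =>
    refine ⟨|algebraMap R ℝ a| * (n.factorial * Real.exp 1), by positivity, fun z => ?_⟩
    have hpow : |z| ^ n ≤ n.factorial * Real.exp |z| := by
      have := Real.pow_div_factorial_le_exp |z| (abs_nonneg z) n
      rwa [div_le_iff₀' (by positivity)] at this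
    have hexp : Real.exp |z| ≤ Real.exp 1 * Real.exp (z ^ 2 / 4) := by
      rw [← Real.exp_add, Real.exp_le_exp, ← sq_abs z]
      nlinarith [sq_nonneg (|z| - 2)]
    rw [aeval_monomial, abs_mul, abs_pow, mul_assoc, mul_assoc]
    gcongr
    exact hpow.trans (by gcongr)

lemma exists_abs_hermiteGaussian_le (k : ℕ) :
    ∃ C, 0 ≤ C ∧ ∀ z, |hermiteGaussian k z| ≤ C * wideGaussian z := by
  obtain ⟨C, hC, h⟩ := exists_abs_aeval_le_exp_sq (hermite k)
  refine ⟨C * (√(2 * Real.pi))⁻¹, by positivity, fun z => ?_⟩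
  have hpdf : 0 ≤ (√(2 * Real.pi))⁻¹ * Real.exp (-z ^ 2 / 2) := by positivity
  rw [hermiteGaussian, gaussianPDFReal_zero_one, abs_mul, abs_of_nonneg hpdf]
  calc |aeval z (hermite k)| * ((√(2 * Real.pi))⁻¹ * Real.exp (-z ^ 2 / 2))
      ≤ C * Real.exp (z ^ 2 / 4) * ((√(2 * Real.pi))⁻¹ * Real.exp (-z ^ 2 / 2)) := by
        gcongr; exact h z
    _ = C * (√(2 * Real.pi))⁻¹ * (Real.exp (z ^ 2 / 4) * Real.exp (-z ^ 2 / 2)) := by ring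
    _ = C * (√(2 * Real.pi))⁻¹ * wideGaussian z := by
        rw [← Real.exp_add, wideGaussian]; ring_nf

/-- A constant `C` with `|He_k φ| ≤ C e^{-z²/4}`. -/
def hermiteConst (k : ℕ) : ℝ := (exists_abs_hermiteGaussian_le k).choose

lemma hermiteConst_nonneg (k : ℕ) : 0 ≤ hermiteConst k :=
  (exists_abs_hermiteGaussian_le k).choose_spec.1

lemma abs_hermiteGaussian_le (k : ℕ) (z : ℝ) :
    |hermiteGaussian k z| ≤ hermiteConst k * wideGaussian z :=
  (exists_abs_hermiteGaussian_le k).choose_spec.2 z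

lemma abs_hermiteGaussian_mul_le (k : ℕ) (z : ℝ) {x y : ℝ} (hxy : |x| ≤ y) :
    |hermiteGaussian k z * x| ≤ hermiteConst k * (wideGaussian z * y) := by
  rw [abs_mul, ← mul_assoc]
  have := mul_nonneg (hermiteConst_nonneg k) (wideGaussian_pos z).le
  gcongr
  exact abs_hermiteGaussian_le k z

/-- The average of `h` around `a` at scale `σ` against the `k`-th Hermite–Gaussian kernel. For
`σ > 0` it is `σ^k` times the `k`-th derivative at `a` of the convolution of `h` with the centred
Gaussian density of standard deviation `σ`. -/
def hermiteAvg (k : ℕ) (σ : ℝ) (h : ℝ → ℝ) (a : ℝ) : ℝ := ∫ z, hermiteGaussian k z * h (a + σ * z)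

/-- The norm bound of `hermiteAvg k σ` on bounded functions. -/
def hermiteAvgConst (k : ℕ) : ℝ := hermiteConst k * ∫ z, wideGaussian z

lemma hermiteAvgConst_nonneg (k : ℕ) : 0 ≤ hermiteAvgConst k :=
  mul_nonneg (hermiteConst_nonneg k) (integral_nonneg fun z => (wideGaussian_pos z).le)

section hermiteAvg

variable {σ : ℝ} {h g : ℝ → ℝ} {B B' : ℝ}

lemma integrable_wideGaussian_mul (hc : Continuous h) (hB : ∀ y, |h y| ≤ B) :
    Integrable fun z => wideGaussian z * h z :=
  integrable_wideGaussian.mul_bdd (c := B) hc.aestronglyMeasurable (.of_forall hB)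

lemma integrable_hermiteGaussian_mul (k : ℕ) (hc : Continuous h) (hB : ∀ y, |h y| ≤ B) :
    Integrable fun z => hermiteGaussian k z * h z :=
  ((integrable_wideGaussian.mul_const B).const_mul (hermiteConst k)).mono' (by fun_prop)
    (.of_forall fun z => abs_hermiteGaussian_mul_le k z (hB z))

lemma integrable_hermiteGaussian_mul_comp (k : ℕ) (σ a : ℝ) (hc : Continuous h)
    (hB : ∀ y, |h y| ≤ B) : Integrable fun z => hermiteGaussian k z * h (a + σ * z) :=
  integrable_hermiteGaussian_mul k (h := fun z => h (a + σ * z)) (by fun_prop) fun _ => hB _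

lemma abs_hermiteAvg_le_integral (k : ℕ) (σ a : ℝ) (hgh : ∀ y, |h y| ≤ g y)
    (hi : Integrable fun z => wideGaussian z * g (a + σ * z)) :
    |hermiteAvg k σ h a| ≤ hermiteConst k * ∫ z, wideGaussian z * g (a + σ * z) := by
  rw [← integral_const_mul, ← Real.norm_eq_abs]
  exact norm_integral_le_of_norm_le (hi.const_mul _)
    (.of_forall fun z => abs_hermiteGaussian_mul_le k z (hgh _))

lemma abs_hermiteAvg_le (k : ℕ) (σ a : ℝ) (hB : ∀ y, |h y| ≤ B) :
    |hermiteAvg k σ h a| ≤ hermiteAvgConst k * B := by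
  have := abs_hermiteAvg_le_integral k σ a hB (integrable_wideGaussian.mul_const B)
  rwa [integral_mul_const, ← mul_assoc] at this

lemma hermiteAvg_sub (k : ℕ) (σ a : ℝ) (hh : Continuous h) (hg : Continuous g)
    (hB : ∀ y, |h y| ≤ B) (hB' : ∀ y, |g y| ≤ B') :
    hermiteAvg k σ (fun y => h y - g y) a = hermiteAvg k σ h a - hermiteAvg k σ g a := by
  unfold hermiteAvg
  rw [← integral_sub (integrable_hermiteGaussian_mul_comp k σ a hh hB)
    (integrable_hermiteGaussian_mul_comp k σ a hg hB')]
  simp only [mul_sub]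

lemma hermiteAvg_add (k : ℕ) (σ a : ℝ) (hh : Continuous h) (hg : Continuous g)
    (hB : ∀ y, |h y| ≤ B) (hB' : ∀ y, |g y| ≤ B') :
    hermiteAvg k σ (fun y => h y + g y) a = hermiteAvg k σ h a + hermiteAvg k σ g a := by
  unfold hermiteAvg
  rw [← integral_add (integrable_hermiteGaussian_mul_comp k σ a hh hB)
    (integrable_hermiteGaussian_mul_comp k σ a hg hB')]
  simp only [mul_add]

lemma hermiteAvg_comp_add_right (k : ℕ) (σ : ℝ) (h : ℝ → ℝ) (a b : ℝ) :
    hermiteAvg k σ (fun y => h (y + b)) a = hermiteAvg k σ h (a + b) := by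
  simp only [hermiteAvg, add_right_comm]

@[simp]
lemma hermiteAvg_zero_zero (h : ℝ → ℝ) (a : ℝ) : hermiteAvg 0 0 h a = h a := by
  simp [hermiteAvg, hermiteGaussian, integral_mul_const, integral_gaussianPDFReal_eq_one]

lemma continuous_hermiteAvg_param {X : Type*} [TopologicalSpace X] [FirstCountableTopology X]
    (k : ℕ) {σ a : X → ℝ} {h : X → ℝ → ℝ} (hσ : Continuous σ) (ha : Continuous a)
    (hc : Continuous fun p : X × ℝ => h p.1 p.2) (hB : ∀ p y, |h p y| ≤ B) :
    Continuous fun p => hermiteAvg k (σ p) (h p) (a p) := by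
  refine continuous_of_dominated (bound := fun z => hermiteConst k * (wideGaussian z * B))
    (fun p => ?_) (fun p => .of_forall fun z => abs_hermiteGaussian_mul_le k z (hB p _))
    ((integrable_wideGaussian.mul_const _).const_mul _) (.of_forall fun z => ?_)
  · have : Continuous fun z => h p (a p + σ p * z) :=
      hc.comp (by fun_prop : Continuous fun z => (p, a p + σ p * z))
    exact (by fun_prop : Continuous _).aestronglyMeasurable
  · have : Continuous fun p => h p (a p + σ p * z) :=
      hc.comp (by fun_prop : Continuous fun p => (p, a p + σ p * z))
    fun_prop

lemma continuous_hermiteAvg (k : ℕ) (hc : Continuous h) (hB : ∀ y, |h y| ≤ B) :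
    Continuous (hermiteAvg k σ h) :=
  continuous_hermiteAvg_param k continuous_const continuous_id
    (h := fun _ => h) (by fun_prop) fun _ => hB

lemma hermiteAvg_eq_integral_sub (k : ℕ) (hσ : 0 < σ) (h : ℝ → ℝ) (a : ℝ) :
    hermiteAvg k σ h a = ∫ z, hermiteGaussian k (z - a / σ) * h (σ * z) := by
  rw [hermiteAvg,
    ← integral_sub_right_eq_self (fun z => hermiteGaussian k z * h (a + σ * z)) (a / σ)]
  congr with z
  congr 2
  field_simp
  ring

lemma wideGaussian_sub_le {x y : ℝ} (hxy : |x - y| ≤ 1) (z : ℝ) :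
    wideGaussian (z - x) ≤ Real.exp (1 / 4) * Real.exp (-(1 / 8) * (z - y) ^ 2) := by
  rw [wideGaussian, ← Real.exp_add, Real.exp_le_exp]
  have : (x - y) ^ 2 ≤ 1 := (sq_le_one_iff_abs_le_one _).2 hxy
  nlinarith [sq_nonneg ((z - x) - (x - y))]

/-- Translating the integration variable moves the dependence on `a` into the smooth kernel, so
merely continuous `h` are allowed. -/
lemma hasDerivAt_hermiteAvg (k : ℕ) (hσ : 0 < σ) (hc : Continuous h) (hB : ∀ y, |h y| ≤ B)
    (a : ℝ) : HasDerivAt (hermiteAvg k σ h) (σ⁻¹ * hermiteAvg (k + 1) σ h a) a := by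
  rw [funext (hermiteAvg_eq_integral_sub k hσ h), hermiteAvg_eq_integral_sub (k + 1) hσ h a,
    ← integral_const_mul]
  have hmeas (j : ℕ) (x : ℝ) :
      AEStronglyMeasurable (fun z => hermiteGaussian j (z - x / σ) * h (σ * z)) volume :=
    (by fun_prop : Continuous _).aestronglyMeasurable
  have hint : Integrable fun z => hermiteGaussian k (z - a / σ) * h (σ * z) :=
    integrable_hermiteGaussian_mul k (h := fun z => h (a + σ * z)) (by fun_prop) (fun _ => hB _)
      |>.comp_sub_right (a / σ) |>.congr (.of_forall fun z => by
        simp only; congr 2; field_simp; ring)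
  have hbound : ∀ z, ∀ x ∈ Metric.ball a σ,
      ‖σ⁻¹ * (hermiteGaussian (k + 1) (z - x / σ) * h (σ * z))‖ ≤ σ⁻¹ * (hermiteConst (k + 1) *
        (Real.exp (1 / 4) * Real.exp (-(1 / 8) * (z - a / σ) ^ 2) * B)) := fun z x hx => by
    have hxa : |x / σ - a / σ| ≤ 1 := by
      rw [← sub_div, abs_div, abs_of_pos hσ, div_le_one hσ]
      exact (Metric.mem_ball.1 hx).le
    have hB0 : 0 ≤ B := (abs_nonneg _).trans (hB 0)
    have hC := hermiteConst_nonneg (k + 1)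
    rw [norm_mul, Real.norm_of_nonneg (by positivity)]
    gcongr
    refine (abs_hermiteGaussian_mul_le _ _ (hB _)).trans ?_
    gcongr
    exact wideGaussian_sub_le hxa z
  have hderiv : ∀ z, ∀ x ∈ Metric.ball a σ,
      HasDerivAt (fun x => hermiteGaussian k (z - x / σ) * h (σ * z))
        (σ⁻¹ * (hermiteGaussian (k + 1) (z - x / σ) * h (σ * z))) x := fun z x _ => by
    have hsub : HasDerivAt (fun x : ℝ => z - x / σ) (-(1 / σ)) x := by
      simpa using ((hasDerivAt_id x).div_const σ).const_sub z
    exact (((hasDerivAt_hermiteGaussian k (z - x / σ)).comp x hsub).mul_const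
      (h (σ * z))).congr_deriv (by field_simp)
  have hgauss : Integrable fun z : ℝ => Real.exp (-(1 / 8) * (z - a / σ) ^ 2) :=
    (integrable_exp_neg_mul_sq (b := 1 / 8) (by norm_num)).comp_sub_right (a / σ)
  exact (hasDerivAt_integral_of_dominated_loc_of_deriv_le (Metric.ball_mem_nhds a hσ)
    (.of_forall fun x => hmeas k x) hint ((hmeas (k + 1) a).const_mul _) (.of_forall hbound)
    ((((hgauss.const_mul _).mul_const B).const_mul _).const_mul _) (.of_forall hderiv)).2

lemma integral_hermiteGaussian_succ (k : ℕ) : ∫ z, hermiteGaussian (k + 1) z = 0 := by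
  have hderiv := hasDerivAt_hermiteAvg k one_pos (h := fun _ => 1) continuous_const
    (B := 1) (by simp) 0
  have hconst : hermiteAvg k 1 (fun _ => 1) = fun _ => ∫ z, hermiteGaussian k z := by
    ext a; simp [hermiteAvg]
  rw [hconst] at hderiv
  simpa [hermiteAvg] using hderiv.unique (hasDerivAt_const 0 _)

lemma hasDerivAt_hermiteAvg_of_hasDerivAt (k : ℕ) (σ : ℝ) {h' : ℝ → ℝ}
    (hd : ∀ x, HasDerivAt h (h' x) x) (hc' : Continuous h') (hB : ∀ y, |h y| ≤ B)
    (hB' : ∀ y, |h' y| ≤ B') (a : ℝ) :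
    HasDerivAt (hermiteAvg k σ h) (hermiteAvg k σ h' a) a := by
  have hc : Continuous h := continuous_iff_continuousAt.2 fun x => (hd x).continuousAt
  refine (hasDerivAt_integral_of_dominated_loc_of_deriv_le (s := univ)
    (F := fun x z => hermiteGaussian k z * h (x + σ * z))
    (F' := fun x z => hermiteGaussian k z * h' (x + σ * z))
    (bound := fun z => hermiteConst k * (wideGaussian z * B')) univ_mem
    (.of_forall fun x => (by fun_prop : Continuous _).aestronglyMeasurable)
    (integrable_hermiteGaussian_mul_comp k σ a hc hB)
    (by fun_prop : Continuous _).aestronglyMeasurable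
    (.of_forall fun z x _ => abs_hermiteGaussian_mul_le k z (hB' _))
    ((integrable_wideGaussian.mul_const _).const_mul _) (.of_forall fun z x _ => ?_)).2
  simpa using ((hd (x + σ * z)).comp_add_const x (σ * z)).const_mul (hermiteGaussian k z)

lemma hermiteAvg_succ_eq_of_hasDerivAt (k : ℕ) (hσ : 0 < σ) {h' : ℝ → ℝ}
    (hd : ∀ x, HasDerivAt h (h' x) x) (hc' : Continuous h') (hB : ∀ y, |h y| ≤ B)
    (hB' : ∀ y, |h' y| ≤ B') (a : ℝ) :
    σ⁻¹ * hermiteAvg (k + 1) σ h a = hermiteAvg k σ h' a :=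
  (hasDerivAt_hermiteAvg k hσ (continuous_iff_continuousAt.2 fun x => (hd x).continuousAt)
    hB a).unique (hasDerivAt_hermiteAvg_of_hasDerivAt k σ hd hc' hB hB' a)

lemma hermiteAvg_zero_eq_integral_gaussianReal (σ : ℝ) (hc : Continuous h) (a : ℝ) :
    hermiteAvg 0 σ h a = ∫ y, h (a + y) ∂gaussianReal 0 (.mk (σ ^ 2) (sq_nonneg _)) := by
  have hmap := gaussianReal_map_const_mul (μ := 0) (v := 1) σ
  simp only [mul_zero, mul_one] at hmap
  rw [← hmap, integral_map (by fun_prop) (by fun_prop),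
    integral_gaussianReal_eq_integral_smul one_ne_zero]
  simp [hermiteAvg, hermiteGaussian]

lemma hermiteAvg_zero_comp {σ₁ σ₂ : ℝ} (hσ : σ ^ 2 = σ₁ ^ 2 + σ₂ ^ 2) (hc : Continuous h)
    (hB : ∀ y, |h y| ≤ B) (a : ℝ) :
    hermiteAvg 0 σ₁ (hermiteAvg 0 σ₂ h) a = hermiteAvg 0 σ h a := by
  let v (s : ℝ) : NNReal := .mk (s ^ 2) (sq_nonneg _)
  have hv : v σ = v σ₁ + v σ₂ := by ext; simpa [v] using hσ
  have hconv := gaussianReal_conv_gaussianReal (m₁ := 0) (m₂ := 0) (v₁ := v σ₁) (v₂ := v σ₂)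
  rw [add_zero, ← hv] at hconv
  rw [hermiteAvg_zero_eq_integral_gaussianReal σ₁ (continuous_hermiteAvg 0 hc hB),
    hermiteAvg_zero_eq_integral_gaussianReal σ hc]
  change _ = ∫ y, h (a + y) ∂gaussianReal 0 (v σ)
  rw [← hconv, integral_conv]
  · simp only [hermiteAvg_zero_eq_integral_gaussianReal σ₂ hc, add_assoc, v]
  · exact .of_bound (by fun_prop) B (.of_forall fun y => hB _)

lemma abs_hermiteAvg_sub_le (k : ℕ) (hσ : 0 < σ) (hc : Continuous h) (hB : ∀ y, |h y| ≤ B)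
    (a b : ℝ) : |hermiteAvg k σ h a - hermiteAvg k σ h b| ≤
      σ⁻¹ * (hermiteAvgConst (k + 1) * B) * |a - b| := by
  refine convex_univ.norm_image_sub_le_of_norm_hasDerivWithin_le
    (fun x _ => (hasDerivAt_hermiteAvg k hσ hc hB x).hasDerivWithinAt) (fun x _ => ?_)
    (mem_univ b) (mem_univ a)
  rw [norm_mul, norm_inv, Real.norm_of_nonneg hσ.le]
  gcongr
  exact abs_hermiteAvg_le _ _ _ hB

lemma le_mul_rpow_of_le_of_le_mul {α q A X : ℝ} (hα : 0 ≤ α) (hα1 : α ≤ 1) (hq : 0 ≤ q)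
    (hA : 0 ≤ A) (hX : X ≤ A) (hXq : X ≤ A * q) : X ≤ A * q ^ α := by
  rcases le_total q 1 with h | h
  · exact hXq.trans (mul_le_mul_of_nonneg_left (Real.self_le_rpow_of_le_one hq h hα1) hA)
  · exact hX.trans (le_mul_of_one_le_right hA (Real.one_le_rpow h hα))

/-- The constant of the interpolated Hölder bound for `hermiteAvg k`. -/
def hermiteHolderConst (k : ℕ) : ℝ := 2 * hermiteAvgConst k + hermiteAvgConst (k + 1)

lemma abs_hermiteAvg_sub_le_rpow {α : ℝ} (k : ℕ) (hσ : 0 < σ) (hc : Continuous h) (hα : 0 ≤ α)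
    (hα1 : α ≤ 1) (hB : ∀ y, |h y| ≤ B) (a b : ℝ) :
    |hermiteAvg k σ h a - hermiteAvg k σ h b| ≤
      hermiteHolderConst k * B * |a - b| ^ α * σ ^ (-α) := by
  have hB0 : 0 ≤ B := (abs_nonneg _).trans (hB 0)
  have hk' := mul_nonneg (hermiteAvgConst_nonneg (k + 1)) hB0
  have hdiv : 0 ≤ |a - b| / σ := by positivity
  have hlip : |hermiteAvg k σ h a - hermiteAvg k σ h b| ≤
      hermiteHolderConst k * B * (|a - b| / σ) := by
    refine (abs_hermiteAvg_sub_le k hσ hc hB a b).trans ?_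
    calc σ⁻¹ * (hermiteAvgConst (k + 1) * B) * |a - b|
        = hermiteAvgConst (k + 1) * B * (|a - b| / σ) := by ring
      _ ≤ hermiteHolderConst k * B * (|a - b| / σ) := by
        gcongr; unfold hermiteHolderConst; linarith [hermiteAvgConst_nonneg k]
  have hbd : |hermiteAvg k σ h a - hermiteAvg k σ h b| ≤ hermiteHolderConst k * B := by
    unfold hermiteHolderConst
    linarith [abs_sub (hermiteAvg k σ h a) (hermiteAvg k σ h b), abs_hermiteAvg_le k σ a hB,
      abs_hermiteAvg_le k σ b hB]
  have := le_mul_rpow_of_le_of_le_mul hα hα1 hdiv ((abs_nonneg _).trans hbd) hbd hlip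
  rwa [Real.div_rpow (abs_nonneg _) hσ.le, div_eq_mul_inv, ← Real.rpow_neg hσ.le,
    ← mul_assoc] at this

lemma rpow_le_one_add {x α : ℝ} (hx : 0 ≤ x) (hα : 0 ≤ α) (hα1 : α ≤ 1) : x ^ α ≤ 1 + x := by
  rcases le_total x 1 with h | h
  · linarith [Real.rpow_le_one hx h hα]
  · linarith [Real.rpow_le_self_of_one_le h hα1]

/-- The constant of the cancellation bound for `hermiteAvg k`, `k ≥ 1`, on Hölder functions. -/
def hermiteCancelConst (k : ℕ) : ℝ := hermiteConst k * ∫ z, wideGaussian z * (1 + |z|)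

lemma integrable_wideGaussian_mul_one_add_abs :
    Integrable fun z => wideGaussian z * (1 + |z|) := by
  have hz := (integrable_mul_exp_neg_mul_sq (b := 1 / 4) (by norm_num)).norm
  refine (integrable_wideGaussian.add hz).congr (.of_forall fun z => ?_)
  simp only [Pi.add_apply, norm_mul, Real.norm_eq_abs, Real.abs_exp, wideGaussian]
  ring_nf

/-- Since `He_{k+1} φ` has mean zero, `h` may be replaced by its increment. -/
lemma abs_hermiteAvg_succ_le_rpow {α H : ℝ} (k : ℕ) (hσ : 0 < σ) (hc : Continuous h)
    (hα : 0 ≤ α) (hα1 : α ≤ 1) (hB : ∀ y, |h y| ≤ B)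
    (hH : ∀ x y, |h x - h y| ≤ H * |x - y| ^ α) (a : ℝ) :
    |hermiteAvg (k + 1) σ h a| ≤ hermiteCancelConst (k + 1) * H * σ ^ α := by
  have hH0 : 0 ≤ H := by simpa using (abs_nonneg _).trans (hH 0 1)
  have hincr : hermiteAvg (k + 1) σ h a =
      ∫ z, hermiteGaussian (k + 1) z * (h (a + σ * z) - h a) := by
    simp only [mul_sub]
    rw [integral_sub (integrable_hermiteGaussian_mul_comp _ σ a hc hB)
      (integrable_hermiteGaussian_mul _ (h := fun _ => h a) (by fun_prop) fun _ => hB _),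
      integral_mul_const, integral_hermiteGaussian_succ, zero_mul, sub_zero, hermiteAvg]
  have hle (z : ℝ) : |h (a + σ * z) - h a| ≤ (1 + |z|) * (H * σ ^ α) := by
    refine (hH _ _).trans ?_
    rw [add_sub_cancel_left, abs_mul, abs_of_pos hσ, Real.mul_rpow hσ.le (abs_nonneg _),
      mul_comm (σ ^ α), mul_left_comm]
    gcongr
    exact rpow_le_one_add (abs_nonneg z) hα hα1
  rw [hincr, hermiteCancelConst, mul_assoc, mul_assoc, ← integral_mul_const,
    ← integral_const_mul, ← Real.norm_eq_abs]
  refine norm_integral_le_of_norm_le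
    ((integrable_wideGaussian_mul_one_add_abs.mul_const _).const_mul _) (.of_forall fun z => ?_)
  rw [mul_assoc (wideGaussian z)]
  exact abs_hermiteGaussian_mul_le _ z (hle z)

end hermiteAvg

/-! ### Integrals with a weak singularity at `τ = 0` -/

lemma integrableOn_rpow_neg {β : ℝ} (hβ : β < 1) (t : ℝ) :
    IntegrableOn (fun τ : ℝ => τ ^ (-β)) (Ioc 0 t) := by
  rcases le_total t 0 with h | h
  · simp [Ioc_eq_empty (not_lt.2 h)]
  · rw [← intervalIntegrable_iff_integrableOn_Ioc_of_le h]
    exact intervalIntegral.intervalIntegrable_rpow' (by linarith)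

lemma setIntegral_rpow_neg {β : ℝ} (hβ : β < 1) {t : ℝ} (ht : 0 ≤ t) :
    ∫ τ in Ioc 0 t, τ ^ (-β) = t ^ (1 - β) / (1 - β) := by
  rw [← intervalIntegral.integral_of_le ht, integral_rpow (Or.inl (by linarith)),
    Real.zero_rpow (by linarith), sub_zero, neg_add_eq_sub]

/-- `A x t τ` is a kernel, continuous for `τ > 0`, with an integrable singularity of order at most
`τ^{-β}` at `τ = 0`; `x` and `t` are parameters. -/
structure IsWeaklySingular (K β : ℝ) (A : ℝ → ℝ → ℝ → ℝ) : Prop where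
  lt_one : β < 1
  continuousOn : ContinuousOn (fun p : ℝ × ℝ × ℝ => A p.1 p.2.1 p.2.2) {p | 0 < p.2.2}
  abs_le : ∀ x t τ, 0 < τ → |A x t τ| ≤ K * τ ^ (-β)

namespace IsWeaklySingular

variable {K β : ℝ} {A : ℝ → ℝ → ℝ → ℝ}

lemma ae_abs_le (h : IsWeaklySingular K β A) (x t r : ℝ) :
    ∀ᵐ τ ∂volume.restrict (Ioc 0 r), ‖A x t τ‖ ≤ K * τ ^ (-β) := by
  filter_upwards [ae_restrict_mem measurableSet_Ioc] with τ hτ using h.abs_le x t τ hτ.1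

lemma aestronglyMeasurable (h : IsWeaklySingular K β A) (x t : ℝ) :
    AEStronglyMeasurable (A x t) (volume.restrict (Ioi 0)) :=
  (h.continuousOn.comp (by fun_prop : Continuous fun τ : ℝ => (x, t, τ)).continuousOn
    fun _ hτ => hτ).aestronglyMeasurable measurableSet_Ioi

lemma integrableOn (h : IsWeaklySingular K β A) (x t r : ℝ) : IntegrableOn (A x t) (Ioc 0 r) :=
  ((integrableOn_rpow_neg h.lt_one r).const_mul K).mono'
    ((h.aestronglyMeasurable x t).mono_measure (Measure.restrict_mono Ioc_subset_Ioi_self le_rfl))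
    (h.ae_abs_le x t r)

lemma abs_integral_le (h : IsWeaklySingular K β A) (x : ℝ) {t : ℝ} (ht : 0 ≤ t) :
    |∫ τ in Ioc 0 t, A x t τ| ≤ K * (t ^ (1 - β) / (1 - β)) := by
  rw [← setIntegral_rpow_neg h.lt_one ht, ← integral_const_mul, ← Real.norm_eq_abs]
  exact norm_integral_le_of_norm_le ((integrableOn_rpow_neg h.lt_one t).const_mul K)
    (h.ae_abs_le x t t)

lemma continuousAt_indicator (h : IsWeaklySingular K β A) {p : ℝ × ℝ} {τ : ℝ} (hτ : 0 < τ)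
    (hne : τ ≠ p.2) :
    ContinuousAt (fun q : ℝ × ℝ => (Ioc 0 q.2).indicator (A q.1 q.2) τ) p := by
  rcases lt_or_gt_of_ne hne with hlt | hgt
  · have hA : ContinuousAt (fun q : ℝ × ℝ => A q.1 q.2 τ) p :=
      ContinuousAt.comp (f := fun q : ℝ × ℝ => (q.1, q.2, τ)) (h.continuousOn.continuousAt
        ((isOpen_lt continuous_const (by fun_prop)).mem_nhds hτ)) (by fun_prop)
    refine hA.congr ?_
    filter_upwards [continuous_snd.continuousAt.eventually (lt_mem_nhds hlt)] with q hq
    exact (indicator_of_mem (show τ ∈ Ioc 0 q.2 from ⟨hτ, hq.le⟩) _).symm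
  · refine (continuousAt_const (y := (0 : ℝ))).congr ?_
    filter_upwards [continuous_snd.continuousAt.eventually (gt_mem_nhds hgt)] with q hq
    exact (indicator_of_notMem (fun hmem => absurd hmem.2 (not_le.2 hq)) _).symm

lemma norm_indicator_le (h : IsWeaklySingular K β A) (x t : ℝ) {r τ : ℝ} (htr : t ≤ r) :
    ‖(Ioc 0 t).indicator (A x t) τ‖ ≤ (Ioc 0 r).indicator (fun τ => K * τ ^ (-β)) τ := by
  rw [norm_indicator_eq_indicator_norm]
  by_cases hτ : τ ∈ Ioc 0 t
  · rw [indicator_of_mem hτ, indicator_of_mem (Ioc_subset_Ioc_right htr hτ)]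
    exact h.abs_le _ _ _ hτ.1
  · rw [indicator_of_notMem hτ]
    exact indicator_nonneg (fun τ hτ => (abs_nonneg _).trans (h.abs_le 0 0 τ hτ.1)) τ

lemma continuous_integral (h : IsWeaklySingular K β A) :
    Continuous fun p : ℝ × ℝ => ∫ τ in Ioc 0 p.2, A p.1 p.2 τ := by
  have hind (p : ℝ × ℝ) : ∫ τ in Ioc 0 p.2, A p.1 p.2 τ =
      ∫ τ in Ioi 0, (Ioc 0 p.2).indicator (A p.1 p.2) τ := by
    rw [setIntegral_indicator measurableSet_Ioc,
      inter_eq_self_of_subset_right Ioc_subset_Ioi_self]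
  simp only [hind]
  refine continuous_iff_continuousAt.2 fun p => continuousAt_of_dominated
    (bound := (Ioc 0 (p.2 + 1)).indicator fun τ => K * τ ^ (-β))
    (.of_forall fun q => (h.aestronglyMeasurable _ _).indicator measurableSet_Ioc) ?_ ?_ ?_
  · filter_upwards [continuous_snd.continuousAt.eventually (gt_mem_nhds (lt_add_one p.2))]
      with q hq using .of_forall fun τ => h.norm_indicator_le _ _ hq.le
  · rw [integrable_indicator_iff measurableSet_Ioc]
    exact ((integrableOn_rpow_neg h.lt_one _).const_mul K).mono_measure
      (Measure.restrict_mono le_rfl Measure.restrict_le_self)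
  · filter_upwards [ae_restrict_of_ae (Measure.ae_ne volume p.2),
      ae_restrict_mem measurableSet_Ioi] with τ hne hτ using h.continuousAt_indicator hτ hne

lemma hasDerivAt_integral {K' β' : ℝ} {A' : ℝ → ℝ → ℝ → ℝ} (h : IsWeaklySingular K β A)
    (h' : IsWeaklySingular K' β' A')
    (hd : ∀ x t τ, 0 < τ → HasDerivAt (fun x => A x t τ) (A' x t τ) x) (x t : ℝ) :
    HasDerivAt (fun x => ∫ τ in Ioc 0 t, A x t τ) (∫ τ in Ioc 0 t, A' x t τ) x := by
  refine (hasDerivAt_integral_of_dominated_loc_of_deriv_le (s := univ)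
    (F := fun x => A x t) (F' := fun x => A' x t) (bound := fun τ => K' * τ ^ (-β')) univ_mem
    (.of_forall fun x => (h.integrableOn x t t).1) (h.integrableOn x t t)
    (h'.integrableOn x t t).1 ?_ ((integrableOn_rpow_neg h'.lt_one t).const_mul K') ?_).2
  · filter_upwards [ae_restrict_mem measurableSet_Ioc] with τ hτ x _ using h'.abs_le x t τ hτ.1
  · filter_upwards [ae_restrict_mem measurableSet_Ioc] with τ hτ x _ using hd x t τ hτ.1

lemma abs_integral_sub_integral_le {Q γ : ℝ} (h : IsWeaklySingular K β A) (hγ : γ < 1)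
    {x y t : ℝ} (ht : 0 ≤ t) (hQ : ∀ τ, 0 < τ → |A x t τ - A y t τ| ≤ Q * τ ^ (-γ)) :
    |(∫ τ in Ioc 0 t, A x t τ) - ∫ τ in Ioc 0 t, A y t τ| ≤ Q * (t ^ (1 - γ) / (1 - γ)) := by
  rw [← integral_sub (h.integrableOn x t t) (h.integrableOn y t t), ← setIntegral_rpow_neg hγ ht,
    ← integral_const_mul, ← Real.norm_eq_abs]
  refine norm_integral_le_of_norm_le ((integrableOn_rpow_neg hγ t).const_mul Q) ?_
  filter_upwards [ae_restrict_mem measurableSet_Ioc] with τ hτ using hQ τ hτ.1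

/-- Fubini: averaging in the parameter `x` commutes with the weakly singular integral. -/
lemma hermiteAvg_integral (h : IsWeaklySingular K β A) (k : ℕ) (σ a t r : ℝ) :
    hermiteAvg k σ (fun y => ∫ τ in Ioc 0 r, A y t τ) a =
      ∫ τ in Ioc 0 r, hermiteAvg k σ (fun y => A y t τ) a := by
  simp only [hermiteAvg, ← integral_const_mul]
  refine integral_integral_swap (((integrable_wideGaussian.const_mul (hermiteConst k)).mul_prod
    ((integrableOn_rpow_neg h.lt_one r).const_mul K)).mono' ?_ ?_)
  · rw [← Measure.restrict_univ (μ := (volume : Measure ℝ)), Measure.restrict_restrict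
      measurableSet_Ioc, inter_univ, Measure.prod_restrict]
    refine ContinuousOn.aestronglyMeasurable (.mul (by fun_prop) ?_)
      (MeasurableSet.univ.prod measurableSet_Ioc)
    exact h.continuousOn.comp
      (by fun_prop : Continuous fun p : ℝ × ℝ => (a + σ * p.1, t, p.2)).continuousOn
      fun p hp => hp.2.1
  · filter_upwards [Measure.quasiMeasurePreserving_snd.ae (ae_restrict_mem measurableSet_Ioc)]
      with p hp
    rw [mul_assoc]
    exact abs_hermiteGaussian_mul_le k p.1 (h.abs_le _ _ _ hp.1)

end IsWeaklySingular

/-! ### The advected heat semigroup and its Duhamel operators -/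

/-- The standard deviation of the heat kernel of diffusivity `d` at time `τ`. -/
def heatWidth (d τ : ℝ) : ℝ := √(2 * d * τ)

/-- The `k`-th space derivative at time `τ` of the solution of `u_t = d u_xx + c u_x` with initial
value `h`. -/
def heatFlow (k : ℕ) (d c τ : ℝ) (h : ℝ → ℝ) (x : ℝ) : ℝ :=
  (heatWidth d τ)⁻¹ ^ k * hermiteAvg k (heatWidth d τ) h (x + c * τ)

/-- The integrand of `duhamel`, in terms of the age `τ` of the source. -/
def duhamelKernel (k : ℕ) (d c : ℝ) (h : ℝ → ℝ → ℝ) (x t τ : ℝ) : ℝ :=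
  heatFlow k d c τ (fun y => h y (t - τ)) x

/-- The `k`-th space derivative of the solution of `u_t = d u_xx + c u_x + h` with zero initial
value. -/
def duhamel (k : ℕ) (d c : ℝ) (h : ℝ → ℝ → ℝ) (x t : ℝ) : ℝ :=
  ∫ τ in Ioc 0 t, duhamelKernel k d c h x t τ

/-- `h x t` is jointly continuous and bounded by `B`. -/
structure IsBddContinuous (B : ℝ) (h : ℝ → ℝ → ℝ) : Prop where
  continuous : Continuous fun p : ℝ × ℝ => h p.1 p.2
  abs_le : ∀ x t, |h x t| ≤ B

/-- `h x t` is `α`-Hölder continuous in `x`, uniformly in `t`. -/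
def IsSpatiallyHolder (α H : ℝ) (h : ℝ → ℝ → ℝ) : Prop :=
  ∀ t x y, |h x t - h y t| ≤ H * |x - y| ^ α

/-- `h` restarted at time `ρ`, frozen at negative times. -/
def timeShift (ρ : ℝ) (h : ℝ → ℝ → ℝ) (x t : ℝ) : ℝ := h x (ρ + max t 0)

/-- The `k`-th space derivative of the right-hand side of the variation of constants formula for
`u_t = d u_xx + c u_x + f + g_x`. -/
def mildFormula (k : ℕ) (d c : ℝ) (u f g : ℝ → ℝ → ℝ) (x t : ℝ) : ℝ :=
  heatFlow k d c t (fun y => u y 0) x + duhamel k d c f x t + duhamel (k + 1) d c g x t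

/-- `u` is a mild solution of `u_t = d u_xx + c u_x + f + g_x` for `t ≥ 0`. -/
def IsMildSolution (d c : ℝ) (u f g : ℝ → ℝ → ℝ) : Prop :=
  ∀ x t, 0 ≤ t → u x t = mildFormula 0 d c u f g x t

lemma IsBddContinuous.continuous_left {B : ℝ} {h : ℝ → ℝ → ℝ} (hb : IsBddContinuous B h) (t : ℝ) :
    Continuous fun y => h y t :=
  hb.continuous.comp (by fun_prop : Continuous fun y : ℝ => (y, t))

lemma IsBddContinuous.continuous_right {B : ℝ} {h : ℝ → ℝ → ℝ} (hb : IsBddContinuous B h)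
    {x : ℝ} : Continuous fun t => h x t :=
  hb.continuous.comp (by fun_prop : Continuous fun t : ℝ => (x, t))

section heatWidth

variable {d t τ : ℝ}

lemma heatWidth_pos (hd : 0 < d) (hτ : 0 < τ) : 0 < heatWidth d τ := Real.sqrt_pos.2 (by positivity)

@[fun_prop]
lemma continuous_heatWidth (d : ℝ) : Continuous (heatWidth d) := by unfold heatWidth; fun_prop

lemma heatWidth_sq (hd : 0 ≤ d) (hτ : 0 ≤ τ) : heatWidth d τ ^ 2 = 2 * d * τ :=
  Real.sq_sqrt (by positivity)

lemma heatWidth_add_sq (hd : 0 ≤ d) (ht : 0 ≤ t) (hτ : 0 ≤ τ) :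
    heatWidth d (t + τ) ^ 2 = heatWidth d t ^ 2 + heatWidth d τ ^ 2 := by
  rw [heatWidth_sq hd (by positivity), heatWidth_sq hd ht, heatWidth_sq hd hτ, mul_add]

lemma heatWidth_rpow (hd : 0 ≤ d) (hτ : 0 ≤ τ) (p : ℝ) :
    heatWidth d τ ^ p = (2 * d) ^ (p / 2) * τ ^ (p / 2) := by
  rw [heatWidth, Real.sqrt_eq_rpow, ← Real.rpow_mul (by positivity),
    Real.mul_rpow (by positivity) hτ]
  congr 2 <;> ring

lemma inv_heatWidth_pow_mul_rpow (hd : 0 < d) (hτ : 0 < τ) (k : ℕ) (p : ℝ) :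
    (heatWidth d τ)⁻¹ ^ k * heatWidth d τ ^ p =
      (2 * d) ^ (-((k - p) / 2)) * τ ^ (-((k - p) / 2)) := by
  have hσ := heatWidth_pos hd hτ
  rw [inv_pow, ← Real.rpow_natCast, ← Real.rpow_neg hσ.le, ← Real.rpow_add hσ,
    heatWidth_rpow hd.le hτ.le]
  congr 2 <;> ring

end heatWidth

section heatFlow

variable {d t τ B : ℝ} {h : ℝ → ℝ}

@[simp]
lemma heatFlow_zero_time (d c : ℝ) (h : ℝ → ℝ) (x : ℝ) : heatFlow 0 d c 0 h x = h x := by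
  simp [heatFlow, heatWidth]

lemma continuous_heatFlow (k : ℕ) (d c τ : ℝ) (hc : Continuous h) (hB : ∀ y, |h y| ≤ B) :
    Continuous (heatFlow k d c τ h) := by
  have := continuous_hermiteAvg (σ := heatWidth d τ) k hc hB
  unfold heatFlow
  fun_prop

lemma abs_heatFlow_eq (hd : 0 < d) (hτ : 0 < τ) (k : ℕ) (c x : ℝ) (h : ℝ → ℝ) :
    |heatFlow k d c τ h x| =
      (heatWidth d τ)⁻¹ ^ k * |hermiteAvg k (heatWidth d τ) h (x + c * τ)| := by
  rw [heatFlow, abs_mul, abs_of_pos (pow_pos (inv_pos.2 (heatWidth_pos hd hτ)) k)]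

lemma abs_heatFlow_le (hd : 0 < d) (hτ : 0 < τ) (k : ℕ) (c x : ℝ) (hB : ∀ y, |h y| ≤ B) :
    |heatFlow k d c τ h x| ≤ (heatWidth d τ)⁻¹ ^ k * (hermiteAvgConst k * B) := by
  have := heatWidth_pos hd hτ
  rw [abs_heatFlow_eq hd hτ]
  gcongr
  exact abs_hermiteAvg_le k _ _ hB

lemma abs_heatFlow_zero_le (d c τ x : ℝ) (hB : ∀ y, |h y| ≤ B) :
    |heatFlow 0 d c τ h x| ≤ hermiteAvgConst 0 * B := by
  simpa [heatFlow] using abs_hermiteAvg_le 0 _ _ hB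

lemma hasDerivAt_heatFlow (hd : 0 < d) (hτ : 0 < τ) (k : ℕ) (c : ℝ) (hc : Continuous h)
    (hB : ∀ y, |h y| ≤ B) (x : ℝ) :
    HasDerivAt (heatFlow k d c τ h) (heatFlow (k + 1) d c τ h x) x :=
  (((hasDerivAt_hermiteAvg k (heatWidth_pos hd hτ) hc hB _).comp_add_const x (c * τ)).const_mul
    _).congr_deriv (by rw [heatFlow]; ring)

lemma abs_heatFlow_sub_le_rpow (hd : 0 < d) (hτ : 0 < τ) (k : ℕ) (c : ℝ) {α : ℝ} (hα : 0 ≤ α)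
    (hα1 : α ≤ 1) (hc : Continuous h) (hB : ∀ y, |h y| ≤ B) (x y : ℝ) :
    |heatFlow k d c τ h x - heatFlow k d c τ h y| ≤
      (2 * d) ^ (-((k + α) / 2)) * (hermiteHolderConst k * B) * |x - y| ^ α *
        τ ^ (-((k + α) / 2)) := by
  have hσ := heatWidth_pos hd hτ
  have hpow := inv_heatWidth_pow_mul_rpow hd hτ k (-α)
  rw [sub_neg_eq_add] at hpow
  have hhol := abs_hermiteAvg_sub_le_rpow k hσ hc hα hα1 hB (x + c * τ) (y + c * τ)
  rw [add_sub_add_right_eq_sub] at hhol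
  rw [heatFlow, heatFlow, ← mul_sub, abs_mul, abs_of_pos (pow_pos (inv_pos.2 hσ) k)]
  calc _ ≤ (heatWidth d τ)⁻¹ ^ k * (hermiteHolderConst k * B * |x - y| ^ α *
          heatWidth d τ ^ (-α)) := by gcongr
    _ = (heatWidth d τ)⁻¹ ^ k * heatWidth d τ ^ (-α) *
          (hermiteHolderConst k * B * |x - y| ^ α) := by ring
    _ = _ := by rw [hpow]; ring

lemma heatFlow_zero_comp (hd : 0 ≤ d) (ht : 0 ≤ t) (hτ : 0 ≤ τ) (c : ℝ) (hc : Continuous h)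
    (hB : ∀ y, |h y| ≤ B) (x : ℝ) :
    heatFlow 0 d c t (heatFlow 0 d c τ h) x = heatFlow 0 d c (t + τ) h x := by
  have hflow : heatFlow 0 d c τ h = fun y => hermiteAvg 0 (heatWidth d τ) h (y + c * τ) :=
    funext fun y => by simp [heatFlow]
  rw [hflow, heatFlow, heatFlow, hermiteAvg_comp_add_right 0 _ (hermiteAvg 0 (heatWidth d τ) h),
    hermiteAvg_zero_comp (heatWidth_add_sq hd ht hτ) hc hB]
  ring_nf

lemma heatFlow_zero_comp_heatFlow (hd : 0 < d) (ht : 0 ≤ t) (hτ : 0 < τ) (k : ℕ) (c : ℝ)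
    (hc : Continuous h) (hB : ∀ y, |h y| ≤ B) (x : ℝ) :
    heatFlow 0 d c t (heatFlow k d c τ h) x = heatFlow k d c (t + τ) h x := by
  induction k generalizing x with
  | zero => exact heatFlow_zero_comp hd.le ht hτ.le c hc hB x
  | succ k ih =>
    have hleft : HasDerivAt (heatFlow 0 d c t (heatFlow k d c τ h))
        (heatFlow 0 d c t (heatFlow (k + 1) d c τ h) x) x :=
      (((hasDerivAt_hermiteAvg_of_hasDerivAt 0 (heatWidth d t)
        (hasDerivAt_heatFlow hd hτ k c hc hB) (continuous_heatFlow _ d c τ hc hB)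
        (fun y => abs_heatFlow_le hd hτ _ c y hB) (fun y => abs_heatFlow_le hd hτ _ c y hB)
        _).comp_add_const x (c * t)).const_mul _)
    rw [funext ih] at hleft
    exact hleft.unique (hasDerivAt_heatFlow hd (by positivity) k c hc hB x)

end heatFlow

section duhamel

variable {k : ℕ} {d c t α B H : ℝ} {h : ℝ → ℝ → ℝ}

lemma continuousOn_duhamelKernel (hd : 0 < d) (k : ℕ) (c : ℝ) (hb : IsBddContinuous B h) :
    ContinuousOn (fun p : ℝ × ℝ × ℝ => duhamelKernel k d c h p.1 p.2.1 p.2.2) {p | 0 < p.2.2} := by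
  have havg : Continuous fun p : ℝ × ℝ × ℝ => hermiteAvg k (heatWidth d p.2.2)
      (fun y => h y (p.2.1 - p.2.2)) (p.1 + c * p.2.2) :=
    continuous_hermiteAvg_param k (σ := fun p : ℝ × ℝ × ℝ => heatWidth d p.2.2)
      (a := fun p => p.1 + c * p.2.2) (h := fun p y => h y (p.2.1 - p.2.2)) (by fun_prop)
      (by fun_prop) (hb.continuous.comp
        (by fun_prop : Continuous fun q : (ℝ × ℝ × ℝ) × ℝ => (q.2, q.1.2.1 - q.1.2.2)))
      fun p y => hb.abs_le _ _
  exact .mul (.pow (.inv₀ (by fun_prop) fun p hp => (heatWidth_pos hd hp).ne') k) havg.continuousOn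

lemma isWeaklySingular_duhamelKernel (hd : 0 < d) (hk : k < 2) (c : ℝ)
    (hb : IsBddContinuous B h) :
    IsWeaklySingular ((2 * d) ^ (-(k / 2 : ℝ)) * (hermiteAvgConst k * B)) (k / 2)
      (duhamelKernel k d c h) where
  lt_one := by
    rw [div_lt_one two_pos]
    exact_mod_cast hk
  continuousOn := continuousOn_duhamelKernel hd k c hb
  abs_le x t τ hτ := by
    have hpow := inv_heatWidth_pow_mul_rpow hd hτ k 0
    rw [Real.rpow_zero, mul_one, sub_zero] at hpow
    refine (abs_heatFlow_le hd hτ k c x fun y => hb.abs_le y _).trans_eq ?_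
    rw [hpow]
    ring

lemma isWeaklySingular_duhamelKernel_two (hd : 0 < d) (hα : 0 < α) (hα1 : α ≤ 1) (c : ℝ)
    (hb : IsBddContinuous B h) (hh : IsSpatiallyHolder α H h) :
    IsWeaklySingular ((2 * d) ^ (-((2 - α) / 2)) * (hermiteCancelConst 2 * H)) ((2 - α) / 2)
      (duhamelKernel 2 d c h) where
  lt_one := by linarith
  continuousOn := continuousOn_duhamelKernel hd 2 c hb
  abs_le x t τ hτ := by
    have hσ := heatWidth_pos hd hτ
    have hpow := inv_heatWidth_pow_mul_rpow hd hτ 2 α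
    rw [duhamelKernel, abs_heatFlow_eq hd hτ]
    calc (heatWidth d τ)⁻¹ ^ 2 * |hermiteAvg 2 (heatWidth d τ) (fun y => h y (t - τ)) (x + c * τ)|
        ≤ (heatWidth d τ)⁻¹ ^ 2 * (hermiteCancelConst 2 * H * heatWidth d τ ^ α) := by
          gcongr
          exact abs_hermiteAvg_succ_le_rpow 1 hσ (hb.continuous_left _) hα.le hα1
            (fun y => hb.abs_le y _) (hh _) _
      _ = (heatWidth d τ)⁻¹ ^ 2 * heatWidth d τ ^ α * (hermiteCancelConst 2 * H) := by ring
      _ = _ := by rw [hpow]; push_cast; ring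

lemma hasDerivAt_duhamelKernel (hd : 0 < d) (k : ℕ) (c : ℝ) (hb : IsBddContinuous B h)
    (x t τ : ℝ) (hτ : 0 < τ) : HasDerivAt (fun x => duhamelKernel k d c h x t τ)
      (duhamelKernel (k + 1) d c h x t τ) x :=
  hasDerivAt_heatFlow hd hτ k c (hb.continuous_left _) (fun y => hb.abs_le y _) x

lemma hasDerivAt_duhamel_zero (hd : 0 < d) (c : ℝ) (hb : IsBddContinuous B h) (x t : ℝ) :
    HasDerivAt (fun x => duhamel 0 d c h x t) (duhamel 1 d c h x t) x :=
  (isWeaklySingular_duhamelKernel hd two_pos c hb).hasDerivAt_integral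
    (isWeaklySingular_duhamelKernel hd one_lt_two c hb) (hasDerivAt_duhamelKernel hd 0 c hb) x t

lemma hasDerivAt_duhamel_one (hd : 0 < d) (hα : 0 < α) (hα1 : α ≤ 1) (c : ℝ)
    (hb : IsBddContinuous B h) (hh : IsSpatiallyHolder α H h) (x t : ℝ) :
    HasDerivAt (fun x => duhamel 1 d c h x t) (duhamel 2 d c h x t) x :=
  (isWeaklySingular_duhamelKernel hd one_lt_two c hb).hasDerivAt_integral
    (isWeaklySingular_duhamelKernel_two hd hα hα1 c hb hh) (hasDerivAt_duhamelKernel hd 1 c hb) x t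

lemma continuous_duhamel (hd : 0 < d) (hk : k < 2) (c : ℝ) (hb : IsBddContinuous B h) :
    Continuous fun p : ℝ × ℝ => duhamel k d c h p.1 p.2 :=
  (isWeaklySingular_duhamelKernel hd hk c hb).continuous_integral

lemma continuous_duhamel_two (hd : 0 < d) (hα : 0 < α) (hα1 : α ≤ 1) (c : ℝ)
    (hb : IsBddContinuous B h) (hh : IsSpatiallyHolder α H h) :
    Continuous fun p : ℝ × ℝ => duhamel 2 d c h p.1 p.2 :=
  (isWeaklySingular_duhamelKernel_two hd hα hα1 c hb hh).continuous_integral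

lemma exists_abs_duhamel_le (hd : 0 < d) (hk : k < 2) (c B : ℝ) (ht : 0 ≤ t) :
    ∃ B', ∀ h, IsBddContinuous B h → ∀ x, |duhamel k d c h x t| ≤ B' :=
  ⟨_, fun _ hb x => (isWeaklySingular_duhamelKernel hd hk c hb).abs_integral_le x ht⟩

lemma exists_abs_duhamel_two_le (hd : 0 < d) (hα : 0 < α) (hα1 : α ≤ 1) (c B H : ℝ) (ht : 0 ≤ t) :
    ∃ B', ∀ h, IsBddContinuous B h → IsSpatiallyHolder α H h →
      ∀ x, |duhamel 2 d c h x t| ≤ B' :=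
  ⟨_, fun _ hb hh x => (isWeaklySingular_duhamelKernel_two hd hα hα1 c hb hh).abs_integral_le x ht⟩

lemma exists_abs_duhamel_sub_le_rpow (hd : 0 < d) (hk : k < 2) (c : ℝ) (hα : 0 ≤ α) (hα1 : α < 1)
    (B : ℝ) (ht : 0 ≤ t) : ∃ Q, ∀ h, IsBddContinuous B h →
      ∀ x y, |duhamel k d c h x t - duhamel k d c h y t| ≤ Q * |x - y| ^ α := by
  refine ⟨(2 * d) ^ (-((k + α) / 2)) * (hermiteHolderConst k * B) *
    (t ^ (1 - (k + α) / 2) / (1 - (k + α) / 2)), fun h hb x y => ?_⟩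
  have hk1 : (k : ℝ) ≤ 1 := by exact_mod_cast Nat.lt_succ_iff.1 hk
  refine ((isWeaklySingular_duhamelKernel hd hk c hb).abs_integral_sub_integral_le
    (Q := (2 * d) ^ (-((k + α) / 2)) * (hermiteHolderConst k * B) * |x - y| ^ α)
    (γ := (k + α) / 2) (by linarith) ht fun τ hτ => ?_).trans_eq (by ring)
  exact abs_heatFlow_sub_le_rpow hd hτ k c hα hα1.le (hb.continuous_left _)
    (fun z => hb.abs_le z _) x y

@[simp]
lemma duhamel_zero_time (k : ℕ) (d c : ℝ) (h : ℝ → ℝ → ℝ) (x : ℝ) : duhamel k d c h x 0 = 0 := by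
  simp [duhamel]

lemma heatFlow_zero_duhamelKernel (hd : 0 < d) (k : ℕ) (c : ℝ) (hb : IsBddContinuous B h)
    {t τ : ℝ} (ht : 0 ≤ t) (hτ : 0 < τ) (x s : ℝ) :
    heatFlow 0 d c t (fun y => duhamelKernel k d c h y s τ) x =
      duhamelKernel k d c h x (s + t) (t + τ) := by
  rw [duhamelKernel, show s + t - (t + τ) = s - τ by ring]
  exact heatFlow_zero_comp_heatFlow hd ht hτ k c (hb.continuous_left _) (fun y => hb.abs_le y _) x

lemma IsBddContinuous.timeShift (hb : IsBddContinuous B h) (ρ : ℝ) :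
    IsBddContinuous B (timeShift ρ h) where
  continuous := hb.continuous.comp
    (by fun_prop : Continuous fun p : ℝ × ℝ => (p.1, ρ + max p.2 0))
  abs_le _ _ := hb.abs_le _ _

lemma setIntegral_duhamelKernel_add (hd : 0 < d) (hk : k < 2) (c : ℝ) (hb : IsBddContinuous B h)
    {ρ t : ℝ} (hρ : 0 ≤ ρ) (ht : 0 ≤ t) (x : ℝ) :
    ∫ τ in Ioc t (t + ρ), duhamelKernel k d c h x (ρ + t) τ =
      heatFlow 0 d c t (fun y => duhamel k d c h y ρ) x := by
  have hswap := (isWeaklySingular_duhamelKernel hd hk c hb).hermiteAvg_integral 0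
    (heatWidth d t) (x + c * t) ρ ρ
  have htrans := intervalIntegral.integral_comp_add_left (a := 0) (b := ρ)
    (duhamelKernel k d c h x (ρ + t)) t
  rw [add_zero, intervalIntegral.integral_of_le hρ,
    intervalIntegral.integral_of_le (le_add_of_nonneg_right hρ)] at htrans
  simp only [heatFlow, duhamel, pow_zero, one_mul]
  rw [hswap, ← htrans]
  refine setIntegral_congr_fun measurableSet_Ioc fun τ hτ => ?_
  simpa [heatFlow] using (heatFlow_zero_duhamelKernel hd k c hb ht hτ.1 x ρ).symm

lemma duhamel_add (hd : 0 < d) (hk : k < 2) (c : ℝ) (hb : IsBddContinuous B h) {ρ t : ℝ}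
    (hρ : 0 ≤ ρ) (ht : 0 ≤ t) (x : ℝ) : duhamel k d c h x (ρ + t) =
      heatFlow 0 d c t (fun y => duhamel k d c h y ρ) x + duhamel k d c (timeShift ρ h) x t := by
  have hint := (isWeaklySingular_duhamelKernel hd hk c hb).integrableOn x (ρ + t) (t + ρ)
  have hrecent : duhamel k d c (timeShift ρ h) x t =
      ∫ τ in Ioc 0 t, duhamelKernel k d c h x (ρ + t) τ :=
    setIntegral_congr_fun measurableSet_Ioc fun τ hτ => by
      simp only [duhamelKernel, timeShift, max_eq_left (sub_nonneg.2 hτ.2), add_sub_assoc]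
  rw [← setIntegral_duhamelKernel_add hd hk c hb hρ ht, hrecent, add_comm (∫ τ in _, _),
    ← setIntegral_union (Ioc_disjoint_Ioc_of_le le_rfl) measurableSet_Ioc
      (hint.mono_set (Ioc_subset_Ioc_right (by linarith)))
      (hint.mono_set (Ioc_subset_Ioc_left ht)),
    Ioc_union_Ioc_eq_Ioc ht (by linarith), add_comm t, duhamel]

lemma heatFlow_zero_add (d c t : ℝ) {h g : ℝ → ℝ} {B B' : ℝ} (hh : Continuous h)
    (hg : Continuous g) (hB : ∀ y, |h y| ≤ B) (hB' : ∀ y, |g y| ≤ B') (x : ℝ) :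
    heatFlow 0 d c t (fun y => h y + g y) x = heatFlow 0 d c t h x + heatFlow 0 d c t g x := by
  simp only [heatFlow, hermiteAvg_add 0 _ _ hh hg hB hB', mul_add]

lemma IsMildSolution.timeShift {u f g : ℝ → ℝ → ℝ} (hm : IsMildSolution d c u f g) (hd : 0 < d)
    (hu : IsBddContinuous B u) (hf : IsBddContinuous B f) (hg : IsBddContinuous B g) {ρ : ℝ}
    (hρ : 0 ≤ ρ) :
    IsMildSolution d c (timeShift ρ u) (timeShift ρ f) (timeShift ρ g) := fun x t ht => by
  have hinit : (fun y => GRD.timeShift ρ u y 0) = fun y => (heatFlow 0 d c ρ (fun z => u z 0) y +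
      duhamel 0 d c f y ρ) + duhamel 1 d c g y ρ := by
    ext y
    simpa [GRD.timeShift, mildFormula] using hm y ρ hρ
  obtain ⟨B₀, hB₀⟩ := exists_abs_duhamel_le hd two_pos c B hρ
  obtain ⟨B₁, hB₁⟩ := exists_abs_duhamel_le hd one_lt_two c B hρ
  have hflow (y : ℝ) := abs_heatFlow_zero_le d c ρ y fun z => hu.abs_le z 0
  have hcflow := continuous_heatFlow 0 d c ρ (hu.continuous_left 0) fun z => hu.abs_le z 0
  have hc₀ : Continuous fun y => duhamel 0 d c f y ρ :=
    (continuous_duhamel hd two_pos c hf).comp (by fun_prop : Continuous fun y : ℝ => (y, ρ))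
  have hc₁ : Continuous fun y => duhamel 1 d c g y ρ :=
    (continuous_duhamel hd one_lt_two c hg).comp (by fun_prop : Continuous fun y : ℝ => (y, ρ))
  rw [mildFormula, zero_add, hinit, heatFlow_zero_add d c t (hcflow.fun_add hc₀) hc₁
    (fun y => (abs_add_le _ _).trans (add_le_add (hflow y) (hB₀ f hf y))) (hB₁ g hg),
    heatFlow_zero_add d c t hcflow hc₀ hflow (hB₀ f hf),
    heatFlow_zero_comp hd.le ht hρ c (hu.continuous_left 0) fun z => hu.abs_le z 0]
  have hsum := hm x (ρ + t) (by positivity)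
  rw [mildFormula, zero_add, duhamel_add hd two_pos c hf hρ ht,
    duhamel_add hd one_lt_two c hg hρ ht, add_comm ρ t] at hsum
  simp only [GRD.timeShift, max_eq_left ht, add_comm ρ t] at hsum ⊢
  linarith

end duhamel

/-! ### Spatial regularity of bounded mild solutions -/

section mildFormula

variable {k : ℕ} {d B α H t ρ : ℝ} {u f g h : ℝ → ℝ → ℝ}

lemma IsBddContinuous.mono {B' : ℝ} (hb : IsBddContinuous B h) (hB : B ≤ B') :
    IsBddContinuous B' h :=
  ⟨hb.continuous, fun x t => (hb.abs_le x t).trans hB⟩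

lemma IsBddContinuous.nonneg (hb : IsBddContinuous B h) : 0 ≤ B :=
  (abs_nonneg _).trans (hb.abs_le 0 0)

lemma IsBddContinuous.zero (hB : 0 ≤ B) : IsBddContinuous B 0 :=
  ⟨continuous_const, fun x t => by simpa using hB⟩

lemma IsSpatiallyHolder.zero (α : ℝ) : IsSpatiallyHolder α 0 0 := fun t x y => by simp

lemma IsSpatiallyHolder.timeShift (hh : IsSpatiallyHolder α H h) (ρ : ℝ) :
    IsSpatiallyHolder α H (timeShift ρ h) := fun _ => hh _

lemma timeShift_comm (hρ : 0 ≤ ρ) (h : ℝ → ℝ → ℝ) (x t : ℝ) :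
    timeShift ρ h x t = timeShift (max t 0) h x ρ := by
  rw [timeShift, timeShift, max_eq_left hρ, add_comm]

lemma continuous_timeShift (hρ : 0 < ρ)
    (hc : ContinuousOn (fun p : ℝ × ℝ => h p.1 p.2) {p | 0 < p.2}) :
    Continuous fun p : ℝ × ℝ => timeShift ρ h p.1 p.2 :=
  hc.comp_continuous (f := fun p : ℝ × ℝ => (p.1, ρ + max p.2 0)) (by fun_prop) fun p =>
    add_pos_of_pos_of_nonneg hρ (le_max_right p.2 0)

@[simp]
lemma duhamel_zero_source (k : ℕ) (d c x t : ℝ) : duhamel k d c 0 x t = 0 := by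
  simp [duhamel, duhamelKernel, heatFlow, hermiteAvg]

lemma heatFlow_one_eq_of_hasDerivAt (hd : 0 < d) (ht : 0 < t) (c : ℝ) {h h' : ℝ → ℝ} {B' : ℝ}
    (hh : ∀ x, HasDerivAt h (h' x) x) (hc' : Continuous h') (hB : ∀ x, |h x| ≤ B)
    (hB' : ∀ x, |h' x| ≤ B') (x : ℝ) : heatFlow 1 d c t h x = heatFlow 0 d c t h' x := by
  rw [heatFlow, heatFlow, pow_one, pow_zero, one_mul]
  exact hermiteAvg_succ_eq_of_hasDerivAt 0 (heatWidth_pos hd ht) hh hc' hB hB' _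

lemma continuousOn_heatFlow (hd : 0 < d) (k : ℕ) (c : ℝ) {h : ℝ → ℝ} (hc : Continuous h)
    (hB : ∀ y, |h y| ≤ B) :
    ContinuousOn (fun p : ℝ × ℝ => heatFlow k d c p.2 h p.1) {p | 0 < p.2} := by
  have havg : Continuous fun p : ℝ × ℝ => hermiteAvg k (heatWidth d p.2) h (p.1 + c * p.2) :=
    continuous_hermiteAvg_param k (σ := fun p : ℝ × ℝ => heatWidth d p.2)
      (a := fun p => p.1 + c * p.2) (h := fun _ => h) (by fun_prop) (by fun_prop)
      (hc.comp continuous_snd) fun _ => hB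
  exact .mul (.pow (.inv₀ (by fun_prop) fun p hp => (heatWidth_pos hd hp).ne') k) havg.continuousOn

lemma continuousOn_mildFormula_one (hd : 0 < d) (hα : 0 < α) (hα1 : α ≤ 1) (c : ℝ)
    (hu : IsBddContinuous B u) (hf : IsBddContinuous B f) (hg : IsBddContinuous B g)
    (hgα : IsSpatiallyHolder α H g) :
    ContinuousOn (fun p : ℝ × ℝ => mildFormula 1 d c u f g p.1 p.2) {p | 0 < p.2} :=
  ((continuousOn_heatFlow hd 1 c (hu.continuous_left 0) fun y => hu.abs_le y 0).add
    (continuous_duhamel hd one_lt_two c hf).continuousOn).add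
    (continuous_duhamel_two hd hα hα1 c hg hgα).continuousOn

lemma hasDerivAt_mildFormula_zero (hd : 0 < d) (hα : 0 < α) (hα1 : α ≤ 1) (c : ℝ)
    (hu : IsBddContinuous B u) (hf : IsBddContinuous B f) (hg : IsBddContinuous B g)
    (hgα : IsSpatiallyHolder α H g) (x : ℝ) (ht : 0 < t) :
    HasDerivAt (fun x => mildFormula 0 d c u f g x t) (mildFormula 1 d c u f g x t) x :=
  ((hasDerivAt_heatFlow hd ht 0 c (hu.continuous_left 0) (fun y => hu.abs_le y 0) x).fun_add
    (hasDerivAt_duhamel_zero hd c hf x t)).fun_add (hasDerivAt_duhamel_one hd hα hα1 c hg hgα x t)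

lemma exists_abs_mildFormula_one_le (hd : 0 < d) (hα : 0 < α) (hα1 : α ≤ 1) (c B H : ℝ)
    (ht : 0 < t) : ∃ B', ∀ u f g, IsBddContinuous B u → IsBddContinuous B f →
      IsBddContinuous B g → IsSpatiallyHolder α H g → ∀ x, |mildFormula 1 d c u f g x t| ≤ B' := by
  obtain ⟨B₁, hB₁⟩ := exists_abs_duhamel_le hd one_lt_two c B ht.le
  obtain ⟨B₂, hB₂⟩ := exists_abs_duhamel_two_le hd hα hα1 c B H ht.le
  exact ⟨_, fun u f g hu hf hg hgα x => (abs_add_three _ _ _).trans (add_le_add (add_le_add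
    (abs_heatFlow_le hd ht 1 c x fun y => hu.abs_le y 0) (hB₁ f hf x)) (hB₂ g hg hgα x))⟩

lemma exists_abs_mildFormula_sub_le_rpow (hd : 0 < d) (hk : k < 2) (c B : ℝ) (hα : 0 ≤ α)
    (hα1 : α < 1) (ht : 0 < t) : ∃ H, ∀ u f, IsBddContinuous B u → IsBddContinuous B f →
      ∀ x y, |mildFormula k d c u f 0 x t - mildFormula k d c u f 0 y t| ≤ H * |x - y| ^ α := by
  obtain ⟨Q, hQ⟩ := exists_abs_duhamel_sub_le_rpow hd hk c hα hα1 B ht.le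
  refine ⟨(2 * d) ^ (-((k + α) / 2)) * (hermiteHolderConst k * B) * t ^ (-((k + α) / 2)) + Q,
    fun u f hu hf x y => ?_⟩
  have hflow := abs_heatFlow_sub_le_rpow hd ht k c hα hα1.le (hu.continuous_left 0)
    (fun z => hu.abs_le z 0) x y
  simp only [mildFormula, duhamel_zero_source, add_zero, add_sub_add_comm]
  exact (abs_add_le _ _).trans ((add_le_add hflow (hQ f hf x y)).trans_eq (by ring))

lemma hasDerivAt_mildFormula_one (hd : 0 < d) (hα : 0 < α) (hα1 : α ≤ 1) (c : ℝ)
    (hu : IsBddContinuous B u) (hf : IsBddContinuous B f) (hfα : IsSpatiallyHolder α H f) (x : ℝ)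
    (ht : 0 < t) :
    HasDerivAt (fun x => mildFormula 1 d c u f 0 x t) (mildFormula 2 d c u f 0 x t) x := by
  simpa only [mildFormula, duhamel_zero_source, add_zero] using
    (hasDerivAt_heatFlow hd ht 1 c (hu.continuous_left 0) (fun y => hu.abs_le y 0) x).fun_add
      (hasDerivAt_duhamel_one hd hα hα1 c hf hfα x t)

lemma continuousOn_mildFormula_two (hd : 0 < d) (hα : 0 < α) (hα1 : α ≤ 1) (c : ℝ)
    (hu : IsBddContinuous B u) (hf : IsBddContinuous B f) (hfα : IsSpatiallyHolder α H f) :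
    ContinuousOn (fun p : ℝ × ℝ => mildFormula 2 d c u f 0 p.1 p.2) {p | 0 < p.2} := by
  simpa only [mildFormula, duhamel_zero_source, add_zero] using
    (continuousOn_heatFlow hd 2 c (hu.continuous_left 0) fun y => hu.abs_le y 0).fun_add
      (continuous_duhamel_two hd hα hα1 c hf hfα).continuousOn

lemma exists_abs_mildFormula_two_le (hd : 0 < d) (hα : 0 < α) (hα1 : α ≤ 1) (c : ℝ)
    (hu : IsBddContinuous B u) (hf : IsBddContinuous B f) (hfα : IsSpatiallyHolder α H f)
    (ht : 0 < t) : ∃ B', ∀ x, |mildFormula 2 d c u f 0 x t| ≤ B' := by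
  obtain ⟨B₂, hB₂⟩ := exists_abs_duhamel_two_le hd hα hα1 c B H ht.le
  refine ⟨(heatWidth d t)⁻¹ ^ 2 * (hermiteAvgConst 2 * B) + B₂, fun x => ?_⟩
  simpa only [mildFormula, duhamel_zero_source, add_zero] using (abs_add_le _ _).trans
    (add_le_add (abs_heatFlow_le hd ht 2 c x fun y => hu.abs_le y 0) (hB₂ f hf hfα x))

end mildFormula

namespace IsMildSolution

variable {d c B α H ρ : ℝ} {u f g g' X : ℝ → ℝ → ℝ}

lemma timeShift_eq (hm : IsMildSolution d c u f g) (hd : 0 < d) (hu : IsBddContinuous B u)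
    (hf : IsBddContinuous B f) (hg : IsBddContinuous B g) (hρ : 0 ≤ ρ) (x t : ℝ) :
    GRD.timeShift ρ u x t = mildFormula 0 d c (GRD.timeShift (max t 0) u)
      (GRD.timeShift (max t 0) f) (GRD.timeShift (max t 0) g) x ρ := by
  rw [timeShift_comm hρ, hm.timeShift hd hu hf hg (le_max_right t 0) x ρ hρ]

/-- A bounded mild solution instantly becomes Hölder continuous: its value at time `ρ + t` is given
by the variation of constants formula on the time interval `[t, ρ + t]`, of fixed length. -/
lemma exists_isSpatiallyHolder_timeShift (hm : IsMildSolution d c u f g) (hd : 0 < d)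
    (hu : IsBddContinuous B u) (hf : IsBddContinuous B f) (hg : IsBddContinuous B g) (hα : 0 ≤ α)
    (hα1 : α < 1) (hρ : 0 < ρ) : ∃ H, IsSpatiallyHolder α H (GRD.timeShift ρ u) := by
  obtain ⟨H, hH⟩ := exists_abs_mildFormula_sub_le_rpow hd two_pos c B hα hα1 hρ
  obtain ⟨Q, hQ⟩ := exists_abs_duhamel_sub_le_rpow hd one_lt_two c hα hα1 B hρ.le
  have hsplit (v k l : ℝ → ℝ → ℝ) (x : ℝ) : mildFormula 0 d c v k l x ρ =
    mildFormula 0 d c v k 0 x ρ + duhamel 1 d c l x ρ := by simp [mildFormula]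
  refine ⟨H + Q, fun t x y => ?_⟩
  rw [hm.timeShift_eq hd hu hf hg hρ.le, hm.timeShift_eq hd hu hf hg hρ.le, hsplit, hsplit _ _ _ y,
    add_sub_add_comm, add_mul]
  exact (abs_add_le _ _).trans
    (add_le_add (hH _ _ (hu.timeShift _) (hf.timeShift _) x y) (hQ _ (hg.timeShift _) x y))

lemma hasDerivAt (hm : IsMildSolution d c u f g) (hd : 0 < d) (hα : 0 < α) (hα1 : α ≤ 1)
    (hu : IsBddContinuous B u) (hf : IsBddContinuous B f) (hg : IsBddContinuous B g)
    (hgα : IsSpatiallyHolder α H g) (x : ℝ) {t : ℝ} (ht : 0 < t) :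
    HasDerivAt (fun x => u x t) (mildFormula 1 d c u f g x t) x :=
  (hasDerivAt_mildFormula_zero hd hα hα1 c hu hf hg hgα x ht).congr_of_eventuallyEq
    (.of_forall fun x => hm x t ht.le)

lemma hasDerivAt_timeShift (hm : IsMildSolution d c u f g) (hd : 0 < d) (hα : 0 < α) (hα1 : α ≤ 1)
    (hu : IsBddContinuous B u) (hf : IsBddContinuous B f) (hg : IsBddContinuous B g)
    (hgα : IsSpatiallyHolder α H g) (hρ : 0 < ρ) (x t : ℝ) :
    HasDerivAt (fun x => GRD.timeShift ρ u x t) (mildFormula 1 d c (GRD.timeShift (max t 0) u)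
      (GRD.timeShift (max t 0) f) (GRD.timeShift (max t 0) g) x ρ) x := by
  have hs := hm.timeShift hd hu hf hg (le_max_right t 0)
  simpa only [timeShift_comm hρ.le] using hs.hasDerivAt hd hα hα1 (hu.timeShift _) (hf.timeShift _)
    (hg.timeShift _) (hgα.timeShift _) x hρ

lemma exists_isBddContinuous_deriv (hm : IsMildSolution d c u f g) (hd : 0 < d) (hα : 0 < α)
    (hα1 : α ≤ 1) (hu : IsBddContinuous B u) (hf : IsBddContinuous B f) (hg : IsBddContinuous B g)
    (hgα : IsSpatiallyHolder α H g) (hρ : 0 < ρ) : ∃ X B', IsBddContinuous B' X ∧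
      ∀ x t, HasDerivAt (fun x => GRD.timeShift ρ u x t) (X x t) x := by
  obtain ⟨B', hB'⟩ := exists_abs_mildFormula_one_le hd hα hα1 c B H hρ
  have hX (x t : ℝ) : HasDerivAt (fun x => GRD.timeShift ρ u x t)
      (GRD.timeShift ρ (mildFormula 1 d c u f g) x t) x :=
    hm.hasDerivAt hd hα hα1 hu hf hg hgα x (add_pos_of_pos_of_nonneg hρ (le_max_right t 0))
  refine ⟨GRD.timeShift ρ (mildFormula 1 d c u f g), B',
    ⟨continuous_timeShift hρ (continuousOn_mildFormula_one hd hα hα1 c hu hf hg hgα),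
      fun x t => ?_⟩, hX⟩
  rw [(hX x t).unique (hm.hasDerivAt_timeShift hd hα hα1 hu hf hg hgα hρ x t)]
  exact hB' _ _ _ (hu.timeShift _) (hf.timeShift _) (hg.timeShift _) (hgα.timeShift _) x

lemma add_deriv (hm : IsMildSolution d c u f g) (hd : 0 < d) (hf : IsBddContinuous B f)
    (hg : IsBddContinuous B g) {B' : ℝ} (hg' : IsBddContinuous B' g')
    (hgd : ∀ x t, HasDerivAt (fun x => g x t) (g' x t) x) : IsMildSolution d c u (f + g') 0 := by
  intro x t ht
  rw [hm x t ht, mildFormula, mildFormula, duhamel_zero_source, add_zero, add_assoc, zero_add]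
  congr 1
  unfold duhamel
  rw [← integral_add ((isWeaklySingular_duhamelKernel hd two_pos c hf).integrableOn x t t)
    ((isWeaklySingular_duhamelKernel hd one_lt_two c hg).integrableOn x t t)]
  refine setIntegral_congr_fun measurableSet_Ioc fun τ hτ => ?_
  rw [duhamelKernel, duhamelKernel, heatFlow_one_eq_of_hasDerivAt hd hτ.1 c
    (fun x => hgd x (t - τ)) (hg'.continuous_left _) (fun y => hg.abs_le y _)
    (fun y => hg'.abs_le y _)]
  exact (heatFlow_zero_add d c τ (hf.continuous_left _) (hg'.continuous_left _)
    (fun y => hf.abs_le y _) (fun y => hg'.abs_le y _) x).symm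

lemma exists_isSpatiallyHolder_timeShift_deriv (hm : IsMildSolution d c u f 0) (hd : 0 < d)
    (hu : IsBddContinuous B u) (hf : IsBddContinuous B f)
    (hX : ∀ x t, HasDerivAt (fun x => u x t) (X x t) x) (hα : 0 < α) (hα1 : α < 1) (hρ : 0 < ρ) :
    ∃ H, IsSpatiallyHolder α H (GRD.timeShift ρ X) := by
  obtain ⟨H, hH⟩ := exists_abs_mildFormula_sub_le_rpow hd one_lt_two c B hα.le hα1 hρ
  refine ⟨H, fun t x y => ?_⟩
  have heq (x : ℝ) := (hX x (ρ + max t 0)).unique (hm.hasDerivAt_timeShift hd hα hα1.le hu hf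
    (.zero hu.nonneg) (IsSpatiallyHolder.zero α) hρ x t)
  rw [GRD.timeShift, GRD.timeShift, heq x, heq y]
  exact hH _ _ (hu.timeShift _) (hf.timeShift _) x y

end IsMildSolution

/-! ### Time derivatives of bounded mild solutions -/

lemma hasDerivAt_of_hasDerivWithinAt_Ici {φ r : ℝ → ℝ} {a t : ℝ} (hφ : ContinuousOn φ (Ioi a))
    (hr : ContinuousOn r (Ioi a)) (hd : ∀ s, a < s → HasDerivWithinAt φ (r s) (Ici s) s)
    (ht : a < t) : HasDerivAt φ (r t) t := by
  obtain ⟨b, hab, hbt⟩ := exists_between ht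
  have hprim (s : ℝ) (hs : b ≤ s) : HasDerivAt (fun s => φ b + ∫ τ in b..s, r τ) (r s) s := by
    have has : s ∈ Ioi a := hab.trans_le hs
    refine .const_add _ (intervalIntegral.integral_hasDerivAt_right ?_
      (hr.stronglyMeasurableAtFilter isOpen_Ioi s has) (hr.continuousAt (Ioi_mem_nhds has)))
    exact (hr.mono fun y hy => hab.trans_le hy.1).intervalIntegrable_of_Icc hs
  have heq := eq_of_has_deriv_right_eq (a := b) (b := t + 1)
    (fun s hs => hd s (hab.trans_le hs.1)) (fun s hs => (hprim s hs.1).hasDerivWithinAt)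
    (hφ.mono fun y hy => hab.trans_le hy.1)
    (fun s hs => (hprim s hs.1).continuousAt.continuousWithinAt) (by simp)
  refine (hprim t hbt.le).congr_of_eventuallyEq ?_
  filter_upwards [Icc_mem_nhds hbt (lt_add_one t)] using heq

section heatFlow

variable {d t η B B₁ B₂ : ℝ} {w w₁ w₂ : ℝ → ℝ}

lemma hasDerivAt_heatWidth (hd : 0 < d) (hη : 0 < η) :
    HasDerivAt (heatWidth d) (d * (heatWidth d η)⁻¹) η := by
  have hlin : HasDerivAt (fun η : ℝ => 2 * d * η) (2 * d) η := by
    simpa using (hasDerivAt_id η).const_mul (2 * d)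
  have := heatWidth_pos hd hη
  refine (hlin.sqrt (by positivity)).congr_deriv ?_
  rw [heatWidth] at this ⊢
  field_simp

lemma continuous_heatFlow_time (d c : ℝ) (hc : Continuous w) (hB : ∀ x, |w x| ≤ B) (x : ℝ) :
    Continuous fun t => heatFlow 0 d c t w x := by
  simp only [heatFlow, pow_zero, one_mul]
  exact continuous_hermiteAvg_param 0 (σ := heatWidth d) (a := fun t => x + c * t)
    (h := fun _ => w) (by fun_prop) (by fun_prop) (hc.comp continuous_snd) fun _ => hB

lemma abs_drift_add_le (hd : 0 < d) (hη : 0 < η) (hηt : η ≤ t) (c z : ℝ) :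
    |c + d * (heatWidth d t)⁻¹ * z| ≤ (1 + |z|) * (|c| + d * (heatWidth d η)⁻¹) := by
  have hση := heatWidth_pos hd hη
  have hσt := heatWidth_pos hd (hη.trans_le hηt)
  have hσ : heatWidth d η ≤ heatWidth d t := Real.sqrt_le_sqrt (by gcongr)
  calc _ ≤ |c| + d * (heatWidth d t)⁻¹ * |z| := by
        refine (abs_add_le _ _).trans_eq ?_
        rw [abs_mul, abs_of_pos (by positivity : 0 < d * (heatWidth d t)⁻¹)]
    _ ≤ (1 + |z|) * |c| + d * (heatWidth d η)⁻¹ * (1 + |z|) := by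
        gcongr
        · exact le_mul_of_one_le_left (abs_nonneg c) (by linarith [abs_nonneg z])
        · linarith
    _ = _ := by ring

/-- Differentiation under the Gaussian integral, after the substitution that moves the time
dependence into `w`. -/
lemma hasDerivAt_heatFlow_time_integral (hd : 0 < d) (c : ℝ) (hw : ∀ x, HasDerivAt w (w₁ x) x)
    (hc₁ : Continuous w₁) (hB : ∀ x, |w x| ≤ B) (hB₁ : ∀ x, |w₁ x| ≤ B₁) (x : ℝ) (ht : 0 < t) :
    HasDerivAt (fun t => heatFlow 0 d c t w x) (∫ z, hermiteGaussian 0 z *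
      (w₁ (x + c * t + heatWidth d t * z) * (c + d * (heatWidth d t)⁻¹ * z))) t := by
  have hc : Continuous w := continuous_iff_continuousAt.2 fun x => (hw x).continuousAt
  simp only [heatFlow, pow_zero, one_mul]
  refine (hasDerivAt_integral_of_dominated_loc_of_deriv_le (s := Ioi (t / 2))
    (F := fun t z => hermiteGaussian 0 z * w (x + c * t + heatWidth d t * z))
    (F' := fun t z => hermiteGaussian 0 z *
      (w₁ (x + c * t + heatWidth d t * z) * (c + d * (heatWidth d t)⁻¹ * z)))
    (bound := fun z => hermiteConst 0 *
      (wideGaussian z * (B₁ * ((1 + |z|) * (|c| + d * (heatWidth d (t / 2))⁻¹)))))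
    (Ioi_mem_nhds (half_lt_self ht)) (.of_forall fun t => (by fun_prop : Continuous _)
      |>.aestronglyMeasurable) (integrable_hermiteGaussian_mul_comp 0 _ _ hc hB)
    (by fun_prop : Continuous _).aestronglyMeasurable ?_ ?_ ?_).2
  · refine .of_forall fun z s hs => abs_hermiteGaussian_mul_le 0 z ?_
    rw [abs_mul]
    exact mul_le_mul (hB₁ _) (abs_drift_add_le hd (half_pos ht) (mem_Ioi.1 hs).le c z)
      (abs_nonneg _) ((abs_nonneg _).trans (hB₁ 0))
  · refine ((integrable_wideGaussian_mul_one_add_abs.mul_const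
      (B₁ * (|c| + d * (heatWidth d (t / 2))⁻¹))).const_mul (hermiteConst 0)).congr
      (.of_forall fun z => ?_)
    ring
  · refine .of_forall fun z s hs => .const_mul _ ?_
    have harg : HasDerivAt (fun s => x + c * s + heatWidth d s * z)
        (c + d * (heatWidth d s)⁻¹ * z) s := by
      simpa using (((hasDerivAt_id s).const_mul c).const_add x).fun_add
        ((hasDerivAt_heatWidth hd ((half_pos ht).trans hs)).mul_const z)
    exact (hw _).comp s harg

lemma hasDerivAt_heatFlow_time (hd : 0 < d) (c : ℝ) (hw : ∀ x, HasDerivAt w (w₁ x) x)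
    (hw₁ : ∀ x, HasDerivAt w₁ (w₂ x) x) (hc₂ : Continuous w₂) (hB : ∀ x, |w x| ≤ B)
    (hB₁ : ∀ x, |w₁ x| ≤ B₁) (hB₂ : ∀ x, |w₂ x| ≤ B₂) (x : ℝ) (ht : 0 < t) :
    HasDerivAt (fun t => heatFlow 0 d c t w x)
      (d * heatFlow 0 d c t w₂ x + c * heatFlow 0 d c t w₁ x) t := by
  have hc₁ : Continuous w₁ := continuous_iff_continuousAt.2 fun x => (hw₁ x).continuousAt
  refine (hasDerivAt_heatFlow_time_integral hd c hw hc₁ hB hB₁ x ht).congr_deriv ?_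
  rw [← heatFlow_one_eq_of_hasDerivAt hd ht c hw₁ hc₂ hB₁ hB₂]
  simp only [heatFlow, pow_zero, one_mul, pow_one, hermiteAvg, ← integral_const_mul]
  rw [← integral_add (((integrable_hermiteGaussian_mul_comp 1 _ _ hc₁ hB₁).const_mul _).const_mul _)
    ((integrable_hermiteGaussian_mul_comp 0 _ _ hc₁ hB₁).const_mul _)]
  congr 1 with z
  simp only [hermiteGaussian, Polynomial.hermite_zero, Polynomial.hermite_one, map_one,
    Polynomial.aeval_X]
  ring

lemma hasDerivWithinAt_heatFlow_time_zero (hd : 0 < d) (c : ℝ) (hw : ∀ x, HasDerivAt w (w₁ x) x)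
    (hw₁ : ∀ x, HasDerivAt w₁ (w₂ x) x) (hc₂ : Continuous w₂) (hB : ∀ x, |w x| ≤ B)
    (hB₁ : ∀ x, |w₁ x| ≤ B₁) (hB₂ : ∀ x, |w₂ x| ≤ B₂) (x : ℝ) :
    HasDerivWithinAt (fun t => heatFlow 0 d c t w x) (d * w₂ x + c * w₁ x) (Ici 0) 0 := by
  have hc : Continuous w := continuous_iff_continuousAt.2 fun x => (hw x).continuousAt
  have hc₁ : Continuous w₁ := continuous_iff_continuousAt.2 fun x => (hw₁ x).continuousAt
  have hderiv (t : ℝ) (ht : t ∈ Ioi 0) :=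
    hasDerivAt_heatFlow_time hd c hw hw₁ hc₂ hB hB₁ hB₂ x (mem_Ioi.1 ht)
  refine hasDerivWithinAt_Ici_of_tendsto_deriv (s := Ioi 0)
    (fun t ht => (hderiv t ht).differentiableAt.differentiableWithinAt)
    (continuous_heatFlow_time d c hc hB x).continuousWithinAt self_mem_nhdsWithin ?_
  have hlim := (((continuous_heatFlow_time d c hc₂ hB₂ x).const_mul d).fun_add
    ((continuous_heatFlow_time d c hc₁ hB₁ x).const_mul c)).tendsto 0
  simp only [heatFlow_zero_time] at hlim
  refine (hlim.mono_left nhdsWithin_le_nhds).congr' ?_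
  filter_upwards [self_mem_nhdsWithin] with t ht using (hderiv t ht).deriv.symm

end heatFlow

variable {d c B : ℝ} {u f : ℝ → ℝ → ℝ}

lemma hasDerivWithinAt_duhamel_time_zero (d c : ℝ) (hf : IsBddContinuous B f) (x : ℝ) :
    HasDerivWithinAt (fun t => duhamel 0 d c f x t) (f x 0) (Ici 0) 0 := by
  set m : ℝ → ℝ := fun t => ∫ s in (0 : ℝ)..1, duhamelKernel 0 d c f x t (t * s)
  have hkernel : Continuous fun p : ℝ × ℝ => duhamelKernel 0 d c f x p.1 (p.1 * p.2) := by
    simp only [duhamelKernel, heatFlow, pow_zero, one_mul]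
    exact continuous_hermiteAvg_param 0 (σ := fun p : ℝ × ℝ => heatWidth d (p.1 * p.2))
      (a := fun p => x + c * (p.1 * p.2)) (h := fun p y => f y (p.1 - p.1 * p.2)) (by fun_prop)
      (by fun_prop) (hf.continuous.comp
        (by fun_prop : Continuous fun q : (ℝ × ℝ) × ℝ => (q.2, q.1.1 - q.1.1 * q.1.2)))
      fun p y => hf.abs_le _ _
  have hm : Continuous m :=
    intervalIntegral.continuous_parametric_intervalIntegral_of_continuous' hkernel 0 1
  have hm0 : m 0 = f x 0 := by simp [m, duhamelKernel]
  have heq (t : ℝ) (ht : t ∈ Ici 0) : duhamel 0 d c f x t = t * m t := by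
    rw [intervalIntegral.mul_integral_comp_mul_left, mul_zero, mul_one,
      intervalIntegral.integral_of_le ht, duhamel]
  have hderiv : HasDerivAt (fun t => t * m t) (f x 0) 0 := by
    rw [hasDerivAt_iff_tendsto_slope_zero, ← hm0]
    refine ((hm.tendsto 0).mono_left nhdsWithin_le_nhds).congr' ?_
    filter_upwards [self_mem_nhdsWithin] with t ht
    simp [inv_mul_cancel_left₀ (show t ≠ 0 from ht)]
  exact hderiv.hasDerivWithinAt.congr heq (heq 0 self_mem_Ici)

namespace IsMildSolution

variable {X Y : ℝ → ℝ → ℝ} {B₁ B₂ : ℝ}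

lemma hasDerivWithinAt_time (hm : IsMildSolution d c u f 0) (hd : 0 < d)
    (hu : IsBddContinuous B u) (hf : IsBddContinuous B f) (hX : IsBddContinuous B₁ X)
    (hux : ∀ x t, HasDerivAt (fun x => u x t) (X x t) x) {s : ℝ} (hs : 0 ≤ s)
    (hY : Continuous fun x => Y x s) (hB₂ : ∀ x, |Y x s| ≤ B₂)
    (huxx : ∀ x, HasDerivAt (fun x => X x s) (Y x s) x) (x : ℝ) :
    HasDerivWithinAt (fun t => u x t) (d * Y x s + c * X x s + f x s) (Ici s) s := by
  have hrestart (t : ℝ) (ht : t ∈ Ici s) : u x t = heatFlow 0 d c (t - s) (fun y => u y s) x +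
      duhamel 0 d c (GRD.timeShift s f) x (t - s) := by
    have hts : 0 ≤ t - s := sub_nonneg.2 ht
    have := hm.timeShift hd hu hf (.zero hu.nonneg) hs x (t - s) hts
    rw [mildFormula, show GRD.timeShift s (0 : ℝ → ℝ → ℝ) = 0 from rfl, duhamel_zero_source,
      add_zero] at this
    simpa [GRD.timeShift, max_eq_left hts] using this
  have hright := (hasDerivWithinAt_heatFlow_time_zero hd c (hux · s) huxx hY (hu.abs_le · s)
    (hX.abs_le · s) hB₂ x).fun_add
      (hasDerivWithinAt_duhamel_time_zero d c (hf.timeShift s) x)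
  rw [show GRD.timeShift s f x 0 = f x s by simp [GRD.timeShift]] at hright
  have hsub : HasDerivWithinAt (fun t : ℝ => t - s) 1 (Ici s) s :=
    ((hasDerivAt_id s).sub_const s).hasDerivWithinAt
  have hcomp := hright.scomp_of_eq (h := fun t : ℝ => t - s) s hsub
    (fun t ht => sub_nonneg.2 (mem_Ici.1 ht)) (sub_self s).symm
  rw [one_smul] at hcomp
  exact hcomp.congr hrestart (hrestart s self_mem_Ici)

lemma hasDerivAt_time (hm : IsMildSolution d c u f 0) (hd : 0 < d) (hu : IsBddContinuous B u)
    (hf : IsBddContinuous B f) (hX : IsBddContinuous B₁ X)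
    (hux : ∀ x t, HasDerivAt (fun x => u x t) (X x t) x)
    (hY : ContinuousOn (fun p : ℝ × ℝ => Y p.1 p.2) {p | 0 < p.2})
    (hYB : ∀ t, 0 < t → ∃ B', ∀ x, |Y x t| ≤ B')
    (huxx : ∀ x t, 0 < t → HasDerivAt (fun x => X x t) (Y x t) x) (x : ℝ) {t : ℝ} (ht : 0 < t) :
    HasDerivAt (fun t => u x t) (d * Y x t + c * X x t + f x t) t := by
  have hYt : ContinuousOn (fun s => Y x s) (Ioi 0) :=
    hY.comp (f := fun s : ℝ => (x, s)) (by fun_prop) fun s hs => hs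
  have hright (s : ℝ) (hs : 0 < s) : HasDerivWithinAt (fun t => u x t)
      (d * Y x s + c * X x s + f x s) (Ici s) s := by
    obtain ⟨B₂, hB₂⟩ := hYB s hs
    exact hm.hasDerivWithinAt_time hd hu hf hX hux hs.le
      (hY.comp_continuous (f := fun x : ℝ => (x, s)) (by fun_prop) fun _ => hs) hB₂
      (huxx · s hs) x
  exact hasDerivAt_of_hasDerivWithinAt_Ici hu.continuous_right.continuousOn
    (((hYt.const_mul d).fun_add (hX.continuous_right.continuousOn.const_mul c)).fun_add
      hf.continuous_right.continuousOn) hright ht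

end IsMildSolution

/-! ### Superposition operators -/

section Superposition

variable {α B B' H H' : ℝ} {u v X Y : ℝ → ℝ → ℝ} {g h : ℝ × ℝ → ℝ}

lemma exists_abs_le_of_continuous (hc : Continuous h) (B : ℝ) :
    ∃ K, ∀ a b, |a| ≤ B → |b| ≤ B → |h (a, b)| ≤ K := by
  obtain ⟨K, hK⟩ :=
    (isCompact_closedBall (0 : ℝ × ℝ) B).exists_bound_of_continuousOn hc.continuousOn
  exact ⟨K, fun a b ha hb => hK (a, b) (mem_closedBall_zero_iff.2 (max_le ha hb))⟩

lemma exists_abs_sub_le_of_contDiff (hc : ContDiff ℝ 1 h) (B : ℝ) :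
    ∃ L, 0 ≤ L ∧ ∀ a b a' b', |a| ≤ B → |b| ≤ B → |a'| ≤ B → |b'| ≤ B →
      |h (a, b) - h (a', b')| ≤ L * (|a - a'| + |b - b'|) := by
  obtain ⟨L, hL⟩ := hc.contDiffOn.exists_lipschitzOnWith one_ne_zero
    (convex_closedBall (0 : ℝ × ℝ) B) (isCompact_closedBall 0 B)
  refine ⟨L, L.coe_nonneg, fun a b a' b' ha hb ha' hb' => ?_⟩
  refine (hL.dist_le_mul (a, b) (mem_closedBall_zero_iff.2 (max_le ha hb)) (a', b')
    (mem_closedBall_zero_iff.2 (max_le ha' hb'))).trans ?_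
  exact mul_le_mul_of_nonneg_left (max_le_add_of_nonneg (abs_nonneg _) (abs_nonneg _)) L.coe_nonneg

/-- The superposition (Nemytskii) operator: `h` evaluated along the fields `u` and `v`. -/
def superpose (h : ℝ × ℝ → ℝ) (u v : ℝ → ℝ → ℝ) (x t : ℝ) : ℝ := h (u x t, v x t)

lemma IsBddContinuous.exists_superpose (hu : IsBddContinuous B u) (hv : IsBddContinuous B v)
    (hc : Continuous h) : ∃ K, IsBddContinuous K (superpose h u v) := by
  obtain ⟨K, hK⟩ := exists_abs_le_of_continuous hc B
  exact ⟨K, hc.comp (hu.continuous.prodMk hv.continuous), fun x t =>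
    hK _ _ (hu.abs_le x t) (hv.abs_le x t)⟩

lemma IsBddContinuous.add (hu : IsBddContinuous B u) (hv : IsBddContinuous B' v) :
    IsBddContinuous (B + B') (u + v) :=
  ⟨hu.continuous.add hv.continuous, fun x t =>
    (abs_add_le _ _).trans (add_le_add (hu.abs_le x t) (hv.abs_le x t))⟩

lemma IsBddContinuous.mul (hu : IsBddContinuous B u) (hv : IsBddContinuous B' v) :
    IsBddContinuous (B * B') (u * v) :=
  ⟨hu.continuous.mul hv.continuous, fun x t => (abs_mul _ _).trans_le
    (mul_le_mul (hu.abs_le x t) (hv.abs_le x t) (abs_nonneg _) hu.nonneg)⟩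

lemma IsSpatiallyHolder.exists_superpose (hHu : IsSpatiallyHolder α H u)
    (hHv : IsSpatiallyHolder α H' v) (hu : IsBddContinuous B u) (hv : IsBddContinuous B v)
    (hc : ContDiff ℝ 1 h) : ∃ K, IsSpatiallyHolder α K (superpose h u v) := by
  obtain ⟨L, hL0, hL⟩ := exists_abs_sub_le_of_contDiff hc B
  refine ⟨L * (H + H'), fun t x y => ?_⟩
  calc |h (u x t, v x t) - h (u y t, v y t)|
    _ ≤ L * (|u x t - u y t| + |v x t - v y t|) :=
      hL _ _ _ _ (hu.abs_le x t) (hv.abs_le x t) (hu.abs_le y t) (hv.abs_le y t)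
    _ ≤ L * (H * |x - y| ^ α + H' * |x - y| ^ α) := by gcongr; exacts [hHu t x y, hHv t x y]
    _ = L * (H + H') * |x - y| ^ α := by ring

lemma IsSpatiallyHolder.add (hu : IsSpatiallyHolder α H u) (hv : IsSpatiallyHolder α H' v) :
    IsSpatiallyHolder α (H + H') (u + v) := fun t x y => by
  simp only [Pi.add_apply, add_sub_add_comm, add_mul]
  exact (abs_add_le _ _).trans (add_le_add (hu t x y) (hv t x y))

lemma IsSpatiallyHolder.mul (hHu : IsSpatiallyHolder α H u) (hHv : IsSpatiallyHolder α H' v)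
    (hu : IsBddContinuous B u) (hv : IsBddContinuous B' v) :
    IsSpatiallyHolder α (B * H' + B' * H) (u * v) := fun t x y => by
  calc |u x t * v x t - u y t * v y t|
    _ = |u x t * (v x t - v y t) + v y t * (u x t - u y t)| := by congr 1; ring
    _ ≤ B * (H' * |x - y| ^ α) + B' * (H * |x - y| ^ α) := by
      refine (abs_add_le _ _).trans ?_
      rw [abs_mul, abs_mul]
      exact add_le_add (mul_le_mul (hu.abs_le x t) (hHv t x y) (abs_nonneg _) hu.nonneg)
        (mul_le_mul (hv.abs_le y t) (hHu t x y) (abs_nonneg _) hv.nonneg)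
    _ = (B * H' + B' * H) * |x - y| ^ α := by ring

/-- The partial derivative `∂h/∂u` of `h (u, v)`. -/
def partialFst (h : ℝ × ℝ → ℝ) (p : ℝ × ℝ) : ℝ := fderiv ℝ h p (1, 0)

/-- The partial derivative `∂h/∂v` of `h (u, v)`. -/
def partialSnd (h : ℝ × ℝ → ℝ) (p : ℝ × ℝ) : ℝ := fderiv ℝ h p (0, 1)

lemma contDiff_partialFst (hh : ContDiff ℝ 2 h) : ContDiff ℝ 1 (partialFst h) :=
  (hh.fderiv_right (m := 1) one_add_one_eq_two.le).clm_apply contDiff_const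

lemma contDiff_partialSnd (hh : ContDiff ℝ 2 h) : ContDiff ℝ 1 (partialSnd h) :=
  (hh.fderiv_right (m := 1) one_add_one_eq_two.le).clm_apply contDiff_const

lemma hasDerivAt_comp_prodMk (hh : Differentiable ℝ h) {a b : ℝ → ℝ} {a' b' x : ℝ}
    (ha : HasDerivAt a a' x) (hb : HasDerivAt b b' x) : HasDerivAt (fun x => h (a x, b x))
      (partialFst h (a x, b x) * a' + partialSnd h (a x, b x) * b') x := by
  refine ((hh (a x, b x)).hasFDerivAt.comp_hasDerivAt x (ha.prodMk hb)).congr_deriv ?_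
  rw [show ((a', b') : ℝ × ℝ) = a' • (1, 0) + b' • (0, 1) by simp, map_add, map_smul, map_smul,
    partialFst, partialSnd, smul_eq_mul, smul_eq_mul, mul_comm a', mul_comm b']

/-- The space derivative of `g (u, v)` when `X` and `Y` are those of `u` and `v`. -/
def fluxDeriv (g : ℝ × ℝ → ℝ) (u v X Y : ℝ → ℝ → ℝ) : ℝ → ℝ → ℝ :=
  superpose (partialFst g) u v * X + superpose (partialSnd g) u v * Y

lemma IsBddContinuous.exists_fluxDeriv (hu : IsBddContinuous B u) (hv : IsBddContinuous B v)
    {B₁ B₂ : ℝ} (hX : IsBddContinuous B₁ X) (hY : IsBddContinuous B₂ Y) (hg : ContDiff ℝ 2 g) :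
    ∃ K, IsBddContinuous K (fluxDeriv g u v X Y) := by
  obtain ⟨_, h₁⟩ := hu.exists_superpose hv (contDiff_partialFst hg).continuous
  obtain ⟨_, h₂⟩ := hu.exists_superpose hv (contDiff_partialSnd hg).continuous
  exact ⟨_, (h₁.mul hX).add (h₂.mul hY)⟩

lemma IsSpatiallyHolder.exists_fluxDeriv (hHu : IsSpatiallyHolder α H u)
    (hHv : IsSpatiallyHolder α H' v) {H₁ H₂ : ℝ} (hHX : IsSpatiallyHolder α H₁ X)
    (hHY : IsSpatiallyHolder α H₂ Y) (hu : IsBddContinuous B u) (hv : IsBddContinuous B v)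
    {B₁ B₂ : ℝ} (hX : IsBddContinuous B₁ X) (hY : IsBddContinuous B₂ Y) (hg : ContDiff ℝ 2 g) :
    ∃ K, IsSpatiallyHolder α K (fluxDeriv g u v X Y) := by
  have hg₁ := contDiff_partialFst hg
  have hg₂ := contDiff_partialSnd hg
  obtain ⟨_, h₁⟩ := hu.exists_superpose hv hg₁.continuous
  obtain ⟨_, h₂⟩ := hu.exists_superpose hv hg₂.continuous
  obtain ⟨_, hH₁⟩ := hHu.exists_superpose hHv hu hv hg₁
  obtain ⟨_, hH₂⟩ := hHu.exists_superpose hHv hu hv hg₂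
  exact ⟨_, (hH₁.mul hHX h₁ hX).add (hH₂.mul hHY h₂ hY)⟩

end Superposition

/-! ### From mild to classical solutions -/

/-- The space derivative of a function of `(x, t)`, with value `0` where it does not exist. -/
def spaceDeriv (u : ℝ → ℝ → ℝ) (x t : ℝ) : ℝ := deriv (fun y => u y t) x

lemma spaceDeriv_timeShift (ρ : ℝ) (u : ℝ → ℝ → ℝ) :
    spaceDeriv (timeShift ρ u) = timeShift ρ (spaceDeriv u) := rfl

/-- `u` is continuously differentiable in space, with bounded derivative. -/
structure IsSpatiallyC1 (u : ℝ → ℝ → ℝ) : Prop where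
  hasDerivAt : ∀ x t, HasDerivAt (fun y => u y t) (spaceDeriv u x t) x
  exists_isBddContinuous : ∃ B, IsBddContinuous B (spaceDeriv u)

lemma IsSpatiallyC1.timeShift {u : ℝ → ℝ → ℝ} (hu : IsSpatiallyC1 u) (ρ : ℝ) :
    IsSpatiallyC1 (timeShift ρ u) :=
  ⟨fun x _ => hu.hasDerivAt x _, hu.exists_isBddContinuous.imp fun _ h => h.timeShift ρ⟩

lemma timeShift_timeShift {ρ' : ℝ} (hρ' : 0 ≤ ρ') (ρ : ℝ) (u : ℝ → ℝ → ℝ) :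
    timeShift ρ' (timeShift ρ u) = timeShift (ρ + ρ') u := by
  ext x t
  rw [timeShift, timeShift, timeShift,
    max_eq_left (add_nonneg hρ' (le_max_right t 0)), add_assoc]

lemma timeShift_sub {ρ t : ℝ} (ht : ρ ≤ t) (u : ℝ → ℝ → ℝ) (x : ℝ) :
    timeShift ρ u x (t - ρ) = u x t := by
  rw [timeShift, max_eq_left (sub_nonneg.2 ht), add_sub_cancel]

/-- After time `ρ`, `u` is a classical solution of `u_t = d u_xx + c u_x + S`. -/
structure IsClassicalAfter (ρ d c : ℝ) (S u : ℝ → ℝ → ℝ) : Prop where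
  hasDerivAt : ∀ x t, ρ < t → HasDerivAt (fun y => u y t) (spaceDeriv u x t) x
  hasDerivAt_spaceDeriv : ∀ x t, ρ < t →
    HasDerivAt (fun y => spaceDeriv u y t) (spaceDeriv (spaceDeriv u) x t) x
  hasDerivAt_time : ∀ x t, ρ < t → HasDerivAt (fun s => u x s)
    (d * spaceDeriv (spaceDeriv u) x t + c * spaceDeriv u x t + S x t) t
  continuousOn_spaceDeriv : ContinuousOn (fun p : ℝ × ℝ => spaceDeriv u p.1 p.2) {p | ρ < p.2}
  continuousOn_spaceDeriv_spaceDeriv :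
    ContinuousOn (fun p : ℝ × ℝ => spaceDeriv (spaceDeriv u) p.1 p.2) {p | ρ < p.2}

namespace IsClassicalAfter

variable {ρ d c : ℝ} {S u : ℝ → ℝ → ℝ}

lemma of_timeShift (h : IsClassicalAfter 0 d c (timeShift ρ S) (timeShift ρ u)) :
    IsClassicalAfter ρ d c S u := by
  have hshift {t : ℝ} (ht : ρ < t) (w : ℝ → ℝ → ℝ) (x : ℝ) := timeShift_sub ht.le w x
  have hmaps : MapsTo (fun p : ℝ × ℝ => (p.1, p.2 - ρ)) {p | ρ < p.2} {p | 0 < p.2} :=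
    fun p hp => sub_pos.2 (show ρ < p.2 from hp)
  obtain ⟨hx, hxx, ht, hxc, hxxc⟩ := h
  simp only [spaceDeriv_timeShift] at hx hxx ht hxc hxxc
  refine ⟨fun x t hρ => ?_, fun x t hρ => ?_, fun x t hρ => ?_, ?_, ?_⟩
  · simpa only [hshift hρ] using hx x (t - ρ) (sub_pos.2 hρ)
  · simpa only [hshift hρ] using hxx x (t - ρ) (sub_pos.2 hρ)
  · have htime := (ht x (t - ρ) (sub_pos.2 hρ)).comp_sub_const t ρ
    rw [hshift hρ, hshift hρ, hshift hρ] at htime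
    refine htime.congr_of_eventuallyEq ?_
    filter_upwards [Ioi_mem_nhds hρ] with s hs using (hshift hs u x).symm
  · exact (hxc.comp (by fun_prop) hmaps).congr
      fun p hp => (hshift hp (spaceDeriv u) p.1).symm
  · exact (hxxc.comp (by fun_prop) hmaps).congr
      fun p hp => (hshift hp (spaceDeriv (spaceDeriv u)) p.1).symm

lemma of_forall_pos (h : ∀ ρ, 0 < ρ → IsClassicalAfter ρ d c S u) : IsClassicalAfter 0 d c S u := by
  have hcont {w : ℝ → ℝ → ℝ}
      (hw : ∀ ρ, 0 < ρ → ContinuousOn (fun p : ℝ × ℝ => w p.1 p.2) {p | ρ < p.2}) :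
      ContinuousOn (fun p : ℝ × ℝ => w p.1 p.2) {p | 0 < p.2} := fun p (hp : 0 < p.2) =>
    ((hw (p.2 / 2) (half_pos hp)).continuousAt
      ((isOpen_lt continuous_const continuous_snd).mem_nhds (half_lt_self hp))).continuousWithinAt
  exact ⟨fun x t ht => (h (t / 2) (half_pos ht)).hasDerivAt x t (half_lt_self ht),
    fun x t ht => (h (t / 2) (half_pos ht)).hasDerivAt_spaceDeriv x t (half_lt_self ht),
    fun x t ht => (h (t / 2) (half_pos ht)).hasDerivAt_time x t (half_lt_self ht),
    hcont fun ρ hρ => (h ρ hρ).continuousOn_spaceDeriv,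
    hcont fun ρ hρ => (h ρ hρ).continuousOn_spaceDeriv_spaceDeriv⟩

end IsClassicalAfter

/-- `w` is a bounded mild solution of `w_t = d w_xx + c w_x + f (u, v) + ∂_x (g (u, v))`, for given
bounded `u` and `v`. In the system `w` is `u` or `v`. -/
structure IsMildComponent (B d c : ℝ) (f g : ℝ × ℝ → ℝ) (u v w : ℝ → ℝ → ℝ) : Prop where
  pos : 0 < d
  contDiff_source : ContDiff ℝ 1 f
  contDiff_flux : ContDiff ℝ 2 g
  isBddContinuous_fst : IsBddContinuous B u
  isBddContinuous_snd : IsBddContinuous B v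
  isBddContinuous : IsBddContinuous B w
  isMildSolution : IsMildSolution d c w (superpose f u v) (superpose g u v)

namespace IsMildComponent

variable {α B d c ρ H H' : ℝ} {f g : ℝ × ℝ → ℝ} {u v w : ℝ → ℝ → ℝ}

lemma exists_isBddContinuous (h : IsMildComponent B d c f g u v w) :
    ∃ K, IsBddContinuous K w ∧ IsBddContinuous K (superpose f u v) ∧
      IsBddContinuous K (superpose g u v) := by
  obtain ⟨K₁, h₁⟩ :=
    h.isBddContinuous_fst.exists_superpose h.isBddContinuous_snd h.contDiff_source.continuous
  obtain ⟨K₂, h₂⟩ :=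
    h.isBddContinuous_fst.exists_superpose h.isBddContinuous_snd h.contDiff_flux.continuous
  exact ⟨max B (max K₁ K₂), h.isBddContinuous.mono (le_max_left _ _),
    h₁.mono ((le_max_left _ _).trans (le_max_right _ _)),
    h₂.mono ((le_max_right _ _).trans (le_max_right _ _))⟩

lemma timeShift (h : IsMildComponent B d c f g u v w) (hρ : 0 ≤ ρ) :
    IsMildComponent B d c f g (timeShift ρ u) (timeShift ρ v) (timeShift ρ w) := by
  obtain ⟨K, hw, hf, hg⟩ := h.exists_isBddContinuous
  exact ⟨h.pos, h.contDiff_source, h.contDiff_flux, h.isBddContinuous_fst.timeShift ρ,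
    h.isBddContinuous_snd.timeShift ρ, h.isBddContinuous.timeShift ρ,
    h.isMildSolution.timeShift h.pos hw hf hg hρ⟩

lemma exists_isSpatiallyHolder_timeShift (h : IsMildComponent B d c f g u v w) (hα : 0 ≤ α)
    (hα1 : α < 1) (hρ : 0 < ρ) : ∃ H, IsSpatiallyHolder α H (GRD.timeShift ρ w) := by
  obtain ⟨K, hw, hf, hg⟩ := h.exists_isBddContinuous
  exact h.isMildSolution.exists_isSpatiallyHolder_timeShift h.pos hw hf hg hα hα1 hρ

lemma isSpatiallyC1_timeShift (h : IsMildComponent B d c f g u v w) (hα : 0 < α) (hα1 : α ≤ 1)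
    (hHu : IsSpatiallyHolder α H u) (hHv : IsSpatiallyHolder α H' v) (hρ : 0 < ρ) :
    IsSpatiallyC1 (GRD.timeShift ρ w) := by
  obtain ⟨K, hw, hf, hg⟩ := h.exists_isBddContinuous
  obtain ⟨L, hL⟩ := hHu.exists_superpose hHv h.isBddContinuous_fst h.isBddContinuous_snd
    (h.contDiff_flux.of_le one_le_two)
  obtain ⟨X, B', hX, hderiv⟩ :=
    h.isMildSolution.exists_isBddContinuous_deriv h.pos hα hα1 hw hf hg hL hρ
  obtain rfl : X = spaceDeriv (GRD.timeShift ρ w) := by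
    ext x t
    exact (hderiv x t).deriv.symm
  exact ⟨hderiv, B', hX⟩

lemma exists_isMildSolution_fluxDeriv (h : IsMildComponent B d c f g u v w)
    (hu : IsSpatiallyC1 u) (hv : IsSpatiallyC1 v) : ∃ K, IsBddContinuous K w ∧
      IsBddContinuous K (superpose f u v + fluxDeriv g u v (spaceDeriv u) (spaceDeriv v)) ∧
      IsMildSolution d c w
        (superpose f u v + fluxDeriv g u v (spaceDeriv u) (spaceDeriv v)) 0 := by
  obtain ⟨K, hw, hf, hg⟩ := h.exists_isBddContinuous
  obtain ⟨_, hX⟩ := hu.exists_isBddContinuous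
  obtain ⟨_, hY⟩ := hv.exists_isBddContinuous
  obtain ⟨K', hg'⟩ :=
    h.isBddContinuous_fst.exists_fluxDeriv h.isBddContinuous_snd hX hY h.contDiff_flux
  exact ⟨K + K', hw.mono (le_add_of_nonneg_right hg'.nonneg), hf.add hg',
    h.isMildSolution.add_deriv h.pos hf hg hg' fun x t => hasDerivAt_comp_prodMk
      (h.contDiff_flux.differentiable two_ne_zero) (hu.hasDerivAt x t) (hv.hasDerivAt x t)⟩

lemma exists_isSpatiallyHolder_spaceDeriv (h : IsMildComponent B d c f g u v w) (hα : 0 < α)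
    (hα1 : α < 1) (hu : IsSpatiallyC1 u) (hv : IsSpatiallyC1 v) (hw : IsSpatiallyC1 w)
    (hρ : 0 < ρ) : ∃ H, IsSpatiallyHolder α H (spaceDeriv (GRD.timeShift ρ w)) := by
  obtain ⟨K, hwK, hS, hm⟩ := h.exists_isMildSolution_fluxDeriv hu hv
  exact hm.exists_isSpatiallyHolder_timeShift_deriv h.pos hwK hS hw.hasDerivAt hα hα1 hρ

lemma isClassicalAfter_zero (h : IsMildComponent B d c f g u v w) (hα : 0 < α) (hα1 : α < 1)
    (hu : IsSpatiallyC1 u) (hv : IsSpatiallyC1 v) (hw : IsSpatiallyC1 w)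
    (hHu : IsSpatiallyHolder α H u) (hHv : IsSpatiallyHolder α H' v) {H₁ H₂ : ℝ}
    (hHux : IsSpatiallyHolder α H₁ (spaceDeriv u)) (hHvx : IsSpatiallyHolder α H₂ (spaceDeriv v)) :
    IsClassicalAfter 0 d c
      (superpose f u v + fluxDeriv g u v (spaceDeriv u) (spaceDeriv v)) w := by
  obtain ⟨K, hwK, hS, hm⟩ := h.exists_isMildSolution_fluxDeriv hu hv
  obtain ⟨_, hux⟩ := hu.exists_isBddContinuous
  obtain ⟨_, hvx⟩ := hv.exists_isBddContinuous
  obtain ⟨_, hwx⟩ := hw.exists_isBddContinuous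
  obtain ⟨_, hf⟩ := hHu.exists_superpose hHv h.isBddContinuous_fst h.isBddContinuous_snd
    h.contDiff_source
  obtain ⟨_, hg⟩ := hHu.exists_fluxDeriv hHv hHux hHvx h.isBddContinuous_fst
    h.isBddContinuous_snd hux hvx h.contDiff_flux
  have hSH := hf.add hg
  set S := superpose f u v + fluxDeriv g u v (spaceDeriv u) (spaceDeriv v)
  have hX (x t : ℝ) (ht : 0 < t) : spaceDeriv w x t = mildFormula 1 d c w S 0 x t :=
    (hm.hasDerivAt h.pos hα hα1.le hwK hS (.zero hwK.nonneg) (IsSpatiallyHolder.zero α) x ht).deriv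
  have hXd (x t : ℝ) (ht : 0 < t) :
      HasDerivAt (fun y => spaceDeriv w y t) (mildFormula 2 d c w S 0 x t) x := by
    simpa only [hX _ t ht] using hasDerivAt_mildFormula_one h.pos hα hα1.le c hwK hS hSH x ht
  have hY (x t : ℝ) (ht : 0 < t) :
      spaceDeriv (spaceDeriv w) x t = mildFormula 2 d c w S 0 x t := (hXd x t ht).deriv
  have hYc := continuousOn_mildFormula_two h.pos hα hα1.le c hwK hS hSH
  refine ⟨fun x t _ => hw.hasDerivAt x t, fun x t ht => ?_, fun x t ht => ?_,
    hwx.continuous.continuousOn, hYc.congr fun p hp => hY p.1 p.2 hp⟩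
  · rw [hY x t ht]
    exact hXd x t ht
  · rw [hY x t ht]
    exact hm.hasDerivAt_time h.pos hwK hS hwx hw.hasDerivAt hYc
      (fun t ht => exists_abs_mildFormula_two_le h.pos hα hα1.le c hwK hS hSH ht) hXd x ht

end IsMildComponent

section System

variable {B d₁ d₂ c₁ c₂ : ℝ} {f₁ f₂ g₁ g₂ : ℝ × ℝ → ℝ} {u v : ℝ → ℝ → ℝ}

/-- Three successive gains of regularity: Hölder continuity, a bounded and then Hölder continuous
space derivative, and finally a second one, each after a third of the waiting time. -/
lemma isClassicalAfter_of_isMildComponent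
    (hu : IsMildComponent B d₁ c₁ f₁ g₁ u v u) (hv : IsMildComponent B d₂ c₂ f₂ g₂ u v v)
    {ρ : ℝ} (hρ : 0 < ρ) :
    IsClassicalAfter ρ d₁ c₁
        (superpose f₁ u v + fluxDeriv g₁ u v (spaceDeriv u) (spaceDeriv v)) u ∧
      IsClassicalAfter ρ d₂ c₂
        (superpose f₂ u v + fluxDeriv g₂ u v (spaceDeriv u) (spaceDeriv v)) v := by
  obtain ⟨q, hq, rfl⟩ : ∃ q, 0 < q ∧ ρ = q + q + q := ⟨ρ / 3, by positivity, by ring⟩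
  obtain ⟨α, hα, hα₁⟩ : ∃ α : ℝ, 0 < α ∧ α < 1 := ⟨1 / 2, one_half_pos, one_half_lt_one⟩
  obtain ⟨Hu, hHu⟩ := hu.exists_isSpatiallyHolder_timeShift hα.le hα₁ hq
  obtain ⟨Hv, hHv⟩ := hv.exists_isSpatiallyHolder_timeShift hα.le hα₁ hq
  have hu₁ := (hu.timeShift hq.le).isSpatiallyC1_timeShift hα hα₁.le hHu hHv hq
  have hv₁ := (hv.timeShift hq.le).isSpatiallyC1_timeShift hα hα₁.le hHu hHv hq
  have hu₂ := (hu.timeShift hq.le).timeShift hq.le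
  have hv₂ := (hv.timeShift hq.le).timeShift hq.le
  obtain ⟨Hux, hHux⟩ := hu₂.exists_isSpatiallyHolder_spaceDeriv hα hα₁ hu₁ hv₁ hu₁ hq
  obtain ⟨Hvx, hHvx⟩ := hv₂.exists_isSpatiallyHolder_spaceDeriv hα hα₁ hu₁ hv₁ hv₁ hq
  replace hHu := (hHu.timeShift q).timeShift q
  replace hHv := (hHv.timeShift q).timeShift q
  have hucl := (hu₂.timeShift hq.le).isClassicalAfter_zero hα hα₁ (hu₁.timeShift q)
    (hv₁.timeShift q) (hu₁.timeShift q) hHu hHv hHux hHvx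
  have hvcl := (hv₂.timeShift hq.le).isClassicalAfter_zero hα hα₁ (hu₁.timeShift q)
    (hv₁.timeShift q) (hv₁.timeShift q) hHu hHv hHux hHvx
  simp only [timeShift_timeShift hq.le] at hucl hvcl
  exact ⟨.of_timeShift hucl, .of_timeShift hvcl⟩

theorem isClassicalSolution_of_isMildComponent (hu : IsMildComponent B d₁ c₁ f₁ g₁ u v u)
    (hv : IsMildComponent B d₂ c₂ f₂ g₂ u v v) :
    IsClassicalSolution d₁ d₂ c₁ c₂ f₁ f₂ g₁ g₂ ⊤ (fun x => u x 0) (fun x => v x 0) u v := by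
  have hucl := IsClassicalAfter.of_forall_pos fun ρ hρ =>
    (isClassicalAfter_of_isMildComponent hu hv hρ).1
  have hvcl := IsClassicalAfter.of_forall_pos fun ρ hρ =>
    (isClassicalAfter_of_isMildComponent hu hv hρ).2
  have huv := hu.isBddContinuous.continuous.prodMk hv.isBddContinuous.continuous
  have hux := hucl.continuousOn_spaceDeriv
  have hvx := hvcl.continuousOn_spaceDeriv
  have huxx := hucl.continuousOn_spaceDeriv_spaceDeriv
  have hvxx := hvcl.continuousOn_spaceDeriv_spaceDeriv
  have hS {f g : ℝ × ℝ → ℝ} (hf : ContDiff ℝ 1 f) (hg : ContDiff ℝ 2 g) :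
      ContinuousOn (fun p : ℝ × ℝ => (superpose f u v + fluxDeriv g u v (spaceDeriv u)
        (spaceDeriv v)) p.1 p.2) {p | 0 < p.2} :=
    (hf.continuous.comp huv).continuousOn.fun_add
      ((((contDiff_partialFst hg).continuous.comp huv).continuousOn.fun_mul hux).fun_add
        (((contDiff_partialSnd hg).continuous.comp huv).continuousOn.fun_mul hvx))
  have hut := (((huxx.const_mul d₁).fun_add (hux.const_mul c₁)).fun_add
    (hS hu.contDiff_source hu.contDiff_flux))
  have hvt := (((hvxx.const_mul d₂).fun_add (hvx.const_mul c₂)).fun_add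
    (hS hv.contDiff_source hv.contDiff_flux))
  refine ⟨fun _ => rfl, fun _ => rfl, huv.continuousOn, fun _ _ _ => ⟨B + B, fun x t _ _ =>
    add_le_add (hu.isBddContinuous.abs_le x t) (hv.isBddContinuous.abs_le x t)⟩, _, _, _, _, _, _,
    fluxDeriv g₁ u v (spaceDeriv u) (spaceDeriv v), fluxDeriv g₂ u v (spaceDeriv u) (spaceDeriv v),
    fun x t ht _ => ⟨hucl.hasDerivAt_time x t ht, hucl.hasDerivAt x t ht,
      hucl.hasDerivAt_spaceDeriv x t ht, ?_, hvcl.hasDerivAt_time x t ht, hvcl.hasDerivAt x t ht,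
      hvcl.hasDerivAt_spaceDeriv x t ht, ?_, ?_, ?_⟩,
    (hut.prodMk (hux.prodMk (huxx.prodMk (hvt.prodMk (hvx.prodMk hvxx))))).mono fun p hp => hp.1⟩
  · exact hasDerivAt_comp_prodMk (hu.contDiff_flux.differentiable two_ne_zero)
      (hucl.hasDerivAt x t ht) (hvcl.hasDerivAt x t ht)
  · exact hasDerivAt_comp_prodMk (hv.contDiff_flux.differentiable two_ne_zero)
      (hucl.hasDerivAt x t ht) (hvcl.hasDerivAt x t ht)
  · exact (add_assoc _ _ _).symm
  · exact (add_assoc _ _ _).symm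

end System

/-! ### The Picard iteration -/

section Bielecki

variable {k : ℕ} {d c K K' M l t : ℝ} {h h' : ℝ → ℝ → ℝ}

/-- The contraction constant of `duhamel k` in Bielecki's norm `sup |h x t| * exp (-l * t)`: the
Laplace transform at `l` of the bound for the norm of `heatFlow k`. -/
def bieleckiConst (k : ℕ) (d l : ℝ) : ℝ :=
  hermiteAvgConst k * (2 * d) ^ (-(k / 2 : ℝ)) *
    ((1 / l) ^ (1 - k / 2 : ℝ) * Real.Gamma (1 - k / 2))

lemma one_sub_half_pos (hk : k < 2) : (0 : ℝ) < 1 - k / 2 := by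
  have : (k : ℝ) < 2 := by exact_mod_cast hk
  linarith

lemma tendsto_bieleckiConst (hk : k < 2) (d : ℝ) :
    Filter.Tendsto (bieleckiConst k d) Filter.atTop (nhds 0) := by
  have hinv : Filter.Tendsto (fun l : ℝ => 1 / l) Filter.atTop (nhds 0) := by
    simpa using tendsto_inv_atTop_zero (𝕜 := ℝ)
  have hpow := hinv.rpow_const (p := 1 - k / 2) (.inr (one_sub_half_pos hk).le)
  rw [Real.zero_rpow (one_sub_half_pos hk).ne'] at hpow
  unfold bieleckiConst
  simpa using (hpow.mul_const (Real.Gamma (1 - k / 2))).const_mul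
    (hermiteAvgConst k * (2 * d) ^ (-(k / 2 : ℝ)))

lemma abs_duhamelKernel_sub_le_exp {τ : ℝ} (hd : 0 < d) (hb : IsBddContinuous K h)
    (hb' : IsBddContinuous K' h')
    (hM : ∀ y s, 0 ≤ s → |h y s - h' y s| ≤ M * Real.exp (l * s)) (x : ℝ) (hτ : τ ∈ Ioc 0 t) :
    |duhamelKernel k d c h x t τ - duhamelKernel k d c h' x t τ| ≤
      hermiteAvgConst k * (2 * d) ^ (-(k / 2 : ℝ)) * M * Real.exp (l * t) *
        (τ ^ (1 - k / 2 - 1 : ℝ) * Real.exp (-(l * τ))) := by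
  have hpow := inv_heatWidth_pow_mul_rpow hd hτ.1 k 0
  rw [Real.rpow_zero, mul_one, sub_zero] at hpow
  have hexp : Real.exp (l * (t - τ)) = Real.exp (l * t) * Real.exp (-(l * τ)) := by
    rw [← Real.exp_add]
    ring_nf
  have hsub : duhamelKernel k d c h x t τ - duhamelKernel k d c h' x t τ =
      heatFlow k d c τ (fun y => h y (t - τ) - h' y (t - τ)) x := by
    simp only [duhamelKernel, heatFlow, hermiteAvg_sub k _ _ (hb.continuous_left _)
      (hb'.continuous_left _) (fun y => hb.abs_le y _) fun y => hb'.abs_le y _, mul_sub]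
  rw [hsub]
  refine (abs_heatFlow_le hd hτ.1 k c x fun y => hM y _ (sub_nonneg.2 hτ.2)).trans_eq ?_
  rw [hpow, hexp]
  ring_nf

lemma abs_duhamel_sub_le_exp (hd : 0 < d) (hk : k < 2) (c : ℝ) (hb : IsBddContinuous K h)
    (hb' : IsBddContinuous K' h') (hl : 0 < l)
    (hM : ∀ y s, 0 ≤ s → |h y s - h' y s| ≤ M * Real.exp (l * s)) (x t : ℝ) :
    |duhamel k d c h x t - duhamel k d c h' x t| ≤ bieleckiConst k d l * M * Real.exp (l * t) := by
  have hM0 : 0 ≤ M := by simpa using (abs_nonneg _).trans (hM 0 0 le_rfl)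
  have hk2 := one_sub_half_pos hk
  have hint : IntegrableOn (fun τ => τ ^ (1 - k / 2 - 1 : ℝ) * Real.exp (-(l * τ))) (Ioi 0) := by
    simpa [neg_mul] using integrableOn_rpow_mul_exp_neg_mul_rpow (s := 1 - k / 2 - 1) (p := 1)
      (by linarith) one_pos hl
  set Q := hermiteAvgConst k * (2 * d) ^ (-(k / 2 : ℝ)) * M * Real.exp (l * t)
  have hQ : 0 ≤ Q := by have := hermiteAvgConst_nonneg k; positivity
  rw [duhamel, duhamel, ← integral_sub
    ((isWeaklySingular_duhamelKernel hd hk c hb).integrableOn x t t)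
    ((isWeaklySingular_duhamelKernel hd hk c hb').integrableOn x t t), ← Real.norm_eq_abs]
  calc _ ≤ ∫ τ in Ioc 0 t, Q * (τ ^ (1 - k / 2 - 1 : ℝ) * Real.exp (-(l * τ))) :=
        norm_integral_le_of_norm_le ((hint.mono_set Ioc_subset_Ioi_self).const_mul _)
          ((ae_restrict_iff' measurableSet_Ioc).2 (.of_forall fun τ hτ =>
            abs_duhamelKernel_sub_le_exp hd hb hb' hM x hτ))
    _ ≤ ∫ τ in Ioi 0, Q * (τ ^ (1 - k / 2 - 1 : ℝ) * Real.exp (-(l * τ))) := by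
        refine setIntegral_mono_set (hint.const_mul _) ?_ Ioc_subset_Ioi_self.eventuallyLE
        filter_upwards [ae_restrict_mem measurableSet_Ioi] with τ (hτ : 0 < τ)
        simp only [Pi.zero_apply]
        positivity
    _ = bieleckiConst k d l * M * Real.exp (l * t) := by
        rw [integral_const_mul, Real.integral_rpow_mul_exp_neg_mul_Ioi hk2 hl, bieleckiConst]
        ring

end Bielecki

section Picard

variable {d c B K : ℝ} {f g : ℝ × ℝ → ℝ} {u₀ : ℝ → ℝ} {u v : ℝ → ℝ → ℝ}

/-- One component of the Picard map of the system: the mild formula with initial datum `u₀` and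
the nonlinearities evaluated along `u` and `v`. -/
def picard (d c : ℝ) (f g : ℝ × ℝ → ℝ) (u₀ : ℝ → ℝ) (u v : ℝ → ℝ → ℝ) (x t : ℝ) : ℝ :=
  mildFormula 0 d c (fun x _ => u₀ x) (superpose f u v) (superpose g u v) x t

@[simp]
lemma picard_zero_time (x : ℝ) : picard d c f g u₀ u v x 0 = u₀ x := by
  simp [picard, mildFormula, duhamel_zero_time]

lemma continuous_picard (hd : 0 < d) (c : ℝ) (hf : Continuous f) (hg : Continuous g)
    (hu₀ : Continuous u₀) (hK : ∀ x, |u₀ x| ≤ K) (hu : IsBddContinuous B u)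
    (hv : IsBddContinuous B v) :
    Continuous fun p : ℝ × ℝ => picard d c f g u₀ u v p.1 p.2 := by
  obtain ⟨_, hF⟩ := hu.exists_superpose hv hf
  obtain ⟨_, hG⟩ := hu.exists_superpose hv hg
  have hflow : Continuous fun p : ℝ × ℝ => heatFlow 0 d c p.2 u₀ p.1 := by
    simpa [heatFlow] using continuous_hermiteAvg_param 0 (σ := fun p : ℝ × ℝ => heatWidth d p.2)
      (a := fun p => p.1 + c * p.2) (h := fun _ => u₀) (by fun_prop) (by fun_prop)
      (hu₀.comp continuous_snd) fun _ => hK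
  exact (hflow.add (continuous_duhamel hd two_pos c hF)).add (continuous_duhamel hd one_lt_two c hG)

lemma eventually_abs_picard_sub_le (hd : 0 < d) (c B : ℝ) (hf : ContDiff ℝ 1 f)
    (hg : ContDiff ℝ 1 g) (u₀ : ℝ → ℝ) {q : ℝ} (hq : 0 < q) :
    ∀ᶠ l in Filter.atTop, ∀ u v u' v',
      IsBddContinuous B u → IsBddContinuous B v → IsBddContinuous B u' → IsBddContinuous B v' →
      ∀ M, (∀ y s, 0 ≤ s → |u y s - u' y s| ≤ M * Real.exp (l * s)) →
        (∀ y s, 0 ≤ s → |v y s - v' y s| ≤ M * Real.exp (l * s)) → ∀ x t,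
        |picard d c f g u₀ u v x t - picard d c f g u₀ u' v' x t| ≤ q * M * Real.exp (l * t) := by
  obtain ⟨L₁, hL₁, hf'⟩ := exists_abs_sub_le_of_contDiff hf B
  obtain ⟨L₂, hL₂, hg'⟩ := exists_abs_sub_le_of_contDiff hg B
  have hlim : Filter.Tendsto (fun l => bieleckiConst 0 d l * (2 * L₁) +
      bieleckiConst 1 d l * (2 * L₂)) Filter.atTop (nhds 0) := by
    simpa using ((tendsto_bieleckiConst two_pos d).mul_const (2 * L₁)).add
      ((tendsto_bieleckiConst one_lt_two d).mul_const (2 * L₂))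
  filter_upwards [hlim.eventually_le_const hq, Filter.eventually_gt_atTop 0] with l hlq hl
    u v u' v' hu hv hu' hv' M hM hM' x t
  have hM0 : 0 ≤ M := by simpa using (abs_nonneg _).trans (hM 0 0 le_rfl)
  have hlip {h : ℝ × ℝ → ℝ} {L : ℝ} (hL : 0 ≤ L)
      (hh : ∀ a b a' b', |a| ≤ B → |b| ≤ B → |a'| ≤ B → |b'| ≤ B →
        |h (a, b) - h (a', b')| ≤ L * (|a - a'| + |b - b'|)) (y s : ℝ) (hs : 0 ≤ s) :
      |superpose h u v y s - superpose h u' v' y s| ≤ 2 * L * M * Real.exp (l * s) :=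
    calc _ ≤ L * (|u y s - u' y s| + |v y s - v' y s|) :=
          hh _ _ _ _ (hu.abs_le y s) (hv.abs_le y s) (hu'.abs_le y s) (hv'.abs_le y s)
      _ ≤ L * (M * Real.exp (l * s) + M * Real.exp (l * s)) := by
          gcongr; exacts [hM y s hs, hM' y s hs]
      _ = 2 * L * M * Real.exp (l * s) := by ring
  obtain ⟨_, hF⟩ := hu.exists_superpose hv hf.continuous
  obtain ⟨_, hF'⟩ := hu'.exists_superpose hv' hf.continuous
  obtain ⟨_, hG⟩ := hu.exists_superpose hv hg.continuous
  obtain ⟨_, hG'⟩ := hu'.exists_superpose hv' hg.continuous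
  have h₀ := abs_duhamel_sub_le_exp hd two_pos c hF hF' hl (hlip hL₁ hf') x t
  have h₁ := abs_duhamel_sub_le_exp hd one_lt_two c hG hG' hl (hlip hL₂ hg') x t
  calc |picard d c f g u₀ u v x t - picard d c f g u₀ u' v' x t|
      = |(duhamel 0 d c (superpose f u v) x t - duhamel 0 d c (superpose f u' v') x t) +
          (duhamel 1 d c (superpose g u v) x t - duhamel 1 d c (superpose g u' v') x t)| := by
        simp only [picard, mildFormula]
        ring_nf
    _ ≤ (bieleckiConst 0 d l * (2 * L₁) + bieleckiConst 1 d l * (2 * L₂)) * M *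
          Real.exp (l * t) := (abs_add_le _ _).trans ((add_le_add h₀ h₁).trans_eq (by ring))
    _ ≤ q * M * Real.exp (l * t) := by gcongr

end Picard

section FixedPoint

variable {X E : Type*} [TopologicalSpace X] [NormedAddCommGroup E] [NormedSpace ℝ E] {w : X → ℝ}
  {C : X → Set E} {B : ℝ}

open BoundedContinuousFunction in
/-- The fixed point is found among the bounded functions `a` for which `w • a` is a selection
of `C`, where the weighted norm becomes the supremum norm. -/
lemma exists_fixedPoint_of_weighted_contraction [CompleteSpace E] (hw : Continuous w)
    (hw₁ : ∀ p, 1 ≤ w p) (hC : ∀ p, IsClosed (C p)) (hCB : ∀ p, ∀ e ∈ C p, ‖e‖ ≤ B)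
    (hC₀ : ∀ p, 0 ∈ C p) {P : (X → E) → X → E}
    (hP : ∀ F, Continuous F → (∀ p, F p ∈ C p) → Continuous (P F) ∧ ∀ p, P F p ∈ C p)
    {q : NNReal} (hq : q < 1)
    (hcontr : ∀ F G, Continuous F → (∀ p, F p ∈ C p) → Continuous G → (∀ p, G p ∈ C p) →
      ∀ M, (∀ p, ‖F p - G p‖ ≤ M * w p) → ∀ p, ‖P F p - P G p‖ ≤ q * M * w p) :
    ∃ F, Continuous F ∧ (∀ p, F p ∈ C p) ∧ P F = F := by
  have hw₀ (p : X) : 0 < w p := one_pos.trans_le (hw₁ p)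
  let S : Set (X →ᵇ E) := {a | ∀ p, w p • a p ∈ C p}
  have hS : IsClosed S := by
    simp only [S, ofPred_forall]
    exact isClosed_iInter fun p => (hC p).preimage ((continuous_eval_const p).const_smul (w p))
  have := hS.completeSpace_coe
  have : Nonempty S := ⟨⟨0, fun p => by simpa using hC₀ p⟩⟩
  have hcont (a : X →ᵇ E) : Continuous fun p => w p • a p := hw.smul a.continuous
  have hscaled (a : S) : ∃ b : S, ∀ p, b.1 p = (w p)⁻¹ • P (fun p => w p • a.1 p) p := by
    obtain ⟨hPc, hPC⟩ := hP _ (hcont a.1) a.2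
    refine ⟨⟨.ofNormedAddCommGroup (fun p => (w p)⁻¹ • P (fun p => w p • a.1 p) p)
      ((hw.inv₀ fun p => (hw₀ p).ne').smul hPc) B fun p => ?_, fun p => ?_⟩, fun p => rfl⟩
    · rw [norm_smul, norm_inv, Real.norm_of_nonneg (hw₀ p).le]
      exact (mul_le_of_le_one_left (norm_nonneg _) (inv_le_one_of_one_le₀ (hw₁ p))).trans
        (hCB p _ (hPC p))
    · simpa [smul_inv_smul₀ (hw₀ p).ne'] using hPC p
  choose Φ hΦ using hscaled
  have hΦq : ContractingWith q Φ := by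
    refine ⟨hq, .of_dist_le_mul fun a b => (dist_le (by positivity)).2 fun p => ?_⟩
    rw [dist_eq_norm, hΦ, hΦ, ← smul_sub, norm_smul, norm_inv, Real.norm_of_nonneg (hw₀ p).le,
      inv_mul_le_iff₀ (hw₀ p), mul_comm (w p)]
    refine hcontr _ _ (hcont a.1) a.2 (hcont b.1) b.2 _ (fun p => ?_) p
    rw [← smul_sub, norm_smul, Real.norm_of_nonneg (hw₀ p).le, mul_comm, ← dist_eq_norm]
    gcongr
    · exact (hw₀ p).le
    · exact dist_coe_le_dist p
  refine ⟨_, hcont hΦq.fixedPoint.1, hΦq.fixedPoint.2, funext fun p => ?_⟩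
  have hfix := hΦ hΦq.fixedPoint p
  rw [hΦq.fixedPoint_isFixedPt] at hfix
  rw [hfix, smul_inv_smul₀ (hw₀ p).ne']

end FixedPoint

section System

variable {d₁ d₂ c₁ c₂ B K l : ℝ} {f₁ f₂ g₁ g₂ : ℝ × ℝ → ℝ} {u₀ v₀ : ℝ → ℝ} {W₁ W₂ : ℝ → ℝ → ℝ}

lemma exists_fixedPoint_of_bielecki_contraction (hl : 0 ≤ l)
    (hW₁ : ∀ x t, 0 ≤ t → W₁ x t ∈ Icc 0 B) (hW₂ : ∀ x t, 0 ≤ t → W₂ x t ∈ Icc 0 B)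
    {P₁ P₂ : (ℝ → ℝ → ℝ) → (ℝ → ℝ → ℝ) → ℝ → ℝ → ℝ}
    (hP : ∀ u v, IsBddContinuous B u → IsBddContinuous B v →
      (Continuous fun p : ℝ × ℝ => P₁ u v p.1 p.2) ∧ Continuous fun p : ℝ × ℝ => P₂ u v p.1 p.2)
    (hinv : ∀ u v, IsBddContinuous B u → IsBddContinuous B v →
      (∀ x t, 0 ≤ t → |u x t| ≤ W₁ x t) → (∀ x t, 0 ≤ t → |v x t| ≤ W₂ x t) → ∀ x t, 0 ≤ t →
        |P₁ u v x t| ≤ W₁ x t ∧ |P₂ u v x t| ≤ W₂ x t)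
    {q : NNReal} (hq : q < 1)
    (hcontr : ∀ u v u' v',
      IsBddContinuous B u → IsBddContinuous B v → IsBddContinuous B u' → IsBddContinuous B v' →
      ∀ M, (∀ y s, 0 ≤ s → |u y s - u' y s| ≤ M * Real.exp (l * s)) →
        (∀ y s, 0 ≤ s → |v y s - v' y s| ≤ M * Real.exp (l * s)) → ∀ x t,
        |P₁ u v x t - P₁ u' v' x t| ≤ q * M * Real.exp (l * t) ∧
          |P₂ u v x t - P₂ u' v' x t| ≤ q * M * Real.exp (l * t)) :
    ∃ u v, IsBddContinuous B u ∧ IsBddContinuous B v ∧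
      (∀ x t, 0 ≤ t → |u x t| ≤ W₁ x t) ∧ (∀ x t, 0 ≤ t → |v x t| ≤ W₂ x t) ∧
      ∀ x t, 0 ≤ t → P₁ u v x t = u x t ∧ P₂ u v x t = v x t := by
  let C (p : ℝ × ℝ) : Set (ℝ × ℝ) :=
    {e | |e.1| ≤ W₁ p.1 (max p.2 0) ∧ |e.2| ≤ W₂ p.1 (max p.2 0)}
  have hWC₁ (p : ℝ × ℝ) := hW₁ p.1 (max p.2 0) (le_max_right _ _)
  have hWC₂ (p : ℝ × ℝ) := hW₂ p.1 (max p.2 0) (le_max_right _ _)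
  let fst (F : ℝ × ℝ → ℝ × ℝ) (x t : ℝ) : ℝ := (F (x, t)).1
  let snd (F : ℝ × ℝ → ℝ × ℝ) (x t : ℝ) : ℝ := (F (x, t)).2
  let P (F : ℝ × ℝ → ℝ × ℝ) (p : ℝ × ℝ) : ℝ × ℝ :=
    (P₁ (fst F) (snd F) p.1 (max p.2 0), P₂ (fst F) (snd F) p.1 (max p.2 0))
  have hbdd {F : ℝ × ℝ → ℝ × ℝ} (hF : Continuous F) (hFC : ∀ p, F p ∈ C p) :
      IsBddContinuous B (fst F) ∧ IsBddContinuous B (snd F) :=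
    ⟨⟨hF.fst, fun x t => (hFC (x, t)).1.trans (hWC₁ _).2⟩,
      ⟨hF.snd, fun x t => (hFC (x, t)).2.trans (hWC₂ _).2⟩⟩
  have hdom {F : ℝ × ℝ → ℝ × ℝ} (hFC : ∀ p, F p ∈ C p) (x t : ℝ) (ht : 0 ≤ t) :
      |fst F x t| ≤ W₁ x t ∧ |snd F x t| ≤ W₂ x t := by
    simpa [C, max_eq_left ht] using hFC (x, t)
  have hPC (F : ℝ × ℝ → ℝ × ℝ) (hF : Continuous F) (hFC : ∀ p, F p ∈ C p) :
      Continuous (P F) ∧ ∀ p, P F p ∈ C p := by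
    obtain ⟨hu, hv⟩ := hbdd hF hFC
    have hpos : Continuous fun p : ℝ × ℝ => (p.1, max p.2 0) := by fun_prop
    exact ⟨((hP _ _ hu hv).1.comp hpos).prodMk ((hP _ _ hu hv).2.comp hpos), fun p =>
      hinv _ _ hu hv (fun x t ht => (hdom hFC x t ht).1) (fun x t ht => (hdom hFC x t ht).2) p.1 _
        (le_max_right _ _)⟩
  have hPq (F G : ℝ × ℝ → ℝ × ℝ) (hF : Continuous F) (hFC : ∀ p, F p ∈ C p) (hG : Continuous G)
      (hGC : ∀ p, G p ∈ C p) (M : ℝ) (hM : ∀ p, ‖F p - G p‖ ≤ M * Real.exp (l * max p.2 0))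
      (p : ℝ × ℝ) : ‖P F p - P G p‖ ≤ q * M * Real.exp (l * max p.2 0) := by
    have hM' (y s : ℝ) (hs : 0 ≤ s) : ‖F (y, s) - G (y, s)‖ ≤ M * Real.exp (l * s) := by
      simpa [max_eq_left hs] using hM (y, s)
    exact max_le_iff.2 (hcontr _ _ _ _ (hbdd hF hFC).1 (hbdd hF hFC).2 (hbdd hG hGC).1
      (hbdd hG hGC).2 M (fun y s hs => (norm_fst_le _).trans (hM' y s hs))
      (fun y s hs => (norm_snd_le _).trans (hM' y s hs)) _ _)
  obtain ⟨F, hF, hFC, hPF⟩ := exists_fixedPoint_of_weighted_contraction (C := C) (by fun_prop)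
    (fun p => Real.one_le_exp (by positivity))
    (fun p => (isClosed_le continuous_fst.abs continuous_const).inter
      (isClosed_le continuous_snd.abs continuous_const))
    (fun p e he => max_le (he.1.trans (hWC₁ p).2) (he.2.trans (hWC₂ p).2))
    (fun p => by simp [C, (hWC₁ p).1, (hWC₂ p).1]) hPC hq hPq
  refine ⟨fst F, snd F, (hbdd hF hFC).1, (hbdd hF hFC).2, fun x t ht => (hdom hFC x t ht).1,
    fun x t ht => (hdom hFC x t ht).2, fun x t ht => ?_⟩
  simpa [P, max_eq_left ht, Prod.ext_iff] using congrFun hPF (x, t)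

lemma exists_isMildSolution_of_invariant (hd₁ : 0 < d₁) (hd₂ : 0 < d₂) (hf₁ : ContDiff ℝ 1 f₁)
    (hf₂ : ContDiff ℝ 1 f₂) (hg₁ : ContDiff ℝ 1 g₁) (hg₂ : ContDiff ℝ 1 g₂)
    (hu₀ : Continuous u₀) (hv₀ : Continuous v₀) (hu₀K : ∀ x, |u₀ x| ≤ K) (hv₀K : ∀ x, |v₀ x| ≤ K)
    (hW₁ : ∀ x t, 0 ≤ t → W₁ x t ∈ Icc 0 B) (hW₂ : ∀ x t, 0 ≤ t → W₂ x t ∈ Icc 0 B)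
    (hinv : ∀ u v, IsBddContinuous B u → IsBddContinuous B v →
      (∀ x t, 0 ≤ t → |u x t| ≤ W₁ x t) → (∀ x t, 0 ≤ t → |v x t| ≤ W₂ x t) → ∀ x t, 0 ≤ t →
        |picard d₁ c₁ f₁ g₁ u₀ u v x t| ≤ W₁ x t ∧ |picard d₂ c₂ f₂ g₂ v₀ u v x t| ≤ W₂ x t) :
    ∃ u v, IsBddContinuous B u ∧ IsBddContinuous B v ∧
      (∀ x, u x 0 = u₀ x) ∧ (∀ x, v x 0 = v₀ x) ∧
      (∀ x t, 0 ≤ t → |u x t| ≤ W₁ x t) ∧ (∀ x t, 0 ≤ t → |v x t| ≤ W₂ x t) ∧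
      IsMildSolution d₁ c₁ u (superpose f₁ u v) (superpose g₁ u v) ∧
      IsMildSolution d₂ c₂ v (superpose f₂ u v) (superpose g₂ u v) := by
  have hhalf : (0 : ℝ) < (1 / 2 : NNReal) := by simp
  obtain ⟨l, hl, hp₁, hp₂⟩ := ((Filter.eventually_ge_atTop (0 : ℝ)).and
    ((eventually_abs_picard_sub_le hd₁ c₁ B hf₁ hg₁ u₀ hhalf).and
      (eventually_abs_picard_sub_le hd₂ c₂ B hf₂ hg₂ v₀ hhalf))).exists
  obtain ⟨u, v, hu, hv, huW, hvW, hfix⟩ := exists_fixedPoint_of_bielecki_contraction hl hW₁ hW₂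
    (fun u v hu hv =>
      ⟨continuous_picard hd₁ c₁ hf₁.continuous hg₁.continuous hu₀ hu₀K hu hv,
        continuous_picard hd₂ c₂ hf₂.continuous hg₂.continuous hv₀ hv₀K hu hv⟩)
    hinv (NNReal.half_lt_self one_ne_zero) fun u v u' v' hu hv hu' hv' M hM hM' x t =>
      ⟨hp₁ u v u' v' hu hv hu' hv' M hM hM' x t, hp₂ u v u' v' hu hv hu' hv' M hM hM' x t⟩
  have hu0 (x : ℝ) : u x 0 = u₀ x := by simp [← (hfix x 0 le_rfl).1]
  have hv0 (x : ℝ) : v x 0 = v₀ x := by simp [← (hfix x 0 le_rfl).2]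
  refine ⟨u, v, hu, hv, hu0, hv0, huW, hvW, fun x t ht => ?_, fun x t ht => ?_⟩
  · simpa [mildFormula, picard, hu0] using (hfix x t ht).1.symm
  · simpa [mildFormula, picard, hv0] using (hfix x t ht).2.symm

end System

/-! ### Gaussian averages of weights -/

/-- The average of `q` around `a` at scale `σ` against the (unnormalized) `wideGaussian`; it
dominates every `hermiteAvg k σ`, and unlike them it is monotone. -/
def wideGaussianAvg (σ : ℝ) (q : ℝ → ℝ) (a : ℝ) : ℝ := ∫ z, wideGaussian z * q (a + σ * z)

/-- The majorants fed into `wideGaussianAvg`: continuous, nonnegative, bounded functions. -/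
structure IsMajorant (q : ℝ → ℝ) : Prop where
  continuous : Continuous q
  nonneg : ∀ y, 0 ≤ q y
  exists_le : ∃ B, ∀ y, q y ≤ B

section Majorant

variable {q q' : ℝ → ℝ} {b B : ℝ}

namespace IsMajorant

lemma const (hb : 0 ≤ b) : IsMajorant fun _ => b :=
  ⟨continuous_const, fun _ => hb, b, fun _ => le_rfl⟩

lemma add (h : IsMajorant q) (h' : IsMajorant q') : IsMajorant fun y => q y + q' y := by
  obtain ⟨B, hB⟩ := h.exists_le
  obtain ⟨B', hB'⟩ := h'.exists_le
  exact ⟨h.continuous.add h'.continuous, fun y => add_nonneg (h.nonneg y) (h'.nonneg y),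
    B + B', fun y => add_le_add (hB y) (hB' y)⟩

lemma mul (h : IsMajorant q) (h' : IsMajorant q') : IsMajorant fun y => q y * q' y := by
  obtain ⟨B, hB⟩ := h.exists_le
  obtain ⟨B', hB'⟩ := h'.exists_le
  exact ⟨h.continuous.mul h'.continuous, fun y => mul_nonneg (h.nonneg y) (h'.nonneg y), B * B',
    fun y => mul_le_mul (hB y) (hB' y) (h'.nonneg y) ((h.nonneg y).trans (hB y))⟩

lemma const_mul (h : IsMajorant q) (hb : 0 ≤ b) : IsMajorant fun y => b * q y := (const hb).mul h

lemma pow (h : IsMajorant q) (n : ℕ) : IsMajorant fun y => q y ^ n := by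
  induction n with
  | zero => simpa using const zero_le_one
  | succ n ih => simpa only [pow_succ] using ih.mul h

lemma comp_add_right (h : IsMajorant q) (b : ℝ) : IsMajorant fun y => q (y + b) := by
  obtain ⟨B, hB⟩ := h.exists_le
  exact ⟨h.continuous.comp (by fun_prop), fun y => h.nonneg _, B, fun y => hB _⟩

lemma integrable (h : IsMajorant q) (σ a : ℝ) :
    Integrable fun z => wideGaussian z * q (a + σ * z) := by
  obtain ⟨B, hB⟩ := h.exists_le
  exact integrable_wideGaussian_mul (h := fun z => q (a + σ * z)) (h.continuous.comp (by fun_prop))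
    fun z => by rw [abs_of_nonneg (h.nonneg _)]; exact hB _

end IsMajorant

lemma wideGaussianAvg_mono (h : IsMajorant q) (h' : IsMajorant q') (hle : ∀ y, q y ≤ q' y)
    (σ a : ℝ) : wideGaussianAvg σ q a ≤ wideGaussianAvg σ q' a :=
  integral_mono (h.integrable σ a) (h'.integrable σ a) fun z =>
    mul_le_mul_of_nonneg_left (hle _) (wideGaussian_pos z).le

lemma wideGaussianAvg_add (h : IsMajorant q) (h' : IsMajorant q') (σ a : ℝ) :
    wideGaussianAvg σ (fun y => q y + q' y) a = wideGaussianAvg σ q a + wideGaussianAvg σ q' a := by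
  simp only [wideGaussianAvg, mul_add]
  exact integral_add (h.integrable σ a) (h'.integrable σ a)

lemma wideGaussianAvg_const_mul (b : ℝ) (q : ℝ → ℝ) (σ a : ℝ) :
    wideGaussianAvg σ (fun y => b * q y) a = b * wideGaussianAvg σ q a := by
  simp only [wideGaussianAvg, mul_left_comm _ b, integral_const_mul]

lemma wideGaussianAvg_const (b σ a : ℝ) :
    wideGaussianAvg σ (fun _ => b) a = (∫ z, wideGaussian z) * b := by
  simp only [wideGaussianAvg, integral_mul_const]

lemma wideGaussianAvg_comp_add_right (q : ℝ → ℝ) (b σ a : ℝ) :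
    wideGaussianAvg σ (fun y => q (y + b)) a = wideGaussianAvg σ q (a + b) := by
  simp only [wideGaussianAvg, add_right_comm]

lemma wideGaussianAvg_exp (hB : 0 < B) (σ a : ℝ) :
    wideGaussianAvg σ (fun y => Real.exp (-y ^ 2 / B)) a =
      √(Real.pi / (1 / 4 + σ ^ 2 / B)) * Real.exp (-a ^ 2 / (B + 4 * σ ^ 2)) := by
  rw [← integral_gaussian (1 / 4 + σ ^ 2 / B), ← integral_mul_const,
    ← integral_add_right_eq_self _ (4 * a * σ / (B + 4 * σ ^ 2))]
  refine integral_congr_ae (.of_forall fun z => ?_)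
  simp only [wideGaussian, ← Real.exp_add]
  congr 1
  field_simp
  ring

end Majorant

/-! ### The pointwise weights -/

/-- The decay rate `(1 + t)^(-1/2)` of the heat kernel. -/
def decay (t : ℝ) : ℝ := (√(1 + t))⁻¹

/-- The algebraic part `(1 + |z| + √t)^(-r)` of the pointwise bound. -/
def algWeight (r z t : ℝ) : ℝ := (1 + |z| + √t) ^ (-r)

/-- The Gaussian part `e^{-z²/(M(1+t))} / √(1+t)` of the pointwise bound. -/
def gaussWeight (M z t : ℝ) : ℝ := Real.exp (-z ^ 2 / (M * (1 + t))) / √(1 + t)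

/-- The profile bounding each component, with `z` the coordinate moving with that component. -/
def weight (M r z t : ℝ) : ℝ := algWeight r z t + gaussWeight M z t

section Decay

variable {s t K : ℝ}

lemma decay_pos (ht : 0 ≤ t) : 0 < decay t := by unfold decay; positivity

lemma decay_le_one (ht : 0 ≤ t) : decay t ≤ 1 :=
  inv_le_one_of_one_le₀ (Real.one_le_sqrt.2 (by linarith))

lemma decay_sq (ht : 0 ≤ t) : decay t ^ 2 = (1 + t)⁻¹ := by
  rw [decay, inv_pow, Real.sq_sqrt (by linarith)]

lemma decay_le_mul_decay (hs : 0 ≤ s) (ht : 0 ≤ t) (hK : 0 ≤ K) (h : 1 + t ≤ K ^ 2 * (1 + s)) :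
    decay s ≤ K * decay t := by
  rw [decay, decay, ← div_eq_mul_inv, inv_eq_one_div, div_le_div_iff₀ (by positivity)
    (by positivity), one_mul]
  calc √(1 + t) ≤ √(K ^ 2 * (1 + s)) := Real.sqrt_le_sqrt h
    _ = K * √(1 + s) := by rw [Real.sqrt_mul (by positivity), Real.sqrt_sq hK]

lemma decay_anti (hs : 0 ≤ s) (hst : s ≤ t) : decay t ≤ decay s := by
  unfold decay
  gcongr

lemma one_add_rpow_neg_le_decay_cube {r : ℝ} (hr : 3 ≤ r) (ht : 0 ≤ t) :
    (1 + t) ^ (-r) ≤ decay t ^ 3 := by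
  have hsqrt : √(1 + t) ≤ 1 + t := Real.sqrt_le_iff.2 ⟨by linarith, by nlinarith⟩
  calc (1 + t) ^ (-r) ≤ (1 + t) ^ (-(3 : ℝ)) :=
        Real.rpow_le_rpow_of_exponent_le (by linarith) (by linarith)
    _ = (1 + t)⁻¹ ^ 3 := by rw [Real.rpow_neg (by positivity), inv_pow]; norm_cast
    _ ≤ decay t ^ 3 := by unfold decay; gcongr

end Decay

lemma rpow_neg_le_of_mul_le {c a b r : ℝ} (hr : 0 ≤ r) (hc : 0 < c) (ha : 0 < a) (h : c * a ≤ b) :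
    b ^ (-r) ≤ c ^ (-r) * a ^ (-r) := by
  rw [← Real.mul_rpow hc.le ha.le]
  exact Real.rpow_le_rpow_of_nonpos (by positivity) h (by linarith)

section Weight

variable {M r z t : ℝ}

lemma algWeight_nonneg (r z t : ℝ) : 0 ≤ algWeight r z t := by unfold algWeight; positivity

lemma gaussWeight_nonneg (M z t : ℝ) : 0 ≤ gaussWeight M z t := by unfold gaussWeight; positivity

lemma weight_nonneg (M r z t : ℝ) : 0 ≤ weight M r z t :=
  add_nonneg (algWeight_nonneg _ _ _) (gaussWeight_nonneg _ _ _)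

lemma algWeight_le_weight (M r z t : ℝ) : algWeight r z t ≤ weight M r z t :=
  le_add_of_nonneg_right (gaussWeight_nonneg _ _ _)

lemma gaussWeight_le_weight (M r z t : ℝ) : gaussWeight M z t ≤ weight M r z t :=
  le_add_of_nonneg_left (algWeight_nonneg _ _ _)

lemma gaussWeight_eq_decay_mul (M z t : ℝ) :
    gaussWeight M z t = decay t * Real.exp (-z ^ 2 / (M * (1 + t))) := by
  rw [gaussWeight, decay, div_eq_mul_inv, mul_comm]

lemma exp_neg_sq_div_le_one {B : ℝ} (hB : 0 ≤ B) (z : ℝ) : Real.exp (-z ^ 2 / B) ≤ 1 := by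
  rw [Real.exp_le_one_iff, neg_div, neg_nonpos]
  positivity

lemma exp_neg_sq_div_le_exp {x y A B : ℝ} (hA : 0 < A) (hB : 0 < B) (h : y ^ 2 * A ≤ x ^ 2 * B) :
    Real.exp (-x ^ 2 / A) ≤ Real.exp (-y ^ 2 / B) := by
  rw [Real.exp_le_exp, neg_div, neg_div, neg_le_neg_iff, div_le_div_iff₀ hB hA]
  exact h

lemma gaussWeight_le_decay (hM : 0 ≤ M) (z : ℝ) (ht : 0 ≤ t) : gaussWeight M z t ≤ decay t := by
  rw [gaussWeight_eq_decay_mul]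
  exact mul_le_of_le_one_right (decay_pos ht).le (exp_neg_sq_div_le_one (by positivity) z)

lemma sqrt_one_add_le (ht : 0 ≤ t) : √(1 + t) ≤ 1 + √t := by
  rw [Real.sqrt_le_left (by positivity)]
  nlinarith [Real.sq_sqrt ht, Real.sqrt_nonneg t]

lemma algWeight_le_decay_cube (hr : 3 ≤ r) (z : ℝ) (ht : 0 ≤ t) :
    algWeight r z t ≤ decay t ^ 3 := by
  have hone : 1 ≤ √(1 + t) := Real.one_le_sqrt.2 (by linarith)
  calc algWeight r z t ≤ √(1 + t) ^ (-r) := by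
        have := sqrt_one_add_le ht
        exact Real.rpow_le_rpow_of_nonpos (by positivity) (by linarith [abs_nonneg z])
          (by linarith)
    _ ≤ √(1 + t) ^ (-(3 : ℝ)) := Real.rpow_le_rpow_of_exponent_le hone (by linarith)
    _ = decay t ^ 3 := by rw [decay, Real.rpow_neg (by positivity), inv_pow]; norm_cast

lemma algWeight_le_decay (hr : 3 ≤ r) (z : ℝ) (ht : 0 ≤ t) : algWeight r z t ≤ decay t :=
  (algWeight_le_decay_cube hr z ht).trans
    (pow_le_of_le_one (decay_pos ht).le (decay_le_one ht) three_ne_zero)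

lemma weight_le_two_mul_decay (hM : 0 ≤ M) (hr : 3 ≤ r) (z : ℝ) (ht : 0 ≤ t) :
    weight M r z t ≤ 2 * decay t := by
  rw [two_mul]
  exact add_le_add (algWeight_le_decay hr z ht) (gaussWeight_le_decay hM z ht)

lemma algWeight_zero_eq (r z : ℝ) : algWeight r z 0 = (1 + |z|) ^ (-r) := by simp [algWeight]

lemma algWeight_le_algWeight_zero (hr : 0 ≤ r) (z t : ℝ) : algWeight r z t ≤ algWeight r z 0 := by
  rw [algWeight_zero_eq]
  exact Real.rpow_le_rpow_of_nonpos (by positivity) (by simp) (by linarith)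

lemma rpow_neg_half (r : ℝ) : (1 / 2 : ℝ) ^ (-r) = 2 ^ r := by
  rw [one_div, Real.inv_rpow zero_le_two, Real.rpow_neg zero_le_two, inv_inv]

lemma algWeight_zero_le (hr : 0 ≤ r) (h : √(1 + t) ≤ |z|) :
    algWeight r z 0 ≤ 2 ^ r * algWeight r z t := by
  have hsqrt : √t ≤ √(1 + t) := Real.sqrt_le_sqrt (by linarith)
  rw [algWeight_zero_eq, ← rpow_neg_half]
  exact rpow_neg_le_of_mul_le hr (by norm_num) (by positivity) (by linarith [abs_nonneg z])

lemma decay_le_mul_weight (hM : 1 ≤ M) (r : ℝ) (ht : 0 ≤ t) (h : |z| ≤ √(1 + t)) :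
    decay t ≤ Real.exp 1 * weight M r z t := by
  have hexponent : z ^ 2 / (M * (1 + t)) ≤ 1 := by
    rw [div_le_one (by positivity)]
    have hz : z ^ 2 ≤ 1 + t := sq_abs z ▸ (Real.le_sqrt (abs_nonneg z) (by linarith)).1 h
    nlinarith
  refine le_trans ?_ (mul_le_mul_of_nonneg_left (gaussWeight_le_weight M r z t) (Real.exp_pos 1).le)
  rw [gaussWeight_eq_decay_mul, mul_left_comm, ← Real.exp_add, neg_div]
  exact le_mul_of_one_le_right (decay_pos ht).le (Real.one_le_exp (by linarith))

lemma algWeight_le_one (hr : 0 ≤ r) (z t : ℝ) : algWeight r z t ≤ 1 :=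
  Real.rpow_le_one_of_one_le_of_nonpos
    (by rw [add_assoc]; exact le_add_of_nonneg_right (by positivity)) (by linarith)

lemma isMajorant_algWeight (hr : 0 ≤ r) (t : ℝ) : IsMajorant fun y => algWeight r y t where
  continuous := Continuous.rpow_const (by fun_prop) fun y => .inl (by positivity)
  nonneg y := algWeight_nonneg _ _ _
  exists_le := ⟨1, fun y => algWeight_le_one hr y t⟩

lemma isMajorant_gaussWeight (hM : 0 ≤ M) (ht : 0 ≤ t) : IsMajorant fun y => gaussWeight M y t where
  continuous := by unfold gaussWeight; fun_prop
  nonneg y := gaussWeight_nonneg _ _ _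
  exists_le := ⟨_, fun y => gaussWeight_le_decay hM y ht⟩

lemma isMajorant_weight (hM : 0 ≤ M) (hr : 0 ≤ r) (ht : 0 ≤ t) :
    IsMajorant fun y => weight M r y t :=
  (isMajorant_algWeight hr t).add (isMajorant_gaussWeight hM ht)

lemma isMajorant_exp_neg_sq_div {B : ℝ} (hB : 0 ≤ B) :
    IsMajorant fun y => Real.exp (-y ^ 2 / B) where
  continuous := by fun_prop
  nonneg y := (Real.exp_pos _).le
  exists_le := ⟨1, exp_neg_sq_div_le_one hB⟩

lemma integrable_exp_neg_sq_div {B : ℝ} (hB : 0 < B) :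
    Integrable fun z : ℝ => Real.exp (-z ^ 2 / B) := by
  simpa only [neg_mul, inv_mul_eq_div, neg_div] using integrable_exp_neg_mul_sq (inv_pos.2 hB)

lemma integral_exp_neg_sq_div (B : ℝ) : ∫ z : ℝ, Real.exp (-z ^ 2 / B) = √(Real.pi * B) := by
  simpa only [neg_mul, inv_mul_eq_div, neg_div, div_inv_eq_mul] using integral_gaussian B⁻¹

lemma integrable_algWeight_zero (hr : 1 < r) : Integrable fun y : ℝ => algWeight r y 0 := by
  simpa [algWeight] using
    integrable_one_add_norm (E := ℝ) (μ := volume) (r := r) (by simpa using hr)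

end Weight

/-! ### Heat flow of a single weight -/

section HeatFlowWeight

variable {M r d σ : ℝ} {q : ℝ → ℝ}

lemma sqrt_mul_exp_neg_div_le {a x : ℝ} (ha : 0 < a) (hx : 0 ≤ x) :
    √x * Real.exp (-x / a) ≤ 1 + a := by
  have hexp : 1 + x ≤ (1 + a) * Real.exp (x / a) := by
    have hadd := mul_le_mul_of_nonneg_left (Real.add_one_le_exp (x / a)) (by linarith : 0 ≤ 1 + a)
    have hmul : a * (x / a) = x := mul_div_cancel₀ _ ha.ne'
    have hdiv : 0 ≤ x / a := by positivity
    linarith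
  rw [neg_div, Real.exp_neg, ← div_eq_mul_inv, div_le_iff₀ (Real.exp_pos _)]
  exact (Real.sqrt_le_iff.2 ⟨by linarith, by nlinarith⟩ : √x ≤ 1 + x).trans hexp

lemma exists_decay_mul_wideGaussianAvg_exp_le (hM : 0 < M) (hd : 0 < d) :
    ∃ C, 0 ≤ C ∧ ∀ B s τ z : ℝ, 0 ≤ s → 0 < τ → 0 < B → B ≤ 2 * (M * (1 + s)) →
      decay s * wideGaussianAvg (heatWidth d τ) (fun y => Real.exp (-y ^ 2 / B)) z ≤
        C * (decay (s + τ) * Real.exp (-z ^ 2 / (B + 8 * d * τ))) := by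
  obtain ⟨c, hc0, hc1, hc2⟩ : ∃ c : ℝ, 0 < c ∧ c ≤ 1 / 4 ∧ c ≤ d / M :=
    ⟨min (1 / 4) (d / M), by positivity, min_le_left _ _, min_le_right _ _⟩
  refine ⟨√(Real.pi / c), Real.sqrt_nonneg _, fun B s τ z hs hτ hB0 hB => ?_⟩
  have hratio : c * (1 + s + τ) / (1 + s) ≤ 1 / 4 + 2 * d * τ / B := by
    have hτB : c * τ / (1 + s) ≤ 2 * d * τ / B := by
      rw [div_le_div_iff₀ (by positivity) hB0]
      calc c * τ * B ≤ c * τ * (2 * (M * (1 + s))) := by gcongr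
        _ = (c * M) * (2 * τ * (1 + s)) := by ring
        _ ≤ d * (2 * τ * (1 + s)) := by
          gcongr
          rwa [le_div_iff₀ hM] at hc2
        _ = 2 * d * τ * (1 + s) := by ring
    have hsplit : c * (1 + s + τ) / (1 + s) = c + c * τ / (1 + s) := by field_simp
    linarith
  rw [wideGaussianAvg_exp hB0, heatWidth_sq hd.le hτ.le,
    show B + 4 * (2 * d * τ) = B + 8 * d * τ by ring, ← mul_assoc, ← mul_assoc]
  refine mul_le_mul_of_nonneg_right ?_ (Real.exp_pos _).le
  have _ := Real.pi_pos
  rw [decay, decay, ← Real.sqrt_inv, ← Real.sqrt_inv, ← Real.sqrt_mul (by positivity),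
    ← Real.sqrt_mul (by positivity)]
  apply Real.sqrt_le_sqrt
  calc (1 + s)⁻¹ * (Real.pi / (1 / 4 + 2 * d * τ / B))
      ≤ (1 + s)⁻¹ * (Real.pi / (c * (1 + s + τ) / (1 + s))) := by gcongr
    _ = Real.pi / c * (1 + (s + τ))⁻¹ := by field_simp; ring

lemma integral_comp_add_mul_left (hσ : 0 < σ) (q : ℝ → ℝ) (z : ℝ) :
    ∫ ζ, q (z + σ * ζ) = σ⁻¹ * ∫ y, q y := by
  rw [Measure.integral_comp_mul_left (fun y => q (z + y)) σ, integral_add_left_eq_self q z,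
    abs_of_pos (by positivity), smul_eq_mul]

lemma integrable_comp_add_mul_left (hσ : 0 < σ) (hi : Integrable q) (z : ℝ) :
    Integrable fun ζ => q (z + σ * ζ) :=
  (hi.comp_add_left z).comp_mul_left' hσ.ne'

lemma wideGaussian_le_one (z : ℝ) : wideGaussian z ≤ 1 := exp_neg_sq_div_le_one zero_le_four z

lemma wideGaussianAvg_le_inv_mul_integral (hσ : 0 < σ) (hq : IsMajorant q) (hi : Integrable q)
    (z : ℝ) : wideGaussianAvg σ q z ≤ σ⁻¹ * ∫ y, q y := by
  rw [← integral_comp_add_mul_left hσ q z]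
  exact integral_mono (hq.integrable σ z) (integrable_comp_add_mul_left hσ hi z) fun ζ =>
    mul_le_of_le_one_left (hq.nonneg _) (wideGaussian_le_one ζ)

/-- Either `z + σ * ζ` is still as far out as `z / 2`, or `σ * ζ` is as large as `z / 2`. -/
lemma wideGaussian_mul_algWeight_zero_le (hr : 0 ≤ r) (hσ : 0 < σ) (z ζ : ℝ) :
    wideGaussian ζ * algWeight r (z + σ * ζ) 0 ≤
      2 ^ r * algWeight r z 0 * wideGaussian ζ +
        Real.exp (-z ^ 2 / (16 * σ ^ 2)) * algWeight r (z + σ * ζ) 0 := by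
  have hE := (wideGaussian_pos ζ).le
  have hz := algWeight_nonneg r z 0
  have hζ := algWeight_nonneg r (z + σ * ζ) 0
  rcases le_total (|z| / 2) |z + σ * ζ| with h | h
  · refine le_add_of_le_of_nonneg ?_ (by positivity)
    rw [mul_comm]
    gcongr
    rw [algWeight_zero_eq, algWeight_zero_eq, ← rpow_neg_half]
    exact rpow_neg_le_of_mul_le hr (by norm_num) (by positivity) (by linarith)
  · refine le_add_of_nonneg_of_le (by positivity) (mul_le_mul_of_nonneg_right ?_ hζ)
    refine exp_neg_sq_div_le_exp zero_lt_four (by positivity) ?_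
    have hhalf : |z| / 2 ≤ |σ * ζ| := by
      have := abs_sub_abs_le_abs_sub z (z + σ * ζ)
      rw [sub_add_cancel_left, abs_neg] at this
      linarith
    have hsq := pow_le_pow_left₀ (by positivity) hhalf 2
    rw [div_pow, sq_abs, sq_abs, mul_pow] at hsq
    linarith

lemma wideGaussianAvg_algWeight_zero_le (hr : 1 < r) (hσ : 0 < σ) (z : ℝ) :
    wideGaussianAvg σ (fun y => algWeight r y 0) z ≤
      2 ^ r * (∫ ζ, wideGaussian ζ) * algWeight r z 0 +
        σ⁻¹ * (∫ y, algWeight r y 0) * Real.exp (-z ^ 2 / (16 * σ ^ 2)) := by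
  have hr0 : 0 ≤ r := by linarith
  have hnear := integrable_wideGaussian.const_mul (2 ^ r * algWeight r z 0)
  have hfar := (integrable_comp_add_mul_left hσ (integrable_algWeight_zero hr) z).const_mul
    (Real.exp (-z ^ 2 / (16 * σ ^ 2)))
  calc wideGaussianAvg σ (fun y => algWeight r y 0) z
      ≤ ∫ ζ, (2 ^ r * algWeight r z 0 * wideGaussian ζ +
          Real.exp (-z ^ 2 / (16 * σ ^ 2)) * algWeight r (z + σ * ζ) 0) :=
        integral_mono ((isMajorant_algWeight hr0 0).integrable σ z) (hnear.add hfar)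
          (wideGaussian_mul_algWeight_zero_le hr0 hσ z)
    _ = _ := by
        rw [integral_add hnear hfar, integral_const_mul, integral_const_mul,
          integral_comp_add_mul_left hσ (fun y => algWeight r y 0) z]
        ring

lemma inv_heatWidth (d : ℝ) {τ : ℝ} (hτ : 0 ≤ τ) : (heatWidth d τ)⁻¹ = (√(2 * d))⁻¹ * (√τ)⁻¹ := by
  rw [heatWidth, Real.sqrt_mul' _ hτ, mul_inv]

/-- The constant in `wideGaussianAvg_algWeight_le_decay`. -/
def algWeightDecayConst (d r : ℝ) : ℝ :=
  2 * ((∫ ζ, wideGaussian ζ) + (√(2 * d))⁻¹ * ∫ y, algWeight r y 0)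

lemma integral_wideGaussian_nonneg : 0 ≤ ∫ ζ, wideGaussian ζ :=
  integral_nonneg fun ζ => (wideGaussian_pos ζ).le

lemma integral_algWeight_zero_nonneg (r : ℝ) : 0 ≤ ∫ y, algWeight r y 0 :=
  integral_nonneg fun y => algWeight_nonneg r y 0

lemma wideGaussianAvg_algWeight_le_zero (hr : 0 ≤ r) (s σ z : ℝ) :
    wideGaussianAvg σ (fun y => algWeight r y s) z ≤
      wideGaussianAvg σ (fun y => algWeight r y 0) z :=
  wideGaussianAvg_mono (isMajorant_algWeight hr s) (isMajorant_algWeight hr 0)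
    (fun y => algWeight_le_algWeight_zero hr y s) σ z

lemma wideGaussianAvg_algWeight_le_decay (hr : 3 ≤ r) (hd : 0 < d) {s τ : ℝ} (hs : 0 ≤ s)
    (hτ : 0 < τ) (z : ℝ) :
    wideGaussianAvg (heatWidth d τ) (fun y => algWeight r y s) z ≤
      algWeightDecayConst d r * decay (s + τ) := by
  have hr0 : 0 ≤ r := by linarith
  have hI := integral_wideGaussian_nonneg
  have hJ := integral_algWeight_zero_nonneg r
  have hdecay := (decay_pos (add_nonneg hs hτ.le)).le
  by_cases hτs : τ ≤ s ∨ τ ≤ 1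
  · have hle : decay s ≤ 2 * decay (s + τ) :=
      decay_le_mul_decay hs (by positivity) zero_le_two (by rcases hτs with h | h <;> linarith)
    calc wideGaussianAvg (heatWidth d τ) (fun y => algWeight r y s) z
        ≤ wideGaussianAvg (heatWidth d τ) (fun _ => decay s) z :=
          wideGaussianAvg_mono (isMajorant_algWeight hr0 s) (.const (decay_pos hs).le)
            (fun y => algWeight_le_decay hr y hs) _ _
      _ ≤ (∫ ζ, wideGaussian ζ) * (2 * decay (s + τ)) := by rw [wideGaussianAvg_const]; gcongr
      _ ≤ algWeightDecayConst d r * decay (s + τ) := by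
          rw [algWeightDecayConst, mul_left_comm, mul_assoc]
          gcongr
          exact le_add_of_nonneg_right (by positivity)
  · have hle : (√τ)⁻¹ ≤ 2 * decay (s + τ) := by
      rw [decay, ← div_eq_mul_inv, inv_eq_one_div, div_le_div_iff₀ (by positivity) (by positivity),
        one_mul, Real.sqrt_le_left (by positivity), mul_pow, Real.sq_sqrt hτ.le]
      push Not at hτs
      linarith
    calc wideGaussianAvg (heatWidth d τ) (fun y => algWeight r y s) z
        ≤ (heatWidth d τ)⁻¹ * ∫ y, algWeight r y 0 :=
          (wideGaussianAvg_algWeight_le_zero hr0 s _ z).trans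
            (wideGaussianAvg_le_inv_mul_integral (heatWidth_pos hd hτ) (isMajorant_algWeight hr0 0)
              (integrable_algWeight_zero (by linarith)) z)
      _ = (√(2 * d))⁻¹ * (∫ y, algWeight r y 0) * (√τ)⁻¹ := by rw [inv_heatWidth d hτ.le]; ring
      _ ≤ (√(2 * d))⁻¹ * (∫ y, algWeight r y 0) * (2 * decay (s + τ)) := by gcongr
      _ ≤ algWeightDecayConst d r * decay (s + τ) := by
          rw [algWeightDecayConst, mul_left_comm, mul_assoc 2]
          gcongr
          exact le_add_of_nonneg_left hI

/-- Half of the Gaussian exponent pays for the singular factor `τ^(-1/2)`, the other half is the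
decay in `z`. -/
lemma inv_sqrt_mul_exp_le_gaussWeight (hd : 0 < d) (hMd : 64 * d ≤ M) {s τ z : ℝ} (hs : 0 ≤ s)
    (hτ : 0 < τ) (hz : 1 + (s + τ) ≤ z ^ 2) :
    (√τ)⁻¹ * Real.exp (-z ^ 2 / (16 * heatWidth d τ ^ 2)) ≤
      (1 + 64 * d) * gaussWeight M z (s + τ) := by
  have hM : 0 < M := by linarith
  have hhalf : Real.exp (-z ^ 2 / (16 * heatWidth d τ ^ 2)) =
      Real.exp (-z ^ 2 / (64 * d * τ)) * Real.exp (-z ^ 2 / (64 * d * τ)) := by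
    rw [← Real.exp_add, heatWidth_sq hd.le hτ.le]
    congr 1
    field_simp
    ring
  have hdecay : Real.exp (-z ^ 2 / (64 * d * τ)) ≤ Real.exp (-z ^ 2 / (M * (1 + (s + τ)))) := by
    refine exp_neg_sq_div_le_exp (by positivity) (by positivity) ?_
    gcongr
    linarith
  have hsingular : Real.exp (-z ^ 2 / (64 * d * τ)) ≤
      Real.exp (-((1 + (s + τ)) / τ) / (64 * d)) := by
    rw [Real.exp_le_exp, neg_div, neg_div, neg_le_neg_iff, div_div, mul_comm τ]
    gcongr
  have hsqrt : (√τ)⁻¹ * Real.exp (-((1 + (s + τ)) / τ) / (64 * d)) ≤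
      (1 + 64 * d) * decay (s + τ) := by
    have := sqrt_mul_exp_neg_div_le (a := 64 * d) (x := (1 + (s + τ)) / τ) (by positivity)
      (by positivity)
    rw [Real.sqrt_div (by positivity)] at this
    rw [decay, ← div_eq_mul_inv (1 + 64 * d), le_div_iff₀ (by positivity)]
    exact (by ring : _ = _).trans_le this
  rw [hhalf, gaussWeight_eq_decay_mul, ← mul_assoc, ← mul_assoc]
  exact mul_le_mul ((mul_le_mul_of_nonneg_left hsingular (by positivity)).trans hsqrt) hdecay
    (Real.exp_pos _).le (mul_nonneg (by positivity) (decay_pos (by positivity)).le)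

/-- The constant in `wideGaussianAvg_algWeight_le_weight_of_far`. -/
def algWeightFarConst (d r : ℝ) : ℝ :=
  2 ^ r * (∫ ζ, wideGaussian ζ) * 2 ^ r +
    (√(2 * d))⁻¹ * (∫ y, algWeight r y 0) * (1 + 64 * d)

lemma wideGaussianAvg_algWeight_le_weight_of_far (hr : 1 < r) (hd : 0 < d) (hMd : 64 * d ≤ M)
    {s τ z : ℝ} (hs : 0 ≤ s) (hτ : 0 < τ) (hz : √(1 + (s + τ)) ≤ |z|) :
    wideGaussianAvg (heatWidth d τ) (fun y => algWeight r y s) z ≤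
      algWeightFarConst d r * weight M r z (s + τ) := by
  have hr0 : 0 ≤ r := by linarith
  have hI := integral_wideGaussian_nonneg
  have hJ := integral_algWeight_zero_nonneg r
  have hzsq : 1 + (s + τ) ≤ z ^ 2 := by rwa [← sq_abs, ← Real.sqrt_le_left (abs_nonneg z)]
  have halg : algWeight r z 0 ≤ 2 ^ r * weight M r z (s + τ) :=
    (algWeight_zero_le hr0 hz).trans (by gcongr; exact algWeight_le_weight _ _ _ _)
  have hgauss : (√τ)⁻¹ * Real.exp (-z ^ 2 / (16 * heatWidth d τ ^ 2)) ≤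
      (1 + 64 * d) * weight M r z (s + τ) :=
    (inv_sqrt_mul_exp_le_gaussWeight hd hMd hs hτ hzsq).trans
      (mul_le_mul_of_nonneg_left (gaussWeight_le_weight _ _ _ _) (by positivity))
  calc wideGaussianAvg (heatWidth d τ) (fun y => algWeight r y s) z
      ≤ 2 ^ r * (∫ ζ, wideGaussian ζ) * algWeight r z 0 + (heatWidth d τ)⁻¹ *
          (∫ y, algWeight r y 0) * Real.exp (-z ^ 2 / (16 * heatWidth d τ ^ 2)) :=
        (wideGaussianAvg_algWeight_le_zero hr0 s _ z).trans
          (wideGaussianAvg_algWeight_zero_le hr (heatWidth_pos hd hτ) z)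
    _ = 2 ^ r * (∫ ζ, wideGaussian ζ) * algWeight r z 0 + (√(2 * d))⁻¹ *
          (∫ y, algWeight r y 0) * ((√τ)⁻¹ * Real.exp (-z ^ 2 / (16 * heatWidth d τ ^ 2))) := by
        rw [inv_heatWidth d hτ.le]; ring
    _ ≤ 2 ^ r * (∫ ζ, wideGaussian ζ) * (2 ^ r * weight M r z (s + τ)) + (√(2 * d))⁻¹ *
          (∫ y, algWeight r y 0) * ((1 + 64 * d) * weight M r z (s + τ)) := by
        exact add_le_add (mul_le_mul_of_nonneg_left halg (by positivity))
          (mul_le_mul_of_nonneg_left hgauss (by positivity))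
    _ = algWeightFarConst d r * weight M r z (s + τ) := by unfold algWeightFarConst; ring

lemma exists_wideGaussianAvg_algWeight_le (hM : 1 ≤ M) (hr : 3 ≤ r) (hd : 0 < d)
    (hMd : 64 * d ≤ M) :
    ∃ C, 0 ≤ C ∧ ∀ s τ z : ℝ, 0 ≤ s → 0 < τ →
      wideGaussianAvg (heatWidth d τ) (fun y => algWeight r y s) z ≤ C * weight M r z (s + τ) := by
  have hI := integral_wideGaussian_nonneg
  have hJ := integral_algWeight_zero_nonneg r
  have hnear : 0 ≤ algWeightDecayConst d r := by unfold algWeightDecayConst; positivity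
  have hfar : 0 ≤ algWeightFarConst d r := by unfold algWeightFarConst; positivity
  refine ⟨algWeightDecayConst d r * Real.exp 1 + algWeightFarConst d r, by positivity,
    fun s τ z hs hτ => ?_⟩
  have hw := weight_nonneg M r z (s + τ)
  rw [add_mul]
  rcases le_total |z| √(1 + (s + τ)) with hz | hz
  · refine le_add_of_le_of_nonneg ((wideGaussianAvg_algWeight_le_decay hr hd hs hτ z).trans ?_)
      (by positivity)
    rw [mul_assoc]
    exact mul_le_mul_of_nonneg_left (decay_le_mul_weight hM r (by positivity) hz) hnear
  · exact le_add_of_nonneg_of_le (by positivity)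
      (wideGaussianAvg_algWeight_le_weight_of_far (by linarith) hd hMd hs hτ hz)

lemma exists_wideGaussianAvg_gaussWeight_le (hd : 0 < d) (hMd : 64 * d ≤ M) :
    ∃ C, 0 ≤ C ∧ ∀ s τ z : ℝ, 0 ≤ s → 0 < τ →
      wideGaussianAvg (heatWidth d τ) (fun y => gaussWeight M y s) z ≤
        C * gaussWeight M z (s + τ) := by
  have hM : 0 < M := by linarith
  obtain ⟨C, hC, hexp⟩ := exists_decay_mul_wideGaussianAvg_exp_le hM hd
  refine ⟨C, hC, fun s τ z hs hτ => ?_⟩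
  simp only [gaussWeight_eq_decay_mul, wideGaussianAvg_const_mul]
  refine (hexp (M * (1 + s)) s τ z hs hτ (by positivity) (by nlinarith)).trans ?_
  have hdecay := (decay_pos (add_nonneg hs hτ.le)).le
  gcongr C * (_ * ?_)
  refine exp_neg_sq_div_le_exp (by positivity) (by positivity) ?_
  gcongr
  nlinarith

lemma exists_wideGaussianAvg_weight_le (hM : 1 ≤ M) (hr : 3 ≤ r) (hd : 0 < d) (hMd : 64 * d ≤ M) :
    ∃ C, 0 ≤ C ∧ ∀ s τ z : ℝ, 0 ≤ s → 0 < τ →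
      wideGaussianAvg (heatWidth d τ) (fun y => weight M r y s) z ≤ C * weight M r z (s + τ) := by
  obtain ⟨C₁, hC₁, halg⟩ := exists_wideGaussianAvg_algWeight_le hM hr hd hMd
  obtain ⟨C₂, hC₂, hgauss⟩ := exists_wideGaussianAvg_gaussWeight_le hd hMd
  refine ⟨C₁ + C₂, by positivity, fun s τ z hs hτ => ?_⟩
  calc wideGaussianAvg (heatWidth d τ) (fun y => weight M r y s) z
      = wideGaussianAvg (heatWidth d τ) (fun y => algWeight r y s) z +
          wideGaussianAvg (heatWidth d τ) (fun y => gaussWeight M y s) z :=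
        wideGaussianAvg_add (isMajorant_algWeight (by linarith) s)
          (isMajorant_gaussWeight (by linarith) hs) _ _
    _ ≤ C₁ * weight M r z (s + τ) + C₂ * weight M r z (s + τ) :=
        add_le_add (halg s τ z hs hτ) ((hgauss s τ z hs hτ).trans
          (mul_le_mul_of_nonneg_left (gaussWeight_le_weight _ _ _ _) hC₂))
    _ = (C₁ + C₂) * weight M r z (s + τ) := by ring

end HeatFlowWeight

/-! ### Products of weights moving apart -/

section Product

variable {M r γ s τ y : ℝ}

/-- The constant in `one_add_le_separationConst_mul`. -/
def separationConst (M γ : ℝ) : ℝ := 3 + 256 * M / γ ^ 2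

lemma one_add_le_separationConst_mul {m : ℝ} (hM : 0 < M) (hγ : γ ≠ 0) (hs : 0 ≤ s) (hm : 0 ≤ m)
    (hms : m ≤ 1 + s) (hy : |γ| * s / 2 ≤ |y|) :
    1 + m ≤ separationConst M γ * (1 + y ^ 2 * m / (16 * M * (1 + s) ^ 2)) := by
  have hK : 0 ≤ 256 * M / γ ^ 2 := by positivity
  have hX : 0 ≤ y ^ 2 * m / (16 * M * (1 + s) ^ 2) := by positivity
  unfold separationConst
  rcases le_total s 1 with h | h
  · nlinarith
  · have hysq : γ ^ 2 * (1 + s) ^ 2 ≤ 16 * y ^ 2 := by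
      have hsq := pow_le_pow_left₀ (by positivity) hy 2
      rw [div_pow, mul_pow, sq_abs, sq_abs] at hsq
      have : γ ^ 2 * (1 + s) ^ 2 ≤ γ ^ 2 * (4 * s ^ 2) := by gcongr; nlinarith
      linarith
    have hmX : m ≤ 256 * M / γ ^ 2 * (y ^ 2 * m / (16 * M * (1 + s) ^ 2)) := by
      rw [div_mul_div_comm, le_div_iff₀ (by positivity)]
      calc m * (γ ^ 2 * (16 * M * (1 + s) ^ 2)) = 16 * M * m * (γ ^ 2 * (1 + s) ^ 2) := by ring
        _ ≤ 16 * M * m * (16 * y ^ 2) := by gcongr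
        _ = 256 * M * (y ^ 2 * m) := by ring
    linarith

lemma one_le_separationConst (hM : 0 ≤ M) : 1 ≤ separationConst M γ := by
  have : 0 ≤ 256 * M / γ ^ 2 := by positivity
  unfold separationConst
  linarith

lemma gaussWeight_le_decay_cube_of_far (hM : 0 < M) (hγ : γ ≠ 0) (hs : 0 ≤ s)
    (hy : |γ| * s / 2 ≤ |y|) : gaussWeight M y s ≤ separationConst M γ * decay s ^ 3 := by
  have hK := one_le_separationConst (γ := γ) hM.le
  have hexp : 1 + s ≤ separationConst M γ * Real.exp (y ^ 2 / (M * (1 + s))) := by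
    calc 1 + s ≤ 1 + (1 + s) := by linarith
      _ ≤ separationConst M γ * (1 + y ^ 2 * (1 + s) / (16 * M * (1 + s) ^ 2)) :=
        one_add_le_separationConst_mul hM hγ hs (by positivity) le_rfl hy
      _ = separationConst M γ * (y ^ 2 / (M * (1 + s)) / 16 + 1) := by field_simp; ring
      _ ≤ separationConst M γ * Real.exp (y ^ 2 / (M * (1 + s))) := by
        refine mul_le_mul_of_nonneg_left ?_ (by linarith)
        have : 0 ≤ y ^ 2 / (M * (1 + s)) := by positivity
        linarith [Real.add_one_le_exp (y ^ 2 / (M * (1 + s)))]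
  rw [gaussWeight_eq_decay_mul, pow_succ' _ 2, mul_left_comm, decay_sq hs, neg_div, Real.exp_neg]
  have hdecay := (decay_pos hs).le
  gcongr
  rwa [inv_eq_one_div, ← div_eq_mul_inv, div_le_div_iff₀ (Real.exp_pos _) (by positivity), one_mul]

lemma exists_pos_le_one_le {a : ℝ} (ha : 0 < a) : ∃ c : ℝ, 0 < c ∧ c ≤ 1 ∧ c ≤ a :=
  ⟨min 1 a, by positivity, min_le_left _ _, min_le_right _ _⟩

lemma exists_algWeight_le_rpow_of_far (hr : 0 ≤ r) (hγ : γ ≠ 0) :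
    ∃ C, 0 ≤ C ∧ ∀ s y : ℝ, 0 ≤ s → |γ| * s / 2 ≤ |y| →
      algWeight r y s ≤ C * (1 + s) ^ (-r) := by
  obtain ⟨c, hc0, hc1, hc2⟩ := exists_pos_le_one_le (a := |γ| / 2) (by positivity)
  refine ⟨c ^ (-r), by positivity, fun s y hs hy => ?_⟩
  refine rpow_neg_le_of_mul_le hr hc0 (by positivity) ?_
  have hsqrt := Real.sqrt_nonneg s
  nlinarith

/-- A slight widening of `gaussWeight M y s`: it is dominated as soon as a fraction of the Gaussian
exponent is given up, and time `τ` of heat flow still takes it below `gaussWeight M z (s + τ)`. -/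
def widenedGaussWeight (M s τ y : ℝ) : ℝ :=
  decay s * Real.exp (-y ^ 2 / (M * (1 + s) + M / 4 * min (1 + s) τ))

lemma widenedGaussWeight_nonneg (hs : 0 ≤ s) (M τ y : ℝ) : 0 ≤ widenedGaussWeight M s τ y :=
  mul_nonneg (decay_pos hs).le (Real.exp_pos _).le

lemma exp_neg_sq_div_le_exp_mul_exp_widened (hM : 0 < M) (hs : 0 ≤ s) {m : ℝ} (hm : 0 ≤ m)
    (hms : m ≤ 1 + s) (y : ℝ) :
    Real.exp (-y ^ 2 / (M * (1 + s))) ≤ Real.exp (-(y ^ 2 * m / (8 * M * (1 + s) ^ 2))) *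
      Real.exp (-y ^ 2 / (M * (1 + s) + M / 4 * m)) := by
  rw [← Real.exp_add, Real.exp_le_exp]
  have hgap : y ^ 2 / (M * (1 + s)) - y ^ 2 / (M * (1 + s) + M / 4 * m) =
      y ^ 2 * m / (4 * M * (1 + s) * (1 + s + m / 4)) := by
    field_simp
    ring
  have hle : y ^ 2 * m / (8 * M * (1 + s) ^ 2) ≤
      y ^ 2 * m / (4 * M * (1 + s) * (1 + s + m / 4)) := by
    refine div_le_div_of_nonneg_left (by positivity) (by positivity) ?_
    calc 4 * M * (1 + s) * (1 + s + m / 4) ≤ 4 * M * (1 + s) * (2 * (1 + s)) := by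
          gcongr
          linarith
      _ = 8 * M * (1 + s) ^ 2 := by ring
  rw [neg_div, neg_div]
  linarith

lemma inv_one_add_min_sq_le_decay_cube (hs : 0 ≤ s) (hτ : 0 ≤ τ) :
    ((1 + min (1 + s) τ) ^ 2)⁻¹ ≤ decay s ^ 3 + decay τ ^ 3 := by
  have hm : 0 ≤ min (1 + s) τ := le_min (by linarith) hτ
  have hcube : ((1 + min (1 + s) τ) ^ 2)⁻¹ ≤ decay (min (1 + s) τ) ^ 3 := by
    rw [← inv_pow, ← decay_sq hm, ← pow_mul]
    exact pow_le_pow_of_le_one (decay_pos hm).le (decay_le_one hm) (by norm_num)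
  have hdecay_s := pow_nonneg (decay_pos hs).le 3
  have hdecay_τ := pow_nonneg (decay_pos hτ).le 3
  refine hcube.trans ?_
  rcases le_total (1 + s) τ with h | h
  · rw [min_eq_left h]
    refine le_add_of_le_of_nonneg ?_ hdecay_τ
    exact pow_le_pow_left₀ (decay_pos (by linarith)).le (decay_anti hs (by linarith)) 3
  · rw [min_eq_right h]
    exact le_add_of_nonneg_left hdecay_s

lemma exp_neg_le_separationConst_sq_mul_decay_cube (hM : 0 < M) (hγ : γ ≠ 0) (hs : 0 ≤ s)
    (hτ : 0 ≤ τ) (hy : |γ| * s / 2 ≤ |y|) :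
    Real.exp (-(y ^ 2 * min (1 + s) τ / (8 * M * (1 + s) ^ 2))) ≤
      separationConst M γ ^ 2 * (decay s ^ 3 + decay τ ^ 3) := by
  have hm : 0 ≤ min (1 + s) τ := le_min (by linarith) hτ
  set X := y ^ 2 * min (1 + s) τ / (8 * M * (1 + s) ^ 2) with hX
  have hK := one_le_separationConst (γ := γ) hM.le
  have hhalf : 1 + min (1 + s) τ ≤ separationConst M γ * Real.exp (X / 2) := by
    refine (one_add_le_separationConst_mul hM hγ hs hm (min_le_left _ _) hy).trans ?_
    have hXhalf : y ^ 2 * min (1 + s) τ / (16 * M * (1 + s) ^ 2) = X / 2 := by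
      rw [hX]
      field_simp
      ring
    rw [hXhalf, add_comm 1]
    gcongr
    exact Real.add_one_le_exp _
  have hsq : (1 + min (1 + s) τ) ^ 2 ≤ separationConst M γ ^ 2 * Real.exp X := by
    rw [show Real.exp X = Real.exp (X / 2) ^ 2 by rw [← Real.exp_nat_mul]; congr 1; push_cast; ring,
      ← mul_pow]
    exact pow_le_pow_left₀ (by positivity) hhalf 2
  calc Real.exp (-X) ≤ separationConst M γ ^ 2 * ((1 + min (1 + s) τ) ^ 2)⁻¹ := by
        rwa [Real.exp_neg, ← div_eq_mul_inv, inv_eq_one_div,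
          div_le_div_iff₀ (Real.exp_pos _) (by positivity), one_mul]
    _ ≤ _ := by gcongr; exact inv_one_add_min_sq_le_decay_cube hs hτ

lemma gaussWeight_le_widenedGaussWeight_of_far (hM : 0 < M) (hγ : γ ≠ 0) (hs : 0 ≤ s) (hτ : 0 ≤ τ)
    (hy : |γ| * s / 2 ≤ |y|) :
    gaussWeight M y s ≤ separationConst M γ ^ 2 *
      ((decay s ^ 3 + decay τ ^ 3) * widenedGaussWeight M s τ y) := by
  have hm : 0 ≤ min (1 + s) τ := le_min (by linarith) hτ
  have hdecay := (decay_pos hs).le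
  calc gaussWeight M y s = decay s * Real.exp (-y ^ 2 / (M * (1 + s))) :=
        gaussWeight_eq_decay_mul M y s
    _ ≤ decay s * (Real.exp (-(y ^ 2 * min (1 + s) τ / (8 * M * (1 + s) ^ 2))) *
          Real.exp (-y ^ 2 / (M * (1 + s) + M / 4 * min (1 + s) τ))) := by
        gcongr
        exact exp_neg_sq_div_le_exp_mul_exp_widened hM hs hm (min_le_left _ _) y
    _ ≤ decay s * (separationConst M γ ^ 2 * (decay s ^ 3 + decay τ ^ 3) *
          Real.exp (-y ^ 2 / (M * (1 + s) + M / 4 * min (1 + s) τ))) := by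
        gcongr
        exact exp_neg_le_separationConst_sq_mul_decay_cube hM hγ hs hτ hy
    _ = _ := by unfold widenedGaussWeight; ring

lemma weight_mul_gaussWeight_le_of_near (hM : 0 < M) (hγ : γ ≠ 0) (hs : 0 ≤ s)
    (hy : |y| ≤ |γ| * s / 2) : weight M r y s * gaussWeight M (y + γ * s) s ≤
      separationConst M γ * (decay s ^ 3 * weight M r y s) := by
  have hfar : |γ| * s / 2 ≤ |y + γ * s| := by
    have := abs_sub_abs_le_abs_sub (γ * s) (-y)
    rw [abs_neg, abs_mul, abs_of_nonneg hs, sub_neg_eq_add, add_comm (γ * s)] at this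
    linarith
  calc weight M r y s * gaussWeight M (y + γ * s) s
      ≤ weight M r y s * (separationConst M γ * decay s ^ 3) :=
        mul_le_mul_of_nonneg_left (gaussWeight_le_decay_cube_of_far hM hγ hs hfar)
          (weight_nonneg M r y s)
    _ = _ := by ring

lemma exists_weight_mul_gaussWeight_le_of_far (hM : 0 < M) (hr : 0 ≤ r) (hγ : γ ≠ 0) :
    ∃ C, 0 ≤ C ∧ ∀ s τ y : ℝ, 0 ≤ s → 0 ≤ τ → |γ| * s / 2 ≤ |y| →
      weight M r y s * gaussWeight M (y + γ * s) s ≤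
        C * ((1 + s) ^ (-r) * gaussWeight M (y + γ * s) s) + separationConst M γ ^ 2 *
          ((decay s ^ 3 + decay τ ^ 3) * widenedGaussWeight M s τ y) := by
  obtain ⟨C, hC, halg⟩ := exists_algWeight_le_rpow_of_far hr hγ
  refine ⟨C, hC, fun s τ y hs hτ hy => ?_⟩
  have hone := (gaussWeight_le_decay hM.le (y + γ * s) hs).trans (decay_le_one hs)
  rw [weight, add_mul, ← mul_assoc C]
  exact add_le_add (mul_le_mul_of_nonneg_right (halg s y hs hy) (gaussWeight_nonneg _ _ _))
    ((mul_le_of_le_one_right (gaussWeight_nonneg _ _ _) hone).trans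
      (gaussWeight_le_widenedGaussWeight_of_far hM hγ hs hτ hy))

/-- Two points `y` and `y + γ * s` cannot both be within `|γ| * s / 2` of the origin, so one of the
two weights is away from its centre. -/
lemma exists_weight_mul_weight_le (hM : 0 < M) (hr : 3 ≤ r) (hγ : γ ≠ 0) :
    ∃ C, 0 ≤ C ∧ ∀ s τ y : ℝ, 0 ≤ s → 0 ≤ τ → weight M r y s * weight M r (y + γ * s) s ≤
      C * (decay s ^ 3 * weight M r y s + (1 + s) ^ (-r) * gaussWeight M (y + γ * s) s +
        (decay s ^ 3 + decay τ ^ 3) * widenedGaussWeight M s τ y) := by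
  obtain ⟨C, hC, hfar⟩ := exists_weight_mul_gaussWeight_le_of_far (r := r) hM (by linarith) hγ
  set K := separationConst M γ
  have hK : 1 ≤ K := one_le_separationConst hM.le
  refine ⟨1 + K + C + K ^ 2, by positivity, fun s τ y hs hτ => ?_⟩
  have hw := weight_nonneg M r y s
  have hG := gaussWeight_nonneg M (y + γ * s) s
  have hdecay_s := pow_nonneg (decay_pos hs).le 3
  have hdecay_τ := pow_nonneg (decay_pos hτ).le 3
  have hwide := widenedGaussWeight_nonneg hs M τ y
  set S := decay s ^ 3 * weight M r y s with hS
  set P := (1 + s) ^ (-r) * gaussWeight M (y + γ * s) s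
  set Z := (decay s ^ 3 + decay τ ^ 3) * widenedGaussWeight M s τ y
  have hS0 : 0 ≤ S := by positivity
  have hP0 : 0 ≤ P := by positivity
  have hZ0 : 0 ≤ Z := by positivity
  have halg : weight M r y s * algWeight r (y + γ * s) s ≤ S := by
    rw [hS, mul_comm (decay s ^ 3)]
    exact mul_le_mul_of_nonneg_left (algWeight_le_decay_cube hr _ hs) hw
  have hgauss : weight M r y s * gaussWeight M (y + γ * s) s ≤ K * S + C * P + K ^ 2 * Z := by
    rcases le_total (|γ| * s / 2) |y| with h | h
    · have := hfar s τ y hs hτ h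
      nlinarith
    · have := weight_mul_gaussWeight_le_of_near (r := r) hM hγ hs h
      nlinarith [mul_nonneg hC hP0, mul_nonneg (sq_nonneg K) hZ0]
  calc weight M r y s * weight M r (y + γ * s) s ≤ S + (K * S + C * P + K ^ 2 * Z) := by
        rw [weight.eq_def M r (y + γ * s), mul_add]
        exact add_le_add halg hgauss
    _ ≤ _ := by
        have hS' : 0 ≤ (C + K ^ 2) * S := by positivity
        have hP' : 0 ≤ (1 + K + K ^ 2) * P := by positivity
        have hZ' : 0 ≤ (1 + K + C) * Z := by positivity
        linarith

end Product

section Transport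

variable {M r d γ s τ z : ℝ}

/-- The Gaussian profile of the other component, seen at time `t` in the moving frame by a
contribution created at time `s`; `γ` is the difference of the two speeds. -/
def driftedGauss (M γ z s t : ℝ) : ℝ := Real.exp (-(z + γ * s) ^ 2 / (M * (1 + t)))

lemma driftedGauss_pos (M γ z s t : ℝ) : 0 < driftedGauss M γ z s t := Real.exp_pos _

lemma driftedGauss_le_one {t : ℝ} (hM : 0 ≤ M) (ht : 0 ≤ t) (γ z s : ℝ) :
    driftedGauss M γ z s t ≤ 1 :=
  exp_neg_sq_div_le_one (by positivity) _

lemma exp_neg_sq_div_le_driftedGauss (hd : 0 < d) (hMd : 64 * d ≤ M) (hs : 0 ≤ s) (hτ : 0 ≤ τ)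
    (γ z : ℝ) : Real.exp (-(z + γ * s) ^ 2 / (M * (1 + s) + 8 * d * τ)) ≤
      driftedGauss M γ z s (s + τ) := by
  have hM : 0 < M := by linarith
  refine exp_neg_sq_div_le_exp (by positivity) (by positivity) ?_
  gcongr
  nlinarith

lemma exists_exp_neg_mul_le_rpow {k : ℝ} (hr : 0 < r) (hk : 0 < k) :
    ∃ C, 0 ≤ C ∧ ∀ x : ℝ, 0 ≤ x → Real.exp (-(k * x)) ≤ C * (1 + x) ^ (-r) := by
  obtain ⟨c, hc0, hc1, hck⟩ := exists_pos_le_one_le (a := k / r) (by positivity)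
  refine ⟨c ^ (-r), by positivity, fun x hx => ?_⟩
  have hexp : Real.exp (-(k * x)) = Real.exp (k / r * x) ^ (-r) := by
    rw [← Real.exp_mul]
    congr 1
    field_simp
  rw [hexp]
  refine rpow_neg_le_of_mul_le hr.le hc0 (by positivity) ?_
  have hcx : c * x ≤ k / r * x := by gcongr
  linarith [Real.add_one_le_exp (k / r * x)]

lemma nine_div_sixteen_mul_sq_le (hs : 0 ≤ s) (hz : |γ| * s ≤ |z| / 4) :
    9 / 16 * z ^ 2 ≤ (z + γ * s) ^ 2 := by
  have habs : 3 / 4 * |z| ≤ |z + γ * s| := by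
    have := abs_sub_abs_le_abs_sub z (-(γ * s))
    rw [abs_neg, abs_mul, abs_of_nonneg hs, sub_neg_eq_add] at this
    linarith
  have hsq := pow_le_pow_left₀ (by positivity) habs 2
  rw [mul_pow, sq_abs, sq_abs] at hsq
  linarith

lemma decay_mul_exp_le_gaussWeight_of_far (hd : 0 < d) (hMd : 64 * d ≤ M) (hs : 0 ≤ s)
    (hτ : 1 + s ≤ τ) (hz : |γ| * s ≤ |z| / 4) :
    decay (s + τ) * Real.exp (-(z + γ * s) ^ 2 / (M * (1 + s) + 8 * d * τ)) ≤
      gaussWeight M z (s + τ) := by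
  have hM : 0 < M := by linarith
  have hτ0 : 0 < τ := by linarith
  have hst : 0 ≤ s + τ := by linarith
  rw [gaussWeight_eq_decay_mul]
  refine mul_le_mul_of_nonneg_left ?_ (decay_pos hst).le
  refine exp_neg_sq_div_le_exp (by positivity) (by positivity) ?_
  calc z ^ 2 * (M * (1 + s) + 8 * d * τ) ≤ z ^ 2 * (9 / 16 * (M * (1 + (s + τ)))) := by
        gcongr
        nlinarith
    _ = 9 / 16 * z ^ 2 * (M * (1 + (s + τ))) := by ring
    _ ≤ _ := by gcongr; exact nine_div_sixteen_mul_sq_le hs hz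

lemma exists_exp_neg_sq_div_le_algWeight_zero (hr : 0 < r) (hd : 0 < d) (hMd : 64 * d ≤ M)
    (hγ : γ ≠ 0) :
    ∃ C, 0 ≤ C ∧ ∀ s τ z : ℝ, 0 ≤ s → 0 ≤ τ → τ ≤ 1 + s → 1 ≤ |z| → |γ| * s ≤ |z| / 4 →
      Real.exp (-(z + γ * s) ^ 2 / (M * (1 + s) + 8 * d * τ)) ≤ C * algWeight r z 0 := by
  have hM : 0 < M := by linarith
  set L := 1 + 1 / (4 * |γ|) with hL
  have hL0 : 0 < L := by positivity
  obtain ⟨C, hC, hexp⟩ := exists_exp_neg_mul_le_rpow (k := 9 / (32 * M * L)) hr (by positivity)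
  refine ⟨C, hC, fun s τ z hs hτ hτs hz hγs => ?_⟩
  rw [algWeight_zero_eq]
  refine le_trans ?_ (hexp |z| (abs_nonneg z))
  have hwidth : M * (1 + s) + 8 * d * τ ≤ 2 * M * (L * |z|) := by
    have hsz : s ≤ 1 / (4 * |γ|) * |z| := by
      rw [div_mul_eq_mul_div, one_mul, le_div_iff₀ (by positivity)]
      linarith
    calc M * (1 + s) + 8 * d * τ ≤ 2 * M * (1 + s) := by nlinarith
      _ ≤ 2 * M * (L * |z|) := by gcongr; rw [hL]; linarith
  rw [Real.exp_le_exp, neg_div, neg_le_neg_iff, le_div_iff₀ (by positivity)]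
  calc 9 / (32 * M * L) * |z| * (M * (1 + s) + 8 * d * τ)
      ≤ 9 / (32 * M * L) * |z| * (2 * M * (L * |z|)) := by gcongr
    _ = 9 / 16 * |z| ^ 2 := by field_simp; ring
    _ = 9 / 16 * z ^ 2 := by rw [sq_abs]
    _ ≤ _ := nine_div_sixteen_mul_sq_le hs hγs

lemma exists_decay_mul_exp_le_weight (hM : 1 ≤ M) (hr : 0 < r) (hd : 0 < d) (hMd : 64 * d ≤ M)
    (hγ : γ ≠ 0) :
    ∃ C, 0 ≤ C ∧ ∀ s τ z : ℝ, 0 ≤ s → 0 ≤ τ →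
      (√(1 + (s + τ)) ≤ |z| → |γ| * s ≤ |z| / 4) →
      decay (s + τ) * Real.exp (-(z + γ * s) ^ 2 / (M * (1 + s) + 8 * d * τ)) ≤
        C * weight M r z (s + τ) := by
  obtain ⟨C, hC, halg⟩ := exists_exp_neg_sq_div_le_algWeight_zero hr hd hMd hγ
  refine ⟨Real.exp 1 + 1 + C * 2 ^ r, by positivity, fun s τ z hs hτ hz => ?_⟩
  have hst : 0 ≤ s + τ := by linarith
  have hw := weight_nonneg M r z (s + τ)
  have hdecay := (decay_pos hst).le
  set w := weight M r z (s + τ)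
  set X := Real.exp (-(z + γ * s) ^ 2 / (M * (1 + s) + 8 * d * τ))
  have hX1 : X ≤ 1 := exp_neg_sq_div_le_one (by positivity) _
  suffices decay (s + τ) * X ≤ Real.exp 1 * w ∨ decay (s + τ) * X ≤ w ∨
      decay (s + τ) * X ≤ C * 2 ^ r * w by
    have h₁ : 0 ≤ Real.exp 1 * w := by positivity
    have h₂ : 0 ≤ C * 2 ^ r * w := by positivity
    rcases this with h | h | h <;> linarith
  rcases le_total |z| √(1 + (s + τ)) with hnear | hfar
  · exact Or.inl ((mul_le_of_le_one_right hdecay hX1).trans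
      (decay_le_mul_weight hM r hst hnear))
  have hsqrt : 1 ≤ √(1 + (s + τ)) := Real.one_le_sqrt.2 (by linarith)
  have hγs := hz hfar
  rcases le_total (1 + s) τ with hτs | hτs
  · exact Or.inr (Or.inl ((decay_mul_exp_le_gaussWeight_of_far hd hMd hs hτs hγs).trans
      (gaussWeight_le_weight M r z _)))
  · refine Or.inr (Or.inr ((mul_le_of_le_one_left (Real.exp_pos _).le (decay_le_one hst)).trans ?_))
    calc X ≤ C * algWeight r z 0 := halg s τ z hs hτ hτs (hsqrt.trans hfar) hγs
      _ ≤ C * (2 ^ r * w) := by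
          gcongr
          exact (algWeight_zero_le hr.le hfar).trans
            (mul_le_mul_of_nonneg_left (algWeight_le_weight M r z _) (by positivity))
      _ = C * 2 ^ r * w := by ring

lemma exists_one_add_rpow_neg_le_algWeight_zero (hr : 0 ≤ r) (hγ : γ ≠ 0) :
    ∃ C, 0 ≤ C ∧ ∀ s z : ℝ, |z| / 4 ≤ |γ| * s →
      (1 + s) ^ (-r) ≤ C * algWeight r z 0 := by
  obtain ⟨c, hc0, hc1, hcγ⟩ := exists_pos_le_one_le (a := 1 / (4 * |γ|)) (by positivity)
  refine ⟨c ^ (-r), by positivity, fun s z hzs => ?_⟩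
  rw [algWeight_zero_eq]
  refine rpow_neg_le_of_mul_le hr hc0 (by positivity) ?_
  have hcz : c * |z| ≤ 1 / (4 * |γ|) * |z| := by gcongr
  have hz_le : 1 / (4 * |γ|) * |z| ≤ s := by
    rw [div_mul_eq_mul_div, one_mul, div_le_iff₀ (by positivity)]
    linarith
  linarith

/-- What the other component has left behind at distance `|γ| * s` is either weak because `s` is
large compared with `z`, or lies below the weight around `z` itself. -/
lemma exists_rpow_mul_decay_mul_exp_le (hM : 1 ≤ M) (hr : 3 ≤ r) (hd : 0 < d) (hMd : 64 * d ≤ M)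
    (hγ : γ ≠ 0) :
    ∃ C, 0 ≤ C ∧ ∀ s τ z : ℝ, 0 ≤ s → 0 ≤ τ → (1 + s) ^ (-r) *
      (decay (s + τ) * Real.exp (-(z + γ * s) ^ 2 / (M * (1 + s) + 8 * d * τ))) ≤
        C * (weight M r z (s + τ) *
          (decay s ^ 3 + decay (s + τ) * driftedGauss M γ z s (s + τ))) := by
  obtain ⟨C, hC, hweight⟩ := exists_decay_mul_exp_le_weight hM (by linarith : 0 < r) hd hMd hγ
  obtain ⟨C', hC', hlate⟩ := exists_one_add_rpow_neg_le_algWeight_zero (by linarith : 0 ≤ r) hγ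
  refine ⟨C + C' * 2 ^ r, by positivity, fun s τ z hs hτ => ?_⟩
  have hst : 0 ≤ s + τ := by linarith
  have hdecay := (decay_pos hst).le
  have hcube := pow_nonneg (decay_pos hs).le 3
  have hw := weight_nonneg M r z (s + τ)
  have hY := (driftedGauss_pos M γ z s (s + τ)).le
  have hXY := exp_neg_sq_div_le_driftedGauss hd hMd hs hτ γ z
  set w := weight M r z (s + τ)
  set Y := driftedGauss M γ z s (s + τ)
  set X := Real.exp (-(z + γ * s) ^ 2 / (M * (1 + s) + 8 * d * τ))
  have hwcube : 0 ≤ w * decay s ^ 3 := by positivity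
  have hwY : 0 ≤ w * (decay (s + τ) * Y) := by positivity
  have hc : 0 ≤ C' * 2 ^ r := by positivity
  suffices (1 + s) ^ (-r) * (decay (s + τ) * X) ≤ C * (w * decay s ^ 3) ∨
      (1 + s) ^ (-r) * (decay (s + τ) * X) ≤ C' * 2 ^ r * (w * (decay (s + τ) * Y)) by
    rcases this with h | h <;>
      nlinarith [mul_nonneg hC hwcube, mul_nonneg hC hwY, mul_nonneg hc hwcube, mul_nonneg hc hwY]
  by_cases hz : √(1 + (s + τ)) ≤ |z| → |γ| * s ≤ |z| / 4
  · left
    calc (1 + s) ^ (-r) * (decay (s + τ) * X) ≤ decay s ^ 3 * (C * w) :=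
          mul_le_mul (one_add_rpow_neg_le_decay_cube hr hs) (hweight s τ z hs hτ hz)
            (by positivity) hcube
      _ = C * (w * decay s ^ 3) := by ring
  · right
    push Not at hz
    have hzw : algWeight r z 0 ≤ 2 ^ r * w := (algWeight_zero_le (by linarith) hz.1).trans
      (mul_le_mul_of_nonneg_left (algWeight_le_weight M r z _) (by positivity))
    calc (1 + s) ^ (-r) * (decay (s + τ) * X)
        ≤ C' * (2 ^ r * w) * (decay (s + τ) * Y) := by
          gcongr
          exact (hlate s z hz.2.le).trans (by gcongr)
      _ = C' * 2 ^ r * (w * (decay (s + τ) * Y)) := by ring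

end Transport

section HeatFlowProduct

variable {M r d γ : ℝ}

lemma isMajorant_widenedGaussWeight {s τ : ℝ} (hM : 0 ≤ M) (hs : 0 ≤ s) (hτ : 0 ≤ τ) :
    IsMajorant (widenedGaussWeight M s τ) := by
  have _ : 0 ≤ min (1 + s) τ := le_min (by linarith) hτ
  exact (isMajorant_exp_neg_sq_div (by positivity)).const_mul (decay_pos hs).le

lemma exists_wideGaussianAvg_widenedGaussWeight_le (hd : 0 < d) (hMd : 64 * d ≤ M) :
    ∃ C, 0 ≤ C ∧ ∀ s τ z : ℝ, 0 ≤ s → 0 < τ →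
      wideGaussianAvg (heatWidth d τ) (widenedGaussWeight M s τ) z ≤
        C * gaussWeight M z (s + τ) := by
  have hM : 0 < M := by linarith
  obtain ⟨C, hC, hexp⟩ := exists_decay_mul_wideGaussianAvg_exp_le hM hd
  refine ⟨C, hC, fun s τ z hs hτ => ?_⟩
  have _ : 0 ≤ min (1 + s) τ := le_min (by linarith) hτ.le
  have hmτ : M / 4 * min (1 + s) τ ≤ M / 4 * τ := by gcongr; exact min_le_right _ _
  have hms : M / 4 * min (1 + s) τ ≤ M / 4 * (1 + s) := by gcongr; exact min_le_left _ _
  have hdecay := (decay_pos (add_nonneg hs hτ.le)).le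
  unfold widenedGaussWeight
  rw [wideGaussianAvg_const_mul, gaussWeight_eq_decay_mul]
  refine (hexp _ s τ z hs hτ (by positivity) (by nlinarith)).trans ?_
  gcongr C * (_ * ?_)
  refine exp_neg_sq_div_le_exp (by positivity) (by positivity) ?_
  gcongr
  nlinarith

lemma exists_rpow_mul_wideGaussianAvg_gaussWeight_le (hM : 1 ≤ M) (hr : 3 ≤ r) (hd : 0 < d)
    (hMd : 64 * d ≤ M) (hγ : γ ≠ 0) :
    ∃ C, 0 ≤ C ∧ ∀ s τ z : ℝ, 0 ≤ s → 0 < τ → (1 + s) ^ (-r) *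
      wideGaussianAvg (heatWidth d τ) (fun y => gaussWeight M (y + γ * s) s) z ≤
        C * (weight M r z (s + τ) *
          (decay s ^ 3 + decay (s + τ) * driftedGauss M γ z s (s + τ))) := by
  have hM0 : 0 < M := by linarith
  obtain ⟨C, hC, hexp⟩ := exists_decay_mul_wideGaussianAvg_exp_le hM0 hd
  obtain ⟨C', hC', hdrift⟩ := exists_rpow_mul_decay_mul_exp_le hM hr hd hMd hγ
  refine ⟨C * C', by positivity, fun s τ z hs hτ => ?_⟩
  rw [wideGaussianAvg_comp_add_right (fun y => gaussWeight M y s)]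
  simp only [gaussWeight_eq_decay_mul, wideGaussianAvg_const_mul]
  calc (1 + s) ^ (-r) * (decay s * wideGaussianAvg (heatWidth d τ)
          (fun y => Real.exp (-y ^ 2 / (M * (1 + s)))) (z + γ * s))
      ≤ (1 + s) ^ (-r) * (C * (decay (s + τ) *
          Real.exp (-(z + γ * s) ^ 2 / (M * (1 + s) + 8 * d * τ)))) :=
        mul_le_mul_of_nonneg_left (hexp _ s τ _ hs hτ (by positivity) (by nlinarith))
          (by positivity)
    _ = C * ((1 + s) ^ (-r) * (decay (s + τ) *
          Real.exp (-(z + γ * s) ^ 2 / (M * (1 + s) + 8 * d * τ)))) := mul_left_comm _ _ _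
    _ ≤ _ := by
        rw [mul_assoc C C']
        exact mul_le_mul_of_nonneg_left (hdrift s τ z hs hτ.le) hC

lemma exists_wideGaussianAvg_weight_mul_weight_le (hM : 1 ≤ M) (hr : 3 ≤ r) (hd : 0 < d)
    (hMd : 64 * d ≤ M) (hγ : γ ≠ 0) :
    ∃ C, 0 ≤ C ∧ ∀ s τ z : ℝ, 0 ≤ s → 0 < τ →
      wideGaussianAvg (heatWidth d τ) (fun y => weight M r y s * weight M r (y + γ * s) s) z ≤
        C * (weight M r z (s + τ) * (decay s ^ 3 + decay τ ^ 3 +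
          decay (s + τ) * driftedGauss M γ z s (s + τ))) := by
  have hM0 : 0 ≤ M := by linarith
  have hr0 : 0 ≤ r := by linarith
  obtain ⟨C, hC, hprod⟩ := exists_weight_mul_weight_le (by linarith : 0 < M) hr hγ
  obtain ⟨C₁, hC₁, hw⟩ := exists_wideGaussianAvg_weight_le hM hr hd hMd
  obtain ⟨C₂, hC₂, hg⟩ := exists_rpow_mul_wideGaussianAvg_gaussWeight_le hM hr hd hMd hγ
  obtain ⟨C₃, hC₃, hwide⟩ := exists_wideGaussianAvg_widenedGaussWeight_le hd hMd
  refine ⟨C * (C₁ + C₂ + C₃), by positivity, fun s τ z hs hτ => ?_⟩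
  have hs3 := pow_nonneg (decay_pos hs).le 3
  have hτ3 := pow_nonneg (decay_pos hτ.le).le 3
  have hmw := isMajorant_weight hM0 hr0 hs
  have hm₁ := hmw.const_mul hs3
  have hm₂ := ((isMajorant_gaussWeight hM0 hs).comp_add_right (γ * s)).const_mul
    (by positivity : 0 ≤ (1 + s) ^ (-r))
  have hm₃ := (isMajorant_widenedGaussWeight hM0 hs hτ.le).const_mul (add_nonneg hs3 hτ3)
  have hle := wideGaussianAvg_mono (hmw.mul (hmw.comp_add_right (γ * s)))
    (((hm₁.add hm₂).add hm₃).const_mul hC) (fun y => hprod s τ y hs hτ.le) (heatWidth d τ) z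
  rw [wideGaussianAvg_const_mul, wideGaussianAvg_add (hm₁.add hm₂) hm₃,
    wideGaussianAvg_add hm₁ hm₂, wideGaussianAvg_const_mul, wideGaussianAvg_const_mul,
    wideGaussianAvg_const_mul] at hle
  refine hle.trans ?_
  rw [mul_assoc C]
  refine mul_le_mul_of_nonneg_left ?_ hC
  have h₁ := mul_le_mul_of_nonneg_left (hw s τ z hs hτ) hs3
  have h₂ := hg s τ z hs hτ
  have h₃ := mul_le_mul_of_nonneg_left ((hwide s τ z hs hτ).trans
    (mul_le_mul_of_nonneg_left (gaussWeight_le_weight M r z (s + τ)) hC₃)) (add_nonneg hs3 hτ3)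
  have hw0 := weight_nonneg M r z (s + τ)
  have hY0 := mul_nonneg (decay_pos (add_nonneg hs hτ.le)).le
    (driftedGauss_pos M γ z s (s + τ)).le
  nlinarith [mul_nonneg hC₁ (mul_nonneg hw0 hτ3), mul_nonneg hC₁ (mul_nonneg hw0 hY0),
    mul_nonneg hC₂ (mul_nonneg hw0 hτ3), mul_nonneg hC₃ (mul_nonneg hw0 hY0)]

end HeatFlowProduct

/-! ### Time integrals -/

section TimeKernel

variable {M γ t τ : ℝ} {f : ℝ → ℝ}

lemma inv_sqrt_eq_rpow (hτ : 0 ≤ τ) : (√τ)⁻¹ = τ ^ (-(1 / 2) : ℝ) := by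
  rw [Real.rpow_neg hτ, Real.sqrt_eq_rpow]

lemma integrableOn_inv_sqrt (t : ℝ) : IntegrableOn (fun τ => (√τ)⁻¹) (Ioc 0 t) :=
  (integrableOn_rpow_neg (by norm_num) t).congr_fun
    (fun _ hτ => (inv_sqrt_eq_rpow hτ.1.le).symm) measurableSet_Ioc

lemma setIntegral_inv_sqrt (ht : 0 ≤ t) : ∫ τ in Ioc 0 t, (√τ)⁻¹ = 2 * √t := by
  rw [setIntegral_congr_fun measurableSet_Ioc fun τ hτ => inv_sqrt_eq_rpow hτ.1.le,
    setIntegral_rpow_neg (by norm_num) ht, Real.sqrt_eq_rpow]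
  norm_num
  ring

lemma integrableOn_inv_sqrt_mul (hf : ContinuousOn f (Icc 0 t)) :
    IntegrableOn (fun τ => (√τ)⁻¹ * f τ) (Ioc 0 t) :=
  (integrableOn_inv_sqrt t).mul_continuousOn_of_subset hf measurableSet_Ioc isCompact_Icc
    Ioc_subset_Icc_self

lemma integrableOn_Ioc_of_continuousOn (hf : ContinuousOn f (Icc 0 t)) : IntegrableOn f (Ioc 0 t) :=
  hf.integrableOn_Icc.mono_set Ioc_subset_Icc_self

lemma setIntegral_inv_sqrt_mul_le {b : ℝ} (hf : ContinuousOn f (Icc 0 t))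
    (hb : ∀ τ ∈ Ioc 0 t, f τ ∈ Icc 0 b) (hb0 : 0 ≤ b) :
    ∫ τ in Ioc 0 t, (√τ)⁻¹ * f τ ≤ (∫ τ in Ioc 0 t, f τ) + 2 * b := by
  have hind' : Integrable ((Ioc 0 1).indicator fun τ => b * (√τ)⁻¹) :=
    (integrable_indicator_iff measurableSet_Ioc).2 ((integrableOn_inv_sqrt 1).const_mul b)
  have hind : IntegrableOn ((Ioc 0 1).indicator fun τ => b * (√τ)⁻¹) (Ioc 0 t) :=
    hind'.integrableOn
  have hind_nonneg : ∀ τ, 0 ≤ (Ioc 0 1).indicator (fun τ => b * (√τ)⁻¹) τ := fun τ =>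
    indicator_nonneg (fun _ _ => by positivity) τ
  have hind_le : ∫ τ in Ioc 0 t, (Ioc 0 1).indicator (fun τ => b * (√τ)⁻¹) τ ≤ 2 * b := by
    refine (setIntegral_le_integral hind' (.of_forall hind_nonneg)).trans_eq ?_
    rw [integral_indicator measurableSet_Ioc, integral_const_mul, setIntegral_inv_sqrt zero_le_one,
      Real.sqrt_one, mul_one, mul_comm]
  have hle : ∀ τ ∈ Ioc 0 t,
      (√τ)⁻¹ * f τ ≤ f τ + (Ioc 0 1).indicator (fun τ => b * (√τ)⁻¹) τ := by
    intro τ hτ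
    obtain ⟨hf0, hfb⟩ := hb τ hτ
    rcases le_total τ 1 with h | h
    · rw [indicator_of_mem (show τ ∈ Ioc 0 1 from ⟨hτ.1, h⟩), mul_comm b]
      exact le_add_of_nonneg_of_le hf0 (by gcongr)
    · exact le_add_of_le_of_nonneg
        (mul_le_of_le_one_left hf0 (inv_le_one_of_one_le₀ (Real.one_le_sqrt.2 h))) (hind_nonneg τ)
  calc _ ≤ ∫ τ in Ioc 0 t, (f τ + (Ioc 0 1).indicator (fun τ => b * (√τ)⁻¹) τ) :=
        setIntegral_mono_on (integrableOn_inv_sqrt_mul hf)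
          ((integrableOn_Ioc_of_continuousOn hf).add hind) measurableSet_Ioc hle
    _ ≤ _ := by
        rw [integral_add (integrableOn_Ioc_of_continuousOn hf) hind]
        gcongr

lemma continuousOn_decay : ContinuousOn decay (Ici 0) := by
  unfold decay
  refine ContinuousOn.inv₀ (by fun_prop) fun τ hτ => ?_
  have : (0 : ℝ) ≤ τ := hτ
  positivity

lemma continuousOn_decay_Icc (t : ℝ) : ContinuousOn decay (Icc 0 t) :=
  continuousOn_decay.mono Icc_subset_Ici_self

lemma continuousOn_decay_sub (t : ℝ) : ContinuousOn (fun τ => decay (t - τ)) (Icc 0 t) :=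
  continuousOn_decay.comp (by fun_prop) fun _ hτ => sub_nonneg.2 hτ.2

lemma setIntegral_comp_sub (ht : 0 ≤ t) (f : ℝ → ℝ) :
    ∫ τ in Ioc 0 t, f (t - τ) = ∫ τ in Ioc 0 t, f τ := by
  rw [← intervalIntegral.integral_of_le ht, ← intervalIntegral.integral_of_le ht,
    intervalIntegral.integral_comp_sub_left, sub_self, sub_zero]

lemma integrableOn_decay_cube : IntegrableOn (fun τ => decay τ ^ 3) (Ioi 0) := by
  have hrpow := integrableOn_add_rpow_Ioi_of_lt (a := -(3 / 2)) (c := 0) (m := 1)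
    (by norm_num) (by norm_num)
  refine hrpow.congr_fun (fun τ hτ => ?_) measurableSet_Ioi
  have hτ0 : (0 : ℝ) < τ := hτ
  simp only [decay]
  rw [← Real.sqrt_inv, Real.sqrt_eq_rpow, ← Real.rpow_natCast, ← Real.rpow_mul (by positivity),
    Real.rpow_neg (by positivity), Real.inv_rpow (by positivity), add_comm]
  norm_num

lemma decay_cube_nonneg (hτ : 0 ≤ τ) : 0 ≤ decay τ ^ 3 := pow_nonneg (decay_pos hτ).le 3

lemma setIntegral_decay_cube_le (t : ℝ) :
    ∫ τ in Ioc 0 t, decay τ ^ 3 ≤ ∫ τ in Ioi 0, decay τ ^ 3 :=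
  setIntegral_mono_set integrableOn_decay_cube
    ((ae_restrict_mem measurableSet_Ioi).mono fun _ hτ => decay_cube_nonneg (le_of_lt hτ))
    (.of_forall Ioc_subset_Ioi_self)

lemma setIntegral_decay_le (ht : 0 ≤ t) : ∫ τ in Ioc 0 t, decay τ ≤ 2 * √t := by
  rw [← setIntegral_inv_sqrt ht]
  refine setIntegral_mono_on (integrableOn_Ioc_of_continuousOn (continuousOn_decay_Icc t))
    (integrableOn_inv_sqrt t) measurableSet_Ioc fun τ hτ => ?_
  have hτ0 : 0 < τ := hτ.1
  unfold decay
  gcongr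
  linarith

/-- At each time `τ ∈ (0, t]` one of the two factors is at most `(√(t / 2))⁻¹`. -/
lemma inv_sqrt_mul_decay_sub_le (hτ : τ ∈ Ioc 0 t) :
    (√τ)⁻¹ * decay (t - τ) ≤ (√(t / 2))⁻¹ * ((√τ)⁻¹ + decay (t - τ)) := by
  have hτ0 := hτ.1
  have ht : 0 < t := hτ.1.trans_le hτ.2
  have hdecay := (decay_pos (sub_nonneg.2 hτ.2)).le
  rw [mul_add]
  rcases le_total (t / 2) τ with h | h
  · exact le_add_of_nonneg_of_le (by positivity) (by gcongr)
  · refine le_add_of_le_of_nonneg ?_ (by positivity)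
    rw [mul_comm]
    gcongr
    unfold decay
    gcongr
    linarith

lemma setIntegral_inv_sqrt_mul_decay_sub_le (ht : 0 ≤ t) :
    ∫ τ in Ioc 0 t, (√τ)⁻¹ * decay (t - τ) ≤ 4 * √2 := by
  have hdecay := integrableOn_Ioc_of_continuousOn (continuousOn_decay_sub t)
  calc ∫ τ in Ioc 0 t, (√τ)⁻¹ * decay (t - τ)
      ≤ ∫ τ in Ioc 0 t, (√(t / 2))⁻¹ * ((√τ)⁻¹ + decay (t - τ)) :=
        setIntegral_mono_on (integrableOn_inv_sqrt_mul (continuousOn_decay_sub t))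
          (((integrableOn_inv_sqrt t).add hdecay).const_mul _) measurableSet_Ioc
          fun _ => inv_sqrt_mul_decay_sub_le
    _ = (√(t / 2))⁻¹ * (2 * √t + ∫ τ in Ioc 0 t, decay τ) := by
        rw [integral_const_mul, integral_add (integrableOn_inv_sqrt t) hdecay,
          setIntegral_inv_sqrt ht, setIntegral_comp_sub ht]
    _ ≤ (√(t / 2))⁻¹ * (2 * √t + 2 * √t) := by gcongr; exact setIntegral_decay_le ht
    _ ≤ 4 * √2 := by
        rcases ht.eq_or_lt with rfl | h
        · simp
        · rw [Real.sqrt_div ht]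
          have : 0 < √t := Real.sqrt_pos.2 h
          apply le_of_eq
          field_simp
          ring

lemma setIntegral_driftedGauss_le (hM : 0 < M) (hγ : γ ≠ 0) (z : ℝ) (ht : 0 ≤ t) :
    ∫ τ in Ioc 0 t, driftedGauss M γ z (t - τ) t ≤ |γ|⁻¹ * √(Real.pi * (M * (1 + t))) := by
  set g : ℝ → ℝ := fun x => Real.exp (-x ^ 2 / (M * (1 + t)))
  have hg : Integrable g := integrable_exp_neg_sq_div (by positivity)
  have hcomp : (fun τ => driftedGauss M γ z (t - τ) t) =
      fun τ => g (z + γ * t + (-γ) * τ) := by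
    ext τ
    simp only [driftedGauss, g]
    ring_nf
  rw [hcomp]
  refine (setIntegral_le_integral ((hg.comp_add_left (z + γ * t)).comp_mul_left'
    (neg_ne_zero.2 hγ)) (.of_forall fun τ => (Real.exp_pos _).le)).trans_eq ?_
  rw [Measure.integral_comp_mul_left (fun x => g (z + γ * t + x)) (-γ),
    integral_add_left_eq_self g, integral_exp_neg_sq_div, inv_neg, abs_neg, abs_inv, smul_eq_mul]

lemma decay_mul_sqrt (hM : 0 ≤ M) (ht : 0 ≤ t) :
    decay t * √(Real.pi * (M * (1 + t))) = √(Real.pi * M) := by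
  have _ := Real.pi_pos
  have _ : 0 < √(1 + t) := Real.sqrt_pos.2 (by linarith)
  rw [decay, ← mul_assoc Real.pi, Real.sqrt_mul (by positivity)]
  field_simp

end TimeKernel

section InteractionKernel

variable {M γ t τ : ℝ}

/-- The loss, relative to a travelling weight, suffered at time `t` by a product of two weights
with relative speed `γ` that were multiplied a time `τ` ago. -/
def interactionKernel (M γ z t τ : ℝ) : ℝ :=
  decay (t - τ) ^ 3 + decay τ ^ 3 + decay t * driftedGauss M γ z (t - τ) t

lemma continuous_driftedGauss_sub (M γ z t : ℝ) :
    Continuous fun τ => driftedGauss M γ z (t - τ) t := by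
  unfold driftedGauss
  fun_prop

lemma continuousOn_interactionKernel (M γ z t : ℝ) :
    ContinuousOn (interactionKernel M γ z t) (Icc 0 t) :=
  (((continuousOn_decay_sub t).fun_pow 3).fun_add ((continuousOn_decay_Icc t).fun_pow 3)).fun_add
    ((continuous_driftedGauss_sub M γ z t).const_mul _).continuousOn

lemma decay_cube_le_interactionKernel (M γ z : ℝ) (hτ : 0 ≤ τ) (hτt : τ ≤ t) :
    decay (t - τ) ^ 3 ≤ interactionKernel M γ z t τ := by
  rw [interactionKernel, add_assoc]
  exact le_add_of_nonneg_right (add_nonneg (decay_cube_nonneg hτ)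
    (mul_nonneg (decay_pos (hτ.trans hτt)).le (driftedGauss_pos M γ z _ t).le))

lemma interactionKernel_nonneg (M γ z : ℝ) (hτ : 0 ≤ τ) (hτt : τ ≤ t) :
    0 ≤ interactionKernel M γ z t τ :=
  (decay_cube_nonneg (sub_nonneg.2 hτt)).trans (decay_cube_le_interactionKernel M γ z hτ hτt)

lemma interactionKernel_le_three (hM : 0 ≤ M) (γ z : ℝ) (hτ : 0 ≤ τ) (hτt : τ ≤ t) :
    interactionKernel M γ z t τ ≤ 3 := by
  have hcube {s : ℝ} (hs : 0 ≤ s) : decay s ^ 3 ≤ 1 :=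
    pow_le_one₀ (decay_pos hs).le (decay_le_one hs)
  have ht := hτ.trans hτt
  have hgauss := mul_le_one₀ (decay_le_one ht) (driftedGauss_pos M γ z (t - τ) t).le
    (driftedGauss_le_one hM ht γ z (t - τ))
  unfold interactionKernel
  linarith [hcube (sub_nonneg.2 hτt), hcube hτ]

lemma exists_setIntegral_interactionKernel_le (hM : 0 < M) (hγ : γ ≠ 0) :
    ∃ C, 0 ≤ C ∧ ∀ z t, 0 ≤ t → ∫ τ in Ioc 0 t, interactionKernel M γ z t τ ≤ C := by
  have hcube : 0 ≤ ∫ τ in Ioi 0, decay τ ^ 3 :=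
    setIntegral_nonneg measurableSet_Ioi fun τ hτ => decay_cube_nonneg (le_of_lt hτ)
  refine ⟨(∫ τ in Ioi 0, decay τ ^ 3) + (∫ τ in Ioi 0, decay τ ^ 3) + |γ|⁻¹ * √(Real.pi * M),
    by positivity, fun z t ht => ?_⟩
  have hint₁ := integrableOn_Ioc_of_continuousOn ((continuousOn_decay_sub t).fun_pow 3)
  have hint₂ := integrableOn_Ioc_of_continuousOn ((continuousOn_decay_Icc t).fun_pow 3)
  have hint₃ := integrableOn_Ioc_of_continuousOn (t := t)
    (continuous_driftedGauss_sub M γ z t).continuousOn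
  simp only [interactionKernel]
  rw [integral_add (hint₁.fun_add hint₂) (hint₃.const_mul _), integral_add hint₁ hint₂,
    setIntegral_comp_sub ht fun τ => decay τ ^ 3, integral_const_mul]
  gcongr ?_ + ?_ + ?_
  · exact setIntegral_decay_cube_le t
  · exact setIntegral_decay_cube_le t
  · refine (mul_le_mul_of_nonneg_left (setIntegral_driftedGauss_le hM hγ z ht)
      (decay_pos ht).le).trans_eq ?_
    rw [mul_left_comm, decay_mul_sqrt hM.le ht]

/-- A common majorant, up to constants, of the two Duhamel kernels relative to the travelling
weight: the flux term is responsible for the singularity `(√τ)⁻¹`, and its quadratic part is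
responsible for the last summand. -/
def duhamelMajorant (M γ z t τ : ℝ) : ℝ :=
  (interactionKernel M γ z t τ + (√τ)⁻¹ * interactionKernel M γ z t τ) +
    (√τ)⁻¹ * decay (t - τ)

lemma integrableOn_duhamelMajorant (M γ z t : ℝ) :
    IntegrableOn (duhamelMajorant M γ z t) (Ioc 0 t) :=
  ((integrableOn_Ioc_of_continuousOn (continuousOn_interactionKernel M γ z t)).fun_add
    (integrableOn_inv_sqrt_mul (continuousOn_interactionKernel M γ z t))).fun_add
    (integrableOn_inv_sqrt_mul (continuousOn_decay_sub t))

lemma exists_setIntegral_duhamelMajorant_le (hM : 0 < M) (hγ : γ ≠ 0) :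
    ∃ C, 0 ≤ C ∧ ∀ z t, 0 ≤ t → ∫ τ in Ioc 0 t, duhamelMajorant M γ z t τ ≤ C := by
  obtain ⟨C, hC, hint⟩ := exists_setIntegral_interactionKernel_le hM hγ
  refine ⟨C + (C + 2 * 3) + 4 * √2, by positivity, fun z t ht => ?_⟩
  have hcont := continuousOn_interactionKernel M γ z t
  have hK := integrableOn_Ioc_of_continuousOn hcont
  have hsK := integrableOn_inv_sqrt_mul hcont
  simp only [duhamelMajorant]
  rw [integral_add (hK.fun_add hsK) (integrableOn_inv_sqrt_mul (continuousOn_decay_sub t)),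
    integral_add hK hsK]
  gcongr ?_ + ?_ + ?_
  · exact hint z t ht
  · refine (setIntegral_inv_sqrt_mul_le hcont (fun τ hτ =>
      ⟨interactionKernel_nonneg M γ z hτ.1.le hτ.2,
        interactionKernel_le_three hM.le γ z hτ.1.le hτ.2⟩) (by norm_num)).trans ?_
    gcongr
    exact hint z t ht
  · exact setIntegral_inv_sqrt_mul_decay_sub_le ht

end InteractionKernel

/-! ### Propagation of the weights by the mild formula -/

section Propagation

variable {k n : ℕ} {M r d c c' γ t τ : ℝ} {q u : ℝ → ℝ} {h : ℝ → ℝ → ℝ}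

lemma abs_heatFlow_le_of_isMajorant (hd : 0 < d) (hτ : 0 < τ) (k : ℕ) (c x : ℝ)
    (hq : IsMajorant q) (hu : ∀ y, |u y| ≤ q y) :
    |heatFlow k d c τ u x| ≤ (heatWidth d τ)⁻¹ ^ k *
      (hermiteConst k * wideGaussianAvg (heatWidth d τ) q (x + c * τ)) := by
  rw [abs_heatFlow_eq hd hτ]
  have _ := heatWidth_pos hd hτ
  gcongr
  exact abs_hermiteAvg_le_integral k _ _ hu (hq.integrable _ _)

lemma abs_duhamelKernel_le_of_isMajorant (hd : 0 < d) (hτ : 0 < τ) (k : ℕ) (c x : ℝ)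
    (hq : IsMajorant q) (hh : ∀ y, |h y (t - τ)| ≤ q (y + c * (t - τ))) :
    |duhamelKernel k d c h x t τ| ≤ (heatWidth d τ)⁻¹ ^ k *
      (hermiteConst k * wideGaussianAvg (heatWidth d τ) q (x + c * t)) := by
  refine (abs_heatFlow_le_of_isMajorant hd hτ k c x (hq.comp_add_right _) hh).trans_eq ?_
  rw [wideGaussianAvg_comp_add_right q, show x + c * τ + c * (t - τ) = x + c * t by ring]

lemma wideGaussianAvg_weight_pow_succ_le (hM : 0 ≤ M) (hr : 3 ≤ r) {s : ℝ} (hs : 0 ≤ s) (n : ℕ)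
    (σ z : ℝ) : wideGaussianAvg σ (fun y => weight M r y s ^ (n + 1)) z ≤
      (2 * decay s) ^ n * wideGaussianAvg σ (fun y => weight M r y s) z := by
  have hw := isMajorant_weight hM (by linarith : 0 ≤ r) hs
  have _ := (decay_pos hs).le
  rw [← wideGaussianAvg_const_mul]
  refine wideGaussianAvg_mono (hw.pow _) (hw.const_mul (by positivity)) (fun y => ?_) σ z
  rw [pow_succ]
  have _ := weight_nonneg M r y s
  gcongr
  exact weight_le_two_mul_decay hM hr y hs

/-- The size of the nonlinear terms in the equation of the component with speed `c`: a
self-interaction of order `n` and an interaction with the component of speed `c'`. -/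
def forcing (M r c c' : ℝ) (n : ℕ) (y s : ℝ) : ℝ :=
  weight M r (y + c * s) s ^ n + weight M r (y + c * s) s * weight M r (y + c' * s) s

lemma isMajorant_forcing (hM : 0 ≤ M) (hr : 0 ≤ r) (c c' : ℝ) (n : ℕ) {s : ℝ} (hs : 0 ≤ s) :
    IsMajorant fun y => forcing M r c c' n y s :=
  have hw := isMajorant_weight hM hr hs
  ((hw.comp_add_right _).pow n).add ((hw.comp_add_right _).mul (hw.comp_add_right _))

lemma exists_wideGaussianAvg_forcing_le (hM : 1 ≤ M) (hr : 3 ≤ r) (hd : 0 < d)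
    (hMd : 64 * d ≤ M) (hγ : γ ≠ 0) :
    ∃ C, 0 ≤ C ∧ ∀ (n : ℕ) (z t τ : ℝ), 0 < τ → τ ≤ t →
      wideGaussianAvg (heatWidth d τ) (fun y => forcing M r 0 γ (n + 1) y (t - τ)) z ≤
        C * (weight M r z t * ((2 * decay (t - τ)) ^ n + interactionKernel M γ z t τ)) := by
  obtain ⟨C₁, hC₁, hw⟩ := exists_wideGaussianAvg_weight_le hM hr hd hMd
  obtain ⟨C₂, hC₂, hww⟩ := exists_wideGaussianAvg_weight_mul_weight_le hM hr hd hMd hγ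
  refine ⟨C₁ + C₂, by positivity, fun n z t τ hτ hτt => ?_⟩
  have hM0 : 0 ≤ M := by linarith
  have hr0 : 0 ≤ r := by linarith
  have hs : 0 ≤ t - τ := sub_nonneg.2 hτt
  have hmaj := isMajorant_weight hM0 hr0 hs
  have hself := hw (t - τ) τ z hs hτ
  have hcross := hww (t - τ) τ z hs hτ
  rw [sub_add_cancel] at hself hcross
  have _ := (decay_pos hs).le
  have _ := interactionKernel_nonneg M γ z hτ.le hτt
  have _ := weight_nonneg M r z t
  simp only [forcing, zero_mul, add_zero]
  rw [wideGaussianAvg_add (hmaj.pow _) (hmaj.mul (hmaj.comp_add_right _))]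
  calc _ ≤ (2 * decay (t - τ)) ^ n * (C₁ * weight M r z t) +
          C₂ * (weight M r z t * interactionKernel M γ z t τ) :=
        add_le_add ((wideGaussianAvg_weight_pow_succ_le hM0 hr hs n _ z).trans (by gcongr)) hcross
    _ ≤ (2 * decay (t - τ)) ^ n * ((C₁ + C₂) * weight M r z t) +
          (C₁ + C₂) * (weight M r z t * interactionKernel M γ z t τ) := by gcongr <;> linarith
    _ = _ := by ring

lemma quartic_le_duhamelMajorant (M γ z : ℝ) (hτ : 0 < τ) (hτt : τ ≤ t) :
    (2 * decay (t - τ)) ^ 3 + interactionKernel M γ z t τ ≤ 9 * duhamelMajorant M γ z t τ := by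
  have hK := interactionKernel_nonneg M γ z hτ.le hτt
  have _ := (decay_pos (sub_nonneg.2 hτt)).le
  have hmaj : interactionKernel M γ z t τ ≤ duhamelMajorant M γ z t τ := by
    rw [duhamelMajorant, add_assoc]
    exact le_add_of_nonneg_right (by positivity)
  have hcube := decay_cube_le_interactionKernel M γ z hτ.le hτt
  rw [mul_pow]
  linarith

lemma inv_heatWidth_mul_quadratic_le_duhamelMajorant (M γ z : ℝ) (hτ : 0 < τ) (hτt : τ ≤ t) :
    (heatWidth d τ)⁻¹ * (2 * decay (t - τ) + interactionKernel M γ z t τ) ≤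
      2 * (√(2 * d))⁻¹ * duhamelMajorant M γ z t τ := by
  have _ := interactionKernel_nonneg M γ z hτ.le hτt
  rw [inv_heatWidth d hτ.le, duhamelMajorant]
  calc _ = 2 * (√(2 * d))⁻¹ * ((√τ)⁻¹ * interactionKernel M γ z t τ / 2 +
        (√τ)⁻¹ * decay (t - τ)) := by ring
    _ ≤ _ := by gcongr; linarith [show 0 ≤ (√τ)⁻¹ * interactionKernel M γ z t τ by positivity]

lemma forcing_eq_forcing_zero (M r c c' : ℝ) (n : ℕ) (y s : ℝ) :
    forcing M r c c' n y s = forcing M r 0 (c' - c) n (y + c * s) s := by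
  unfold forcing
  ring_nf

lemma exists_abs_duhamelKernel_le_weight (hM : 1 ≤ M) (hr : 3 ≤ r) (hd : 0 < d)
    (hMd : 64 * d ≤ M) (hc : c ≠ c') {K : ℝ} (hK : ∀ z t τ : ℝ, 0 < τ → τ ≤ t →
      (heatWidth d τ)⁻¹ ^ k * ((2 * decay (t - τ)) ^ n + interactionKernel M (c' - c) z t τ) ≤
        K * duhamelMajorant M (c' - c) z t τ) (hK0 : 0 ≤ K) :
    ∃ C, 0 ≤ C ∧ ∀ (h : ℝ → ℝ → ℝ) (L : ℝ), 0 ≤ L →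
      (∀ y s, 0 ≤ s → |h y s| ≤ L * forcing M r c c' (n + 1) y s) →
      ∀ x t τ, 0 < τ → τ ≤ t → |duhamelKernel k d c h x t τ| ≤
        C * L * weight M r (x + c * t) t * duhamelMajorant M (c' - c) (x + c * t) t τ := by
  obtain ⟨C, hC, hforcing⟩ :=
    exists_wideGaussianAvg_forcing_le hM hr hd hMd (sub_ne_zero.2 hc.symm)
  have hconst := hermiteConst_nonneg k
  refine ⟨hermiteConst k * C * K, by positivity, fun h L hL hh x t τ hτ hτt => ?_⟩
  have hs : 0 ≤ t - τ := sub_nonneg.2 hτt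
  have _ := heatWidth_pos hd hτ
  have hw := weight_nonneg M r (x + c * t) t
  have hmaj := isMajorant_forcing (by linarith : 0 ≤ M) (by linarith : 0 ≤ r) 0 (c' - c) (n + 1) hs
  calc |duhamelKernel k d c h x t τ|
      ≤ (heatWidth d τ)⁻¹ ^ k * (hermiteConst k * (L * wideGaussianAvg (heatWidth d τ)
          (fun y => forcing M r 0 (c' - c) (n + 1) y (t - τ)) (x + c * t))) := by
        rw [← wideGaussianAvg_const_mul]
        exact abs_duhamelKernel_le_of_isMajorant hd hτ k c x (hmaj.const_mul hL) fun y =>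
          (hh y _ hs).trans_eq (by rw [forcing_eq_forcing_zero])
    _ ≤ (heatWidth d τ)⁻¹ ^ k * (hermiteConst k * (L * (C * (weight M r (x + c * t) t *
          ((2 * decay (t - τ)) ^ n + interactionKernel M (c' - c) (x + c * t) t τ))))) := by
        gcongr
        exact hforcing n _ t τ hτ hτt
    _ = hermiteConst k * C * L * weight M r (x + c * t) t * ((heatWidth d τ)⁻¹ ^ k *
          ((2 * decay (t - τ)) ^ n + interactionKernel M (c' - c) (x + c * t) t τ)) := by ring
    _ ≤ hermiteConst k * C * L * weight M r (x + c * t) t *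
          (K * duhamelMajorant M (c' - c) (x + c * t) t τ) :=
        mul_le_mul_of_nonneg_left (hK _ t τ hτ hτt) (by positivity)
    _ = _ := by ring

lemma exists_abs_duhamel_le_weight (hM : 1 ≤ M) (hr : 3 ≤ r) (hd : 0 < d) (hMd : 64 * d ≤ M)
    (hc : c ≠ c') {K : ℝ} (hK : ∀ z t τ : ℝ, 0 < τ → τ ≤ t → (heatWidth d τ)⁻¹ ^ k *
      ((2 * decay (t - τ)) ^ n + interactionKernel M (c' - c) z t τ) ≤
        K * duhamelMajorant M (c' - c) z t τ) (hK0 : 0 ≤ K) :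
    ∃ C, 0 ≤ C ∧ ∀ (h : ℝ → ℝ → ℝ) (L : ℝ), 0 ≤ L →
      (∀ y s, 0 ≤ s → |h y s| ≤ L * forcing M r c c' (n + 1) y s) →
      ∀ x t, 0 ≤ t → |duhamel k d c h x t| ≤ C * L * weight M r (x + c * t) t := by
  obtain ⟨C, hC, hkernel⟩ := exists_abs_duhamelKernel_le_weight hM hr hd hMd hc hK hK0
  obtain ⟨I, hI, hint⟩ := exists_setIntegral_duhamelMajorant_le (by linarith : 0 < M)
    (sub_ne_zero.2 hc.symm)
  refine ⟨C * I, by positivity, fun h L hL hh x t ht => ?_⟩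
  have hw := weight_nonneg M r (x + c * t) t
  calc |duhamel k d c h x t|
      ≤ ∫ τ in Ioc 0 t, C * L * weight M r (x + c * t) t *
          duhamelMajorant M (c' - c) (x + c * t) t τ :=
        norm_integral_le_of_norm_le (f := duhamelKernel k d c h x t)
          ((integrableOn_duhamelMajorant M _ _ t).const_mul _)
          ((ae_restrict_mem measurableSet_Ioc).mono fun τ hτ => hkernel h L hL hh x t τ hτ.1 hτ.2)
    _ ≤ C * L * weight M r (x + c * t) t * I := by
        rw [integral_const_mul]
        gcongr
        exact hint _ t ht
    _ = _ := by ring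

lemma exists_abs_heatFlow_le_weight (hM : 1 ≤ M) (hr : 3 ≤ r) (hd : 0 < d) (hMd : 64 * d ≤ M) :
    ∃ C, 0 ≤ C ∧ ∀ (u : ℝ → ℝ) (δ : ℝ), 0 ≤ δ → (∀ x, |u x| ≤ δ * algWeight r x 0) →
      ∀ c x t, 0 ≤ t → |heatFlow 0 d c t u x| ≤ C * δ * weight M r (x + c * t) t := by
  obtain ⟨C, hC, havg⟩ := exists_wideGaussianAvg_algWeight_le hM hr hd hMd
  have hconst := hermiteConst_nonneg 0
  refine ⟨hermiteConst 0 * C + 1, by positivity, fun u δ hδ hu c x t ht => ?_⟩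
  have hw := weight_nonneg M r (x + c * t) t
  rcases ht.eq_or_lt with rfl | ht
  · simp only [heatFlow_zero_time, mul_zero, add_zero]
    calc |u x| ≤ 1 * δ * algWeight r x 0 := by rw [one_mul]; exact hu x
      _ ≤ _ := by
        have _ := algWeight_nonneg r x 0
        gcongr
        · exact le_add_of_nonneg_left (by positivity)
        · exact algWeight_le_weight M r x 0
  · have hmaj := (isMajorant_algWeight (by linarith : 0 ≤ r) 0).const_mul hδ
    have hflow := abs_heatFlow_le_of_isMajorant hd ht 0 c x hmaj hu
    rw [pow_zero, one_mul, wideGaussianAvg_const_mul] at hflow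
    calc _ ≤ hermiteConst 0 * (δ * (C * weight M r (x + c * t) t)) := by
          refine hflow.trans ?_
          gcongr
          simpa only [zero_add] using havg 0 t (x + c * t) le_rfl ht
      _ = hermiteConst 0 * C * δ * weight M r (x + c * t) t := by ring
      _ ≤ _ := by gcongr; linarith

lemma exists_abs_mildFormula_le_weight (hM : 1 ≤ M) (hr : 3 ≤ r) (hd : 0 < d)
    (hMd : 64 * d ≤ M) (hc : c ≠ c') :
    ∃ C, 0 ≤ C ∧ ∀ (u₀ : ℝ → ℝ) (f g : ℝ → ℝ → ℝ) (δ L : ℝ), 0 ≤ δ → 0 ≤ L →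
      (∀ x, |u₀ x| ≤ δ * algWeight r x 0) →
      (∀ y s, 0 ≤ s → |f y s| ≤ L * forcing M r c c' 4 y s) →
      (∀ y s, 0 ≤ s → |g y s| ≤ L * forcing M r c c' 2 y s) →
      ∀ x t, 0 ≤ t → |mildFormula 0 d c (fun x _ => u₀ x) f g x t| ≤
        C * (δ + L) * weight M r (x + c * t) t := by
  obtain ⟨C₀, hC₀, hflow⟩ := exists_abs_heatFlow_le_weight hM hr hd hMd
  obtain ⟨C₁, hC₁, hsource⟩ := exists_abs_duhamel_le_weight (k := 0) (n := 3) hM hr hd hMd hc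
    (fun z t τ hτ hτt => by
      simpa only [pow_zero, one_mul] using quartic_le_duhamelMajorant M (c' - c) z hτ hτt)
    (by norm_num)
  obtain ⟨C₂, hC₂, hflux⟩ := exists_abs_duhamel_le_weight (k := 1) (n := 1) hM hr hd hMd hc
    (fun z t τ hτ hτt => by
      simpa only [pow_one] using
        inv_heatWidth_mul_quadratic_le_duhamelMajorant M (c' - c) z hτ hτt)
    (by positivity)
  refine ⟨C₀ + C₁ + C₂, by positivity, fun u₀ f g δ L hδ hL hu hf hg x t ht => ?_⟩
  have hw := weight_nonneg M r (x + c * t) t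
  calc |mildFormula 0 d c (fun x _ => u₀ x) f g x t|
      ≤ C₀ * δ * weight M r (x + c * t) t + C₁ * L * weight M r (x + c * t) t +
          C₂ * L * weight M r (x + c * t) t :=
        (abs_add_three _ _ _).trans (add_le_add (add_le_add (hflow u₀ δ hδ hu c x t ht)
          (hsource f L hL hf x t ht)) (hflux g L hL hg x t ht))
    _ ≤ C₀ * (δ + L) * weight M r (x + c * t) t + C₁ * (δ + L) * weight M r (x + c * t) t +
          C₂ * (δ + L) * weight M r (x + c * t) t := by
        gcongr <;> linarith
    _ = _ := by ring

end Propagation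

/-! ### Height and mass of the weights -/

section Mass

variable {M r t η ε : ℝ}

lemma integrable_algWeight (hr : 1 < r) (t : ℝ) : Integrable fun z => algWeight r z t := by
  refine (integrable_algWeight_zero hr).mono'
    (isMajorant_algWeight (by linarith) t).continuous.aestronglyMeasurable (.of_forall fun z => ?_)
  rw [Real.norm_of_nonneg (algWeight_nonneg r z t)]
  exact algWeight_le_algWeight_zero (by linarith) z t

lemma integrable_gaussWeight (hM : 0 < M) (ht : 0 ≤ t) : Integrable fun z => gaussWeight M z t :=
  (integrable_exp_neg_sq_div (by positivity)).div_const _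

lemma integral_gaussWeight (hM : 0 ≤ M) (ht : 0 ≤ t) :
    ∫ z, gaussWeight M z t = √(Real.pi * M) := by
  simp only [gaussWeight_eq_decay_mul]
  rw [integral_const_mul, integral_exp_neg_sq_div, decay_mul_sqrt hM ht]

lemma integrable_weight (hM : 0 < M) (hr : 1 < r) (ht : 0 ≤ t) :
    Integrable fun z => weight M r z t :=
  (integrable_algWeight hr t).add (integrable_gaussWeight hM ht)

lemma integral_weight_le (hM : 0 < M) (hr : 1 < r) (ht : 0 ≤ t) :
    ∫ z, weight M r z t ≤ (∫ z, algWeight r z 0) + √(Real.pi * M) := by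
  simp only [weight]
  rw [integral_add (integrable_algWeight hr t) (integrable_gaussWeight hM ht),
    integral_gaussWeight hM.le ht]
  gcongr ?_ + _
  exact integral_mono (integrable_algWeight hr t) (integrable_algWeight_zero hr)
    fun z => algWeight_le_algWeight_zero (by linarith) z t

lemma abs_add_abs_le_div_sqrt {a b y z : ℝ} (hM : 0 ≤ M) (hr : 3 ≤ r) (ht : 0 ≤ t) (hη : 0 ≤ η)
    (hηε : η ≤ ε / 4) (ha : |a| ≤ η * weight M r y t) (hb : |b| ≤ η * weight M r z t) :
    |a| + |b| ≤ ε / √(1 + t) := by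
  have hdecay := decay_pos ht
  calc |a| + |b| ≤ η * (2 * decay t) + η * (2 * decay t) := by
        gcongr
        · exact ha.trans (by gcongr; exact weight_le_two_mul_decay hM hr y ht)
        · exact hb.trans (by gcongr; exact weight_le_two_mul_decay hM hr z ht)
    _ = 4 * η * decay t := by ring
    _ ≤ ε * decay t := by gcongr; linarith
    _ = ε / √(1 + t) := (div_eq_mul_inv _ _).symm

lemma integrable_and_integral_abs_add_abs_le {u v : ℝ → ℝ} {a b : ℝ} (hM : 0 < M) (hr : 1 < r)
    (ht : 0 ≤ t) (hη : 0 ≤ η) (huv : Continuous fun x => (u x, v x))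
    (hu : ∀ x, |u x| ≤ η * weight M r (x + a) t) (hv : ∀ x, |v x| ≤ η * weight M r (x + b) t) :
    Integrable (fun x => |u x| + |v x|) ∧
      ∫ x, (|u x| + |v x|) ≤ 2 * η * ((∫ z, algWeight r z 0) + √(Real.pi * M)) := by
  have hw := integrable_weight hM hr ht
  have hmaj : Integrable fun x => η * weight M r (x + a) t + η * weight M r (x + b) t :=
    ((hw.comp_add_right a).const_mul η).add ((hw.comp_add_right b).const_mul η)
  have hle (x : ℝ) := add_le_add (hu x) (hv x)
  have hint : Integrable fun x => |u x| + |v x| := by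
    refine hmaj.mono' (huv.fst.abs.add huv.snd.abs).aestronglyMeasurable (.of_forall fun x => ?_)
    rw [Real.norm_of_nonneg (by positivity)]
    exact hle x
  refine ⟨hint, (integral_mono hint hmaj hle).trans ?_⟩
  rw [integral_add ((hw.comp_add_right a).const_mul η) ((hw.comp_add_right b).const_mul η),
    integral_const_mul, integral_const_mul, integral_add_right_eq_self (fun z => weight M r z t),
    integral_add_right_eq_self (fun z => weight M r z t), ← add_mul, ← two_mul]
  gcongr
  exact integral_weight_le hM hr ht

end Mass

/-! ### Global existence -/

section GlobalExistence

variable {M r d c c' d₁ d₂ c₁ c₂ C₀ r₀ δ η ε t α : ℝ} {f₁ f₂ g₁ g₂ : ℝ × ℝ → ℝ} {u₀ : ℝ → ℝ}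
  {u v : ℝ → ℝ → ℝ}

lemma continuous_of_holderCont (hα : 0 < α) (h : HolderCont α u₀) : Continuous u₀ := by
  obtain ⟨C, hC⟩ := h
  refine continuous_iff_continuousAt.2 fun x => tendsto_iff_dist_tendsto_zero.2 ?_
  have hcont : Continuous fun y : ℝ => C * |y - x| ^ α :=
    continuous_const.mul (Continuous.rpow_const (by fun_prop) fun _ => .inr hα.le)
  refine squeeze_zero (fun _ => dist_nonneg) (fun y => hC y x) ?_
  simpa [Real.zero_rpow hα.ne'] using hcont.tendsto x

lemma continuous_slice_of_isClassicalSolution {d₁ d₂ c₁ c₂ : ℝ} {f₁ f₂ g₁ g₂ : ℝ × ℝ → ℝ}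
    {T : ENNReal} {u₀ v₀ : ℝ → ℝ} {u v : ℝ → ℝ → ℝ}
    (h : IsClassicalSolution d₁ d₂ c₁ c₂ f₁ f₂ g₁ g₂ T u₀ v₀ u v) (ht : 0 ≤ t)
    (htT : ENNReal.ofReal t < T) : Continuous fun x => (u x t, v x t) :=
  h.2.2.1.comp_continuous (Continuous.prodMk_left t) fun _ => ⟨ht, htT⟩

lemma abs_le_mul_algWeight_of_mul_rpow_lt {x : ℝ} (h : |u₀ x| * (1 + |x|) ^ r < δ) :
    |u₀ x| ≤ δ * algWeight r x 0 := by
  rw [algWeight_zero_eq, Real.rpow_neg (by positivity), ← div_eq_mul_inv,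
    le_div_iff₀ (by positivity)]
  exact h.le

lemma pow_add_mul_le_forcing {a b y s : ℝ} {n : ℕ} (hn : 2 ≤ n) (hη : 0 ≤ η) (hη₁ : η ≤ 1)
    (ha : |a| ≤ η * weight M r (y + c * s) s) (hb : |b| ≤ η * weight M r (y + c' * s) s) :
    |a| ^ n + |a| * |b| ≤ η ^ 2 * forcing M r c c' n y s := by
  have hw := weight_nonneg M r (y + c * s) s
  calc |a| ^ n + |a| * |b|
      ≤ (η * weight M r (y + c * s) s) ^ n +
          η * weight M r (y + c * s) s * (η * weight M r (y + c' * s) s) := by gcongr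
    _ = η ^ n * weight M r (y + c * s) s ^ n +
          η ^ 2 * (weight M r (y + c * s) s * weight M r (y + c' * s) s) := by ring
    _ ≤ η ^ 2 * weight M r (y + c * s) s ^ n +
          η ^ 2 * (weight M r (y + c * s) s * weight M r (y + c' * s) s) := by
        gcongr ?_ * _ + _
        exact pow_le_pow_of_le_one hη hη₁ hn
    _ = _ := by rw [forcing, mul_add]

lemma exists_abs_mildFormula_le_of_abs_le_weight (hM : 1 ≤ M) (hr : 3 ≤ r) (hd : 0 < d)
    (hMd : 64 * d ≤ M) (hc : c ≠ c') (hC₀ : 0 ≤ C₀) :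
    ∃ C, 0 ≤ C ∧ ∀ (δ η : ℝ) (w₀ : ℝ → ℝ) (w w' f g : ℝ → ℝ → ℝ), 0 ≤ δ → 0 ≤ η → η ≤ 1 →
      (∀ x, |w₀ x| ≤ δ * algWeight r x 0) →
      (∀ y s, 0 ≤ s → |w y s| ≤ η * weight M r (y + c * s) s) →
      (∀ y s, 0 ≤ s → |w' y s| ≤ η * weight M r (y + c' * s) s) →
      (∀ y s, 0 ≤ s → |f y s| ≤ C₀ * (|w y s| ^ 4 + |w y s| * |w' y s|)) →
      (∀ y s, 0 ≤ s → |g y s| ≤ C₀ * (|w y s| ^ 2 + |w y s| * |w' y s|)) →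
      ∀ x t, 0 ≤ t → |mildFormula 0 d c (fun x _ => w₀ x) f g x t| ≤
        C * (δ + C₀ * η ^ 2) * weight M r (x + c * t) t := by
  obtain ⟨C, hC, hmild⟩ := exists_abs_mildFormula_le_weight hM hr hd hMd hc
  refine ⟨C, hC, fun δ η w₀ w w' f g hδ hη hη₁ hw₀ hw hw' hf hg =>
    hmild w₀ f g δ (C₀ * η ^ 2) hδ (by positivity) hw₀ (fun y s hs => (hf y s hs).trans ?_)
      fun y s hs => (hg y s hs).trans ?_⟩ <;>
  · rw [mul_assoc]
    gcongr
    exact pow_add_mul_le_forcing (by norm_num) hη hη₁ (hw y s hs) (hw' y s hs)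

lemma exists_amplitude {S ρ : ℝ} (hS : 0 < S) (hC₀ : 0 ≤ C₀) (hρ : 0 < ρ) :
    ∃ η δ, 0 < η ∧ η ≤ ρ ∧ 0 < δ ∧ S * (δ + C₀ * η ^ 2) ≤ η := by
  obtain ⟨η, hη, hηρ, hηS⟩ : ∃ η, 0 < η ∧ η ≤ ρ ∧ η ≤ 1 / (2 * S * (C₀ + 1)) :=
    ⟨_, lt_min hρ (by positivity), min_le_left _ _, min_le_right _ _⟩
  refine ⟨η, η / (2 * S), hη, hηρ, by positivity, ?_⟩
  rw [le_div_iff₀ (by positivity)] at hηS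
  calc S * (η / (2 * S) + C₀ * η ^ 2) = η / 2 + η * (η * (2 * S * C₀)) / 2 := by field_simp
    _ ≤ η / 2 + η * 1 / 2 := by
        gcongr
        exact le_trans (by gcongr; linarith) hηS
    _ = η := by ring

lemma mul_weight_mem_Icc (hM : 0 ≤ M) (hr : 3 ≤ r) (hη : 0 ≤ η) (hηr : η ≤ r₀ / 2) (z : ℝ)
    (ht : 0 ≤ t) : η * weight M r z t ∈ Icc 0 r₀ := by
  have hw₀ := weight_nonneg M r z t
  have hw : weight M r z t ≤ 2 := by
    linarith [weight_le_two_mul_decay hM hr z ht, decay_le_one ht]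
  refine ⟨mul_nonneg hη hw₀, ?_⟩
  calc η * weight M r z t ≤ r₀ / 2 * 2 := by gcongr; linarith
    _ = r₀ := by ring

lemma exists_isClassicalSolution_le_weight (hM : 1 ≤ M) (hr : 3 ≤ r) (hd₁ : 0 < d₁)
    (hd₂ : 0 < d₂) (hMd₁ : 64 * d₁ ≤ M) (hMd₂ : 64 * d₂ ≤ M) (hc : c₁ ≠ c₂)
    (hf₁ : ContDiff ℝ 1 f₁) (hf₂ : ContDiff ℝ 1 f₂) (hg₁ : ContDiff ℝ 2 g₁)
    (hg₂ : ContDiff ℝ 2 g₂) (hC₀ : 0 ≤ C₀) (hr₀ : 0 < r₀)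
    (hnl : ∀ u v : ℝ, |u| ≤ r₀ → |v| ≤ r₀ →
      |f₁ (u, v)| ≤ C₀ * (|u| ^ 4 + |u| * |v|) ∧
      |g₁ (u, v)| ≤ C₀ * (|u| ^ 2 + |u| * |v|) ∧
      |f₂ (u, v)| ≤ C₀ * (|v| ^ 4 + |u| * |v|) ∧
      |g₂ (u, v)| ≤ C₀ * (|v| ^ 2 + |u| * |v|)) (hε : 0 < ε) :
    ∃ δ, 0 < δ ∧ ∀ u₀ v₀ : ℝ → ℝ, Continuous u₀ → Continuous v₀ →
      (∀ x, |u₀ x| ≤ δ * algWeight r x 0) → (∀ x, |v₀ x| ≤ δ * algWeight r x 0) →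
      ∃ u v, IsClassicalSolution d₁ d₂ c₁ c₂ f₁ f₂ g₁ g₂ ⊤ u₀ v₀ u v ∧
        (∀ x t, 0 ≤ t → |u x t| ≤ ε * weight M r (x + c₁ * t) t) ∧
        (∀ x t, 0 ≤ t → |v x t| ≤ ε * weight M r (x + c₂ * t) t) := by
  obtain ⟨A₁, hA₁, hinv₁⟩ := exists_abs_mildFormula_le_of_abs_le_weight hM hr hd₁ hMd₁ hc hC₀
  obtain ⟨A₂, hA₂, hinv₂⟩ := exists_abs_mildFormula_le_of_abs_le_weight hM hr hd₂ hMd₂ hc.symm hC₀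
  obtain ⟨η, δ, hη, hηρ, hδ, hsmall⟩ := exists_amplitude (C₀ := C₀)
    (S := A₁ + A₂ + 1) (ρ := min 1 (min (r₀ / 2) ε)) (by positivity) hC₀ (by positivity)
  obtain ⟨hη₁, hηr, hηε⟩ : η ≤ 1 ∧ η ≤ r₀ / 2 ∧ η ≤ ε := by simpa only [le_min_iff] using hηρ
  refine ⟨δ, hδ, fun u₀ v₀ hu₀ hv₀ hu₀δ hv₀δ => ?_⟩
  have hgain {A : ℝ} (hA : A ≤ A₁ + A₂ + 1) (z t : ℝ) :
      A * (δ + C₀ * η ^ 2) * weight M r z t ≤ η * weight M r z t := by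
    have _ := weight_nonneg M r z t
    gcongr
    exact le_trans (by gcongr) hsmall
  have hrange (c x t : ℝ) (ht : 0 ≤ t) : η * weight M r (x + c * t) t ∈ Icc 0 r₀ :=
    mul_weight_mem_Icc (by linarith) hr hη.le hηr _ ht
  have hdata {w : ℝ → ℝ} (hw : ∀ x, |w x| ≤ δ * algWeight r x 0) (x : ℝ) : |w x| ≤ δ :=
    (hw x).trans (mul_le_of_le_one_right hδ.le (algWeight_le_one (by linarith) x 0))
  obtain ⟨u, v, hu, hv, hu0, hv0, hubd, hvbd, humild, hvmild⟩ :=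
    exists_isMildSolution_of_invariant hd₁ hd₂ hf₁ hf₂ (hg₁.of_le one_le_two)
      (hg₂.of_le one_le_two) hu₀ hv₀ (hdata hu₀δ) (hdata hv₀δ) (hrange c₁) (hrange c₂)
      fun u v hu hv hubd hvbd x t ht => by
        have hnl' (y s : ℝ) := hnl (u y s) (v y s) (hu.abs_le y s) (hv.abs_le y s)
        exact ⟨(hinv₁ δ η u₀ u v _ _ hδ.le hη.le hη₁ hu₀δ hubd hvbd
            (fun y s _ => (hnl' y s).1) (fun y s _ => (hnl' y s).2.1) x t ht).trans
            (hgain (by linarith) _ _),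
          (hinv₂ δ η v₀ v u _ _ hδ.le hη.le hη₁ hv₀δ hvbd hubd
            (fun y s _ => by rw [mul_comm |v y s|]; exact (hnl' y s).2.2.1)
            (fun y s _ => by rw [mul_comm |v y s|]; exact (hnl' y s).2.2.2) x t ht).trans
            (hgain (by linarith) _ _)⟩
  have hsol := isClassicalSolution_of_isMildComponent
    ⟨hd₁, hf₁, hg₁, hu, hv, hu, humild⟩ ⟨hd₂, hf₂, hg₂, hu, hv, hv, hvmild⟩
  rw [funext hu0, funext hv0] at hsol
  have hweaken {c x t : ℝ} : η * weight M r (x + c * t) t ≤ ε * weight M r (x + c * t) t :=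
    mul_le_mul_of_nonneg_right hηε (weight_nonneg _ _ _ _)
  exact ⟨u, v, hsol, fun x t ht => (hubd x t ht).trans hweaken,
    fun x t ht => (hvbd x t ht).trans hweaken⟩

end GlobalExistence

end GRD

open GRD in
theorem global_existence_mix_terms_algebraic_general
    (d₁ d₂ c₁ c₂ : ℝ) (hd₁ : 0 < d₁) (hd₂ : 0 < d₂) (hc : c₁ ≠ c₂) (f₁ f₂ g₁ g₂ : ℝ × ℝ → ℝ)
    (hf₁ : ContDiff ℝ 1 f₁) (hf₂ : ContDiff ℝ 1 f₂) (hg₁ : ContDiff ℝ 2 g₁) (hg₂ : ContDiff ℝ 2 g₂)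
    (C₀ r₀ : ℝ) (hC₀ : 0 ≤ C₀) (hr₀ : 0 < r₀)
    (hnl : ∀ u v : ℝ, |u| ≤ r₀ → |v| ≤ r₀ →
      |f₁ (u, v)| ≤ C₀ * (|u| ^ 4 + |u| * |v|) ∧
      |g₁ (u, v)| ≤ C₀ * (|u| ^ 2 + |u| * |v|) ∧
      |f₂ (u, v)| ≤ C₀ * (|v| ^ 4 + |u| * |v|) ∧
      |g₂ (u, v)| ≤ C₀ * (|v| ^ 2 + |u| * |v|)) :
    ∃ M₀ : ℝ, 1 ≤ M₀ ∧
      ∀ M : ℝ, M₀ ≤ M → ∀ r : ℝ, 3 ≤ r → ∀ ε : ℝ, 0 < ε → ∃ δ : ℝ, 0 < δ ∧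
        ∀ u₀ v₀ : ℝ → ℝ, Continuous u₀ → Continuous v₀ →
          (∀ x : ℝ, |u₀ x| * (1 + |x|) ^ r < δ) →
          (∀ x : ℝ, |v₀ x| * (1 + |x|) ^ r < δ) →
          ∃ u v : ℝ → ℝ → ℝ,
            IsClassicalSolution d₁ d₂ c₁ c₂ f₁ f₂ g₁ g₂ ⊤ u₀ v₀ u v ∧
            ∀ t : ℝ, 0 ≤ t →
              (∀ x : ℝ, |u x t| ≤
                ε * ((1 + |x + c₁ * t| + Real.sqrt t) ^ (-r) +
                  Real.exp (-(x + c₁ * t) ^ 2 / (M * (1 + t))) / Real.sqrt (1 + t))) ∧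
              (∀ x : ℝ, |v x t| ≤
                ε * ((1 + |x + c₂ * t| + Real.sqrt t) ^ (-r) +
                  Real.exp (-(x + c₂ * t) ^ 2 / (M * (1 + t))) / Real.sqrt (1 + t))) ∧
              (∀ x : ℝ, |u x t| + |v x t| ≤ ε / Real.sqrt (1 + t)) ∧
              Integrable (fun x : ℝ => |u x t| + |v x t|) ∧
              (∫ x : ℝ, (|u x t| + |v x t|)) ≤ ε := by
  refine ⟨max 1 (max (64 * d₁) (64 * d₂)), le_max_left _ _, fun M hM r hr ε hε => ?_⟩
  obtain ⟨hM₁, hMd₁, hMd₂⟩ : 1 ≤ M ∧ 64 * d₁ ≤ M ∧ 64 * d₂ ≤ M := by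
    simpa only [max_le_iff] using hM
  have hJ := integral_algWeight_zero_nonneg r
  set C := (∫ z, algWeight r z 0) + √(Real.pi * M)
  obtain ⟨η, hη, hη₄, hηC⟩ : ∃ η, 0 < η ∧ η ≤ ε / 4 ∧ η ≤ ε / (2 * C + 1) :=
    ⟨_, lt_min (by positivity) (by positivity), min_le_left _ _, min_le_right _ _⟩
  rw [le_div_iff₀ (by positivity)] at hηC
  obtain ⟨δ, hδ, hsol⟩ := exists_isClassicalSolution_le_weight hM₁ hr hd₁ hd₂ hMd₁ hMd₂ hc
    hf₁ hf₂ hg₁ hg₂ hC₀ hr₀ hnl hη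
  refine ⟨δ, hδ, fun u₀ v₀ hu₀ hv₀ hu₀δ hv₀δ => ?_⟩
  obtain ⟨u, v, hcl, hu, hv⟩ := hsol u₀ v₀ hu₀ hv₀
    (fun x => abs_le_mul_algWeight_of_mul_rpow_lt (hu₀δ x))
    (fun x => abs_le_mul_algWeight_of_mul_rpow_lt (hv₀δ x))
  refine ⟨u, v, hcl, fun t ht => ?_⟩
  have hweaken (z : ℝ) : η * weight M r z t ≤ ε * weight M r z t :=
    mul_le_mul_of_nonneg_right (by linarith) (weight_nonneg M r z t)
  have hmass := integrable_and_integral_abs_add_abs_le (by linarith : 0 < M) (by linarith) ht hη.le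
    (continuous_slice_of_isClassicalSolution hcl ht ENNReal.ofReal_lt_top)
    (fun x => hu x t ht) (fun x => hv x t ht)
  exact ⟨fun x => (hu x t ht).trans (hweaken _), fun x => (hv x t ht).trans (hweaken _),
    fun x => abs_add_abs_le_div_sqrt (by linarith) hr ht hη.le hη₄ (hu x t ht) (hv x t ht),
    hmass.1, hmass.2.trans (by linarith)⟩

/-- Theorem 1.2 (algebraically localized initial data, with the pointwise bounds of
Remark 4.1). -/
theorem global_existence_mix_terms_algebraic
    (α d₁ d₂ c₁ c₂ : ℝ) (hα : α ∈ Set.Ioo (0 : ℝ) 1)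
    (hd₁ : 0 < d₁) (hd₂ : 0 < d₂) (hc : c₁ ≠ c₂)
    (f₁ f₂ g₁ g₂ : ℝ × ℝ → ℝ)
    (hf₁ : IsC2Holder α f₁) (hf₂ : IsC2Holder α f₂)
    (hg₁ : IsC2Holder α g₁) (hg₂ : IsC2Holder α g₂)
    (C₀ r₀ : ℝ) (hC₀ : 1 < C₀) (hr₀ : 0 < r₀)
    (hnl : ∀ u v : ℝ, |u| ≤ r₀ → |v| ≤ r₀ →
      |f₁ (u, v)| ≤ C₀ * (|u| ^ 4 + |u| * |v|) ∧
      |g₁ (u, v)| ≤ C₀ * (|u| ^ 2 + |u| * |v|) ∧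
      |f₂ (u, v)| ≤ C₀ * (|v| ^ 4 + |u| * |v|) ∧
      |g₂ (u, v)| ≤ C₀ * (|v| ^ 2 + |u| * |v|)) :
    ∃ M₀ : ℝ, 1 ≤ M₀ ∧
      ∀ M : ℝ, M₀ ≤ M → ∀ r : ℝ, 3 ≤ r → ∀ ε : ℝ, 0 < ε → ∃ δ : ℝ, 0 < δ ∧
        ∀ u₀ v₀ : ℝ → ℝ,
          (∃ B : ℝ, ∀ x : ℝ, |u₀ x| ≤ B) → (∃ B : ℝ, ∀ x : ℝ, |v₀ x| ≤ B) →
          HolderCont α u₀ → HolderCont α v₀ →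
          (∀ x : ℝ, |u₀ x| * (1 + |x|) ^ r < δ) →
          (∀ x : ℝ, |v₀ x| * (1 + |x|) ^ r < δ) →
          ∃ u v : ℝ → ℝ → ℝ,
            IsClassicalSolution d₁ d₂ c₁ c₂ f₁ f₂ g₁ g₂ ⊤ u₀ v₀ u v ∧
            ∀ t : ℝ, 0 ≤ t →
              (∀ x : ℝ, |u x t| ≤
                ε * ((1 + |x + c₁ * t| + Real.sqrt t) ^ (-r) +
                  Real.exp (-(x + c₁ * t) ^ 2 / (M * (1 + t))) / Real.sqrt (1 + t))) ∧
              (∀ x : ℝ, |v x t| ≤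
                ε * ((1 + |x + c₂ * t| + Real.sqrt t) ^ (-r) +
                  Real.exp (-(x + c₂ * t) ^ 2 / (M * (1 + t))) / Real.sqrt (1 + t))) ∧
              (∀ x : ℝ, |u x t| + |v x t| ≤ ε / Real.sqrt (1 + t)) ∧
              Integrable (fun x : ℝ => |u x t| + |v x t|) ∧
              (∫ x : ℝ, (|u x t| + |v x t|)) ≤ ε :=
  let ⟨M₀, hM₀, h⟩ := global_existence_mix_terms_algebraic_general d₁ d₂ c₁ c₂ hd₁ hd₂ hc f₁ f₂
    g₁ g₂ (hf₁.1.of_le one_le_two) (hf₂.1.of_le one_le_two) hg₁.1 hg₂.1 C₀ r₀ (by linarith) hr₀ hnl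
  ⟨M₀, hM₀, fun M hM r hr ε hε => (h M hM r hr ε hε).imp fun _ hδ => ⟨hδ.1,
    fun u₀ v₀ _ _ hu₀ hv₀ => hδ.2 u₀ v₀
      (GRD.continuous_of_holderCont hα.1 hu₀) (GRD.continuous_of_holderCont hα.1 hv₀)⟩⟩
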